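/- Let q = p^f be a power of a prime p, let n ≥ 3 and suppose GU_n(q) is not solvable. Let π be a set of primes with 2 ∈ π, 3 ∈ π and p ∉ π, and let H be a solvable Hall π-subgroup of GU_n(q). Set G = H·SU_n(q). Then there exist x, y, z ∈ G such that H ∩ H^x ∩ H^y ∩ H^z is contained in the center Z(GU_n(q)), i.e. consists of scalar matrices. -/

import Mathlib

open Matrix Pointwise

/-- `H^x = x⁻¹ H x`. -/
def conjBy {G : Type*} [Group G] (H : Subgroup G) (x : G) : Subgroup G :=
  Subgroup.map ((MulAut.conj x⁻¹).toMonoidHom) H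

/-- Hall π-subgroup of the whole group. -/
def IsHallSubgroup {G : Type*} [Group G] (π : Set ℕ) (H : Subgroup G) : Prop :=
  (∀ r : ℕ, r.Prime → r ∣ Nat.card H → r ∈ π) ∧ ∀ r ∈ π, ¬ r ∣ H.index

/-- Hall π-subgroup of the subgroup `K`. -/
def IsHallSubgroupIn {G : Type*} [Group G] (π : Set ℕ) (K H : Subgroup G) : Prop :=
  H ≤ K ∧ (∀ r : ℕ, r.Prime → r ∣ Nat.card H → r ∈ π) ∧ ∀ r ∈ π, ¬ r ∣ H.relIndex K

/-- The subgroup `SL_n` of `GL_n`. -/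
def SLsub (n : ℕ) (F : Type*) [Field F] : Subgroup (GL (Fin n) F) where
  carrier := {g | Matrix.det (g : Matrix (Fin n) (Fin n) F) = 1}
  one_mem' := by simp
  mul_mem' := by
    intro a b ha hb
    simp only [Set.mem_setOf_eq, Units.val_mul, Matrix.det_mul] at *
    rw [ha, hb, one_mul]
  inv_mem' := by
    intro g hg
    simp only [Set.mem_setOf_eq] at *
    have h1 : ((g⁻¹ : GL (Fin n) F) : Matrix (Fin n) (Fin n) F) *
        (g : Matrix (Fin n) (Fin n) F) = 1 := g.inv_mul
    have := congrArg Matrix.det h1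
    rw [Matrix.det_mul, Matrix.det_one, hg, mul_one] at this
    exact this

/-- The group of similitudes of the bilinear form `B` (acting on row vectors). -/
def similitudeGroup {n : ℕ} {F : Type*} [Field F]
    (B : (Fin n → F) → (Fin n → F) → F) : Subgroup (GL (Fin n) F) where
  carrier := {g | ∃ c : Fˣ, ∀ u v : Fin n → F,
    B (Matrix.vecMul u (g : Matrix (Fin n) (Fin n) F))
      (Matrix.vecMul v (g : Matrix (Fin n) (Fin n) F)) = (c : F) * B u v}
  one_mem' := ⟨1, by simp⟩
  mul_mem' := by
    rintro a b ⟨c, hc⟩ ⟨d, hd⟩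
    refine ⟨c * d, fun u v => ?_⟩
    simp only [Units.val_mul, ← Matrix.vecMul_vecMul, hd, hc]
    ring
  inv_mem' := by
    rintro g ⟨c, hc⟩
    refine ⟨c⁻¹, fun u v => ?_⟩
    have h1 : ∀ w : Fin n → F, Matrix.vecMul
        (Matrix.vecMul w ((g⁻¹ : GL (Fin n) F) : Matrix (Fin n) (Fin n) F))
        (g : Matrix (Fin n) (Fin n) F) = w := by
      intro w
      rw [Matrix.vecMul_vecMul, g.inv_mul, Matrix.vecMul_one]
    have h2 := hc (Matrix.vecMul u ((g⁻¹ : GL (Fin n) F) : Matrix (Fin n) (Fin n) F))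
      (Matrix.vecMul v ((g⁻¹ : GL (Fin n) F) : Matrix (Fin n) (Fin n) F))
    rw [h1, h1] at h2
    rw [h2, Units.val_inv_eq_inv_val, inv_mul_cancel_left₀ (by exact_mod_cast c.ne_zero)]

/-- The isometry group of the bilinear form `B` (acting on row vectors). -/
def isometryGroup {n : ℕ} {F : Type*} [Field F]
    (B : (Fin n → F) → (Fin n → F) → F) : Subgroup (GL (Fin n) F) where
  carrier := {g | ∀ u v : Fin n → F,
    B (Matrix.vecMul u (g : Matrix (Fin n) (Fin n) F))
      (Matrix.vecMul v (g : Matrix (Fin n) (Fin n) F)) = B u v}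
  one_mem' := by simp
  mul_mem' := by
    intro a b ha hb u v
    simp only [Set.mem_setOf_eq] at ha hb
    simp only [Units.val_mul, ← Matrix.vecMul_vecMul]
    rw [hb, ha]
  inv_mem' := by
    intro g hg u v
    have h1 : ∀ w : Fin n → F, Matrix.vecMul
        (Matrix.vecMul w ((g⁻¹ : GL (Fin n) F) : Matrix (Fin n) (Fin n) F))
        (g : Matrix (Fin n) (Fin n) F) = w := by
      intro w
      rw [Matrix.vecMul_vecMul, g.inv_mul, Matrix.vecMul_one]
    have h2 := hg (Matrix.vecMul u ((g⁻¹ : GL (Fin n) F) : Matrix (Fin n) (Fin n) F))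
      (Matrix.vecMul v ((g⁻¹ : GL (Fin n) F) : Matrix (Fin n) (Fin n) F))
    rw [h1, h1] at h2
    exact h2.symm

/-- The group of similitudes of the quadratic form `Q` (acting on row vectors). -/
def qSimilitudeGroup {n : ℕ} {F : Type*} [Field F]
    (Q : (Fin n → F) → F) : Subgroup (GL (Fin n) F) where
  carrier := {g | ∃ c : Fˣ, ∀ v : Fin n → F,
    Q (Matrix.vecMul v (g : Matrix (Fin n) (Fin n) F)) = (c : F) * Q v}
  one_mem' := ⟨1, by simp⟩
  mul_mem' := by
    rintro a b ⟨c, hc⟩ ⟨d, hd⟩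
    refine ⟨c * d, fun v => ?_⟩
    simp only [Units.val_mul, ← Matrix.vecMul_vecMul, hd, hc]
    ring
  inv_mem' := by
    rintro g ⟨c, hc⟩
    refine ⟨c⁻¹, fun v => ?_⟩
    have h1 : ∀ w : Fin n → F, Matrix.vecMul
        (Matrix.vecMul w ((g⁻¹ : GL (Fin n) F) : Matrix (Fin n) (Fin n) F))
        (g : Matrix (Fin n) (Fin n) F) = w := by
      intro w
      rw [Matrix.vecMul_vecMul, g.inv_mul, Matrix.vecMul_one]
    have h2 := hc (Matrix.vecMul v ((g⁻¹ : GL (Fin n) F) : Matrix (Fin n) (Fin n) F))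
    rw [h1] at h2
    rw [h2, Units.val_inv_eq_inv_val, inv_mul_cancel_left₀ (by exact_mod_cast c.ne_zero)]

/-- The unitary group `GU_n` with respect to the field automorphism `φ`. -/
def GUgrp (n : ℕ) {K : Type*} [Field K] (φ : K →+* K) : Subgroup (GL (Fin n) K) where
  carrier := {g | ((g : Matrix (Fin n) (Fin n) K).map φ)ᵀ * (g : Matrix (Fin n) (Fin n) K) = 1}
  one_mem' := by
    simp [Matrix.map_one φ φ.map_zero φ.map_one]
  mul_mem' := by
    intro a b ha hb
    simp only [Set.mem_setOf_eq, Units.val_mul, Matrix.map_mul, Matrix.transpose_mul] at *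
    calc ((b : Matrix (Fin n) (Fin n) K).map φ)ᵀ * ((a : Matrix (Fin n) (Fin n) K).map φ)ᵀ *
          ((a : Matrix (Fin n) (Fin n) K) * (b : Matrix (Fin n) (Fin n) K))
        = ((b : Matrix (Fin n) (Fin n) K).map φ)ᵀ *
          (((a : Matrix (Fin n) (Fin n) K).map φ)ᵀ * (a : Matrix (Fin n) (Fin n) K)) *
          (b : Matrix (Fin n) (Fin n) K) := by noncomm_ring
      _ = 1 := by rw [ha, mul_one, hb]
  inv_mem' := by
    intro g hg
    simp only [Set.mem_setOf_eq] at *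
    have hcomm : (g : Matrix (Fin n) (Fin n) K) * ((g : Matrix (Fin n) (Fin n) K).map φ)ᵀ = 1 :=
      _root_.mul_eq_one_comm.mp hg
    have h1 : ((g : Matrix (Fin n) (Fin n) K) * ((g⁻¹ : GL (Fin n) K) : Matrix (Fin n) (Fin n) K)).map φ = 1 := by
      rw [g.mul_inv]
      exact Matrix.map_one φ φ.map_zero φ.map_one
    rw [Matrix.map_mul] at h1
    have h2 := congrArg Matrix.transpose h1
    rw [Matrix.transpose_mul, Matrix.transpose_one] at h2
    calc (((g⁻¹ : GL (Fin n) K) : Matrix (Fin n) (Fin n) K).map φ)ᵀ *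
          ((g⁻¹ : GL (Fin n) K) : Matrix (Fin n) (Fin n) K)
        = (((g⁻¹ : GL (Fin n) K) : Matrix (Fin n) (Fin n) K).map φ)ᵀ *
          (((g : Matrix (Fin n) (Fin n) K).map φ)ᵀ * (g : Matrix (Fin n) (Fin n) K)) *
          ((g⁻¹ : GL (Fin n) K) : Matrix (Fin n) (Fin n) K) := by rw [hg, mul_one]
      _ = ((((g⁻¹ : GL (Fin n) K) : Matrix (Fin n) (Fin n) K).map φ)ᵀ *
          ((g : Matrix (Fin n) (Fin n) K).map φ)ᵀ) *
          ((g : Matrix (Fin n) (Fin n) K) * ((g⁻¹ : GL (Fin n) K) : Matrix (Fin n) (Fin n) K)) := by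
            noncomm_ring
      _ = 1 := by rw [h2, g.mul_inv, mul_one]


section PartA1
variable {K : Type*} [Field K] {ι : Type*} [Fintype ι] [DecidableEq ι]

lemma paUnip (b : Matrix ι ι K) (N : ℕ) (hN : (N : K) ≠ 0) (hb : b ^ N = 1)
    (hnil : IsNilpotent (b - 1)) : b = 1 := by
  have h1 : (b - 1) * ∑ i ∈ Finset.range N, b ^ i = 0 := by
    rw [mul_geom_sum, hb, sub_self]
  have h2 : (∑ i ∈ Finset.range N, b ^ i) =
      (N : Matrix ι ι K) + (b - 1) * ∑ i ∈ Finset.range N, ∑ j ∈ Finset.range i, b ^ j := by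
    rw [Finset.mul_sum]
    simp_rw [mul_geom_sum]
    simp
  have hc : Commute (b - 1) (∑ i ∈ Finset.range N, ∑ j ∈ Finset.range i, b ^ j) := by
    apply Commute.sum_right
    intro i _
    apply Commute.sum_right
    intro j _
    exact ((Commute.refl b).sub_left (Commute.one_left b)).pow_right j
  have h3 : IsNilpotent ((b - 1) * ∑ i ∈ Finset.range N, ∑ j ∈ Finset.range i, b ^ j) :=
    hc.isNilpotent_mul_right hnil
  have hu : IsUnit (N : Matrix ι ι K) := by
    have : (N : Matrix ι ι K) = algebraMap K (Matrix ι ι K) (N : K) := by simp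
    rw [this]
    exact (IsUnit.mk0 _ hN).map (algebraMap K (Matrix ι ι K))
  have h4 : IsUnit (∑ i ∈ Finset.range N, b ^ i) := by
    rw [h2]
    exact h3.isUnit_add_left_of_commute hu (Nat.cast_commute _ _).symm
  have := (h4.mul_left_eq_zero).mp h1
  exact sub_eq_zero.mp this

lemma paRankAdd (A B : Matrix ι ι K) : (A + B).rank ≤ A.rank + B.rank := by
  classical
  unfold Matrix.rank
  rw [Matrix.mulVecLin_add]
  refine le_trans (Submodule.finrank_mono (LinearMap.range_add_le _ _)) ?_
  exact Submodule.finrank_add_le_finrank_add_finrank _ _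

lemma paRankNeg (A : Matrix ι ι K) : (-A).rank = A.rank := by
  have h : ∀ A : Matrix ι ι K, (-A).rank ≤ A.rank := fun A => by
    have : -A = A * (-1) := by simp
    rw [this]; exact Matrix.rank_mul_le_left _ _
  exact le_antisymm (h A) (by simpa using h (-A))

lemma paRankSub (A B : Matrix ι ι K) : (A - B).rank ≤ A.rank + B.rank := by
  rw [sub_eq_add_neg]
  exact (paRankAdd _ _).trans (by rw [paRankNeg])

lemma paRankScalar (c : K) (hc : c ≠ 0) : (c • (1 : Matrix ι ι K)).rank = Fintype.card ι := by
  have h : IsUnit (c • (1 : Matrix ι ι K)) := by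
    rw [← Algebra.algebraMap_eq_smul_one]
    exact (IsUnit.mk0 _ hc).map _
  exact Matrix.rank_of_isUnit _ h

lemma paRankSingle (i j : ι) (c : K) : (Matrix.single i j c).rank ≤ 1 := by
  have : Matrix.single i j c = Matrix.vecMulVec (Pi.single i c) (Pi.single j 1) := by
    ext a b
    simp [Matrix.single_apply, Matrix.vecMulVec_apply, Pi.single_apply]
    grind
  rw [this]; exact Matrix.rank_vecMulVec_le _ _

end PartA1

section PartA2

structure PALoc {K : Type*} [Field K] [StarRing K] {ι : Type*} [Fintype ι] [DecidableEq ι]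
    {Γ : Type*} [Group Γ] (ρ : Γ →* Matrix ι ι K) : Prop where
  uni : ∀ g, (ρ g)ᴴ = ρ g⁻¹
  two : (2 : K) ≠ 0
  fin : ∀ g, ∃ N : ℕ, (N : K) ≠ 0 ∧ (ρ g) ^ N = 1
  refl : ∀ i, ∃ r, ρ r = 1 - (2 : K) • Matrix.single i i (1 : K)
  card : 3 ≤ Fintype.card ι
  prim : ∀ T : Set (Matrix ι ι K), (∀ t ∈ T, tᴴ = t ∧ t * t = t) →
    (∀ s ∈ T, ∀ t ∈ T, s * t = t * s) → (∀ g, ∀ t ∈ T, ρ g * t * ρ g⁻¹ ∈ T) →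
    ∀ t ∈ T, t = 0 ∨ t = 1

variable {K : Type*} [Field K] [StarRing K] {ι : Type*} [Fintype ι] [DecidableEq ι]
    {Γ : Type*} [Group Γ] {ρ : Γ →* Matrix ι ι K}

lemma paMulInv (ρ : Γ →* Matrix ι ι K) (g : Γ) : ρ g * ρ g⁻¹ = 1 := by
  rw [← map_mul, mul_inv_cancel, map_one]
lemma paInvMul (ρ : Γ →* Matrix ι ι K) (g : Γ) : ρ g⁻¹ * ρ g = 1 := by
  rw [← map_mul, inv_mul_cancel, map_one]

lemma paPrimDc (h : PALoc ρ) (N : Subgroup Γ) (hN : N.Normal)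
    (hab : ∀ a ∈ N, ∀ b ∈ N, ρ a * ρ b = ρ b * ρ a) (t : Matrix ι ι K) (ht : tᴴ = t)
    (htt : t * t = t)
    (hdc : ∀ X : Matrix ι ι K, (∀ a ∈ N, X * ρ a = ρ a * X) → t * X = X * t) : t = 0 ∨ t = 1 := by
  refine h.prim {t | tᴴ = t ∧ t * t = t ∧
    ∀ X : Matrix ι ι K, (∀ a ∈ N, X * ρ a = ρ a * X) → t * X = X * t} ?_ ?_ ?_ t ⟨ht, htt, hdc⟩
  · rintro t ⟨h1, h2, _⟩; exact ⟨h1, h2⟩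
  · rintro s ⟨_, _, hs⟩ t ⟨_, _, ht⟩
    exact hs t fun a ha => ht (ρ a) fun b hb => hab a ha b hb
  · rintro g t ⟨h1, h2, h3⟩
    refine ⟨?_, ?_, ?_⟩
    · rw [Matrix.conjTranspose_mul, Matrix.conjTranspose_mul, h1, h.uni, h.uni, inv_inv, mul_assoc]
    · calc ρ g * t * ρ g⁻¹ * (ρ g * t * ρ g⁻¹) = ρ g * t * (ρ g⁻¹ * ρ g) * t * ρ g⁻¹ := by
            simp only [mul_assoc]
        _ = ρ g * (t * t) * ρ g⁻¹ := by rw [paInvMul]; simp only [mul_assoc, mul_one, one_mul]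
        _ = _ := by rw [h2]
    · intro X hX
      have := h3 (ρ g⁻¹ * X * ρ g) ?_
      · calc ρ g * t * ρ g⁻¹ * X = ρ g * (t * (ρ g⁻¹ * X * ρ g)) * ρ g⁻¹ := by
              simp only [mul_assoc, paMulInv, mul_one]
          _ = (ρ g * ρ g⁻¹) * X * ρ g * t * ρ g⁻¹ := by rw [this]; simp only [mul_assoc]
          _ = _ := by rw [paMulInv]; simp only [mul_assoc, one_mul]
      · intro a ha
        have h4 := hX (g * a * g⁻¹) (hN.conj_mem a ha g)
        rw [map_mul, map_mul] at h4
        calc ρ g⁻¹ * X * ρ g * ρ a = ρ g⁻¹ * (X * (ρ g * ρ a * ρ g⁻¹)) * ρ g := by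
              simp only [mul_assoc, paInvMul, mul_one]
          _ = (ρ g⁻¹ * ρ g) * ρ a * ρ g⁻¹ * X * ρ g := by rw [h4]; simp only [mul_assoc]
          _ = _ := by rw [paInvMul]; simp only [mul_assoc, one_mul]

lemma paDiagOfComm (h2 : (2 : K) ≠ 0) (M : Matrix ι ι K)
    (hM : ∀ i, M * (1 - (2 : K) • Matrix.single i i (1 : K)) =
      (1 - (2 : K) • Matrix.single i i (1 : K)) * M) :
    M = Matrix.diagonal (fun i => M i i) := by
  ext i j
  by_cases hij : i = j
  · subst hij; simp
  · rw [Matrix.diagonal_apply_ne _ hij]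
    have := congrFun (congrFun (hM i) i) j
    rw [mul_sub, sub_mul, mul_smul_comm, smul_mul_assoc] at this
    simp [-Matrix.smul_single, Matrix.mul_single_apply_of_ne _ _ _ _ _ (Ne.symm hij)] at this
    have h3 : 2 * M i j = 0 := by linear_combination this
    exact (mul_eq_zero.mp h3).resolve_left h2

lemma paPQ (p q : Matrix ι ι K) (z : K) (hp : p * p = p) (hq : q * q = q)
    (hpqp : p * q * p = z • p) (hqpq : q * p * q = z • q) :
    ((p - q) * (p - q)) * ((p - q) * (p - q)) = (1 - z) • ((p - q) * (p - q)) := by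
  have e : (p - q) * (p - q) = p - p * q - q * p + q := by
    rw [mul_sub, sub_mul, sub_mul, hp, hq]; abel
  have h1 : ((p - q) * (p - q)) * p = (1 - z) • p := by
    rw [e, add_mul, sub_mul, sub_mul, hpqp, mul_assoc, hp, sub_smul, one_smul]; abel
  have h2 : ((p - q) * (p - q)) * q = (1 - z) • q := by
    rw [e, add_mul, sub_mul, sub_mul, hqpq, mul_assoc, hq, sub_smul, one_smul]; abel
  calc _ = (((p - q) * (p - q)) * p - ((p - q) * (p - q)) * q) * (p - q) := by
        rw [← mul_sub]; simp only [mul_assoc]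
    _ = _ := by rw [h1, h2, ← smul_sub, smul_mul_assoc]

lemma paSingleSq (i : ι) : Matrix.single i i (1 : K) * Matrix.single i i (1 : K) =
    Matrix.single i i (1 : K) := by simp
lemma paReflSq (i : ι) : (1 - (2 : K) • Matrix.single i i (1 : K)) *
    (1 - (2 : K) • Matrix.single i i (1 : K)) = 1 := by
  have := paSingleSq (K := K) i
  simp only [sub_mul, mul_sub, one_mul, mul_one, smul_mul_smul_comm, this]
  module
lemma paReflStar (i : ι) : (1 - (2 : K) • Matrix.single i i (1 : K))ᴴ =
    (1 - (2 : K) • Matrix.single i i (1 : K)) := by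
  have : star (2 : K) = 2 := by simp
  simp [Matrix.conjTranspose_sub, Matrix.conjTranspose_smul, this]

lemma paReflInv (h : PALoc ρ) {i : ι} {r : Γ} (hr : ρ r = 1 - (2 : K) • Matrix.single i i (1 : K)) :
    ρ r⁻¹ = 1 - (2 : K) • Matrix.single i i (1 : K) := by
  rw [← h.uni, hr, paReflStar]

lemma paRankCommRefl (i : ι) (A A' : Matrix ι ι K) (hA : A * A' = 1) :
    ((1 - (2 : K) • Matrix.single i i (1 : K)) * A * (1 - (2 : K) • Matrix.single i i (1 : K)) * A'
      - 1).rank ≤ 2 := by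
  set p := Matrix.single i i (1 : K)
  have : (1 - (2 : K) • p) * A * (1 - (2 : K) • p) * A' - 1 =
      p * (-(2 : K) • (1 - (2 : K) • (A * p * A'))) + A * p * (-(2 : K) • A') := by
    simp only [sub_mul, mul_sub, one_mul, mul_one, smul_mul_assoc, mul_smul_comm, mul_assoc, hA,
      neg_smul, mul_neg]
    module
  rw [this]
  refine (paRankAdd _ _).trans ?_
  have h1 := (Matrix.rank_mul_le_left p (-(2 : K) • (1 - (2 : K) • (A * p * A')))).trans
    (paRankSingle i i 1)
  have h2 := (Matrix.rank_mul_le_left (A * p) (-(2 : K) • A')).trans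
    ((Matrix.rank_mul_le_right A p).trans (paRankSingle i i 1))
  omega

lemma paAbScalar (h : PALoc ρ) (N : Subgroup Γ) (hN : N.Normal)
    (hab : ∀ a ∈ N, ∀ b ∈ N, ρ a * ρ b = ρ b * ρ a) (a : Γ) (ha : a ∈ N) :
    ∃ c : K, ρ a = c • (1 : Matrix ι ι K) := by
  by_cases hall : ∀ a ∈ N, ∀ i, ρ a * (1 - (2 : K) • Matrix.single i i (1 : K)) =
      (1 - (2 : K) • Matrix.single i i (1 : K)) * ρ a
  · have hd := paDiagOfComm h.two (ρ a) (hall a ha)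
    set d : ι → K := fun i => ρ a i i with hdd
    by_cases hc : ∃ i j, d i ≠ d j
    · obtain ⟨i, j, hij⟩ := hc
      classical
      have := paPrimDc h N hN hab (Matrix.diagonal fun l => if d l = d i then 1 else 0) ?_ ?_ ?_
      · rcases this with h0 | h0
        · have := congrFun (congrFun h0 i) i
          simp at this
        · have := congrFun (congrFun h0 j) j
          simp [Ne.symm hij] at this
      · rw [Matrix.diagonal_conjTranspose]
        congr 1; ext l; simp only [Pi.star_apply]; split_ifs <;> simp
      · rw [Matrix.diagonal_mul_diagonal]; congr 1; ext l; split_ifs <;> simp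
      · intro X hX
        have h1 := hX a ha
        rw [hd] at h1
        ext k l
        have h2 := congrFun (congrFun h1 k) l
        rw [Matrix.mul_diagonal, Matrix.diagonal_mul] at h2 ⊢
        rw [mul_comm, mul_eq_mul_right_iff] at h2
        rcases h2 with h2 | h2
        · rw [h2, mul_comm]
        · simp [h2]
    · push Not at hc
      have hne : Nonempty ι := Fintype.card_pos_iff.mp (by have := h.card; omega)
      obtain ⟨i⟩ := hne
      refine ⟨d i, ?_⟩
      rw [hd]
      ext k l
      by_cases hkl : k = l
      · subst hkl; simp [hc k i]
      · simp [hkl]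
  · exfalso
    push Not at hall
    obtain ⟨a, ha, i, hne⟩ := hall
    obtain ⟨r, hr⟩ := h.refl i
    have hr' := paReflInv h hr
    set p := Matrix.single i i (1 : K) with hp
    set A := ρ a
    set A' := ρ a⁻¹
    have hAA' : A * A' = 1 := paMulInv ρ a
    have hA'A : A' * A = 1 := paInvMul ρ a
    set q := A * p * A' with hq
    have hpp : p * p = p := paSingleSq i
    have hqq : q * q = q := by
      calc q * q = A * p * (A' * A) * p * A' := by simp only [hq, mul_assoc]
        _ = A * (p * p) * A' := by rw [hA'A]; simp only [mul_assoc, mul_one, one_mul]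
        _ = q := by rw [hpp]
    set z : K := A i i * A' i i with hz
    have hpX : ∀ X : Matrix ι ι K, p * X * p = X i i • p := by
      intro X; rw [hp, Matrix.single_mul_mul_single, Matrix.smul_single]; simp
    have hpqp : p * q * p = z • p := by
      calc p * q * p = (p * A * p) * A' * p := by simp only [hq, mul_assoc]
        _ = z • p := by rw [hpX, smul_mul_assoc, smul_mul_assoc, hpX, smul_smul]
    have hqpq : q * p * q = z • q := by
      calc q * p * q = A * (p * A' * p) * A * p * A' := by simp only [hq, mul_assoc]
        _ = A' i i • (A * (p * A * p) * A') := by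
            rw [hpX]; simp only [mul_smul_comm, smul_mul_assoc, mul_assoc]
        _ = _ := by
            rw [hpX]
            simp only [mul_smul_comm, smul_mul_assoc, smul_smul, hz, hq]; rw [mul_comm]
    have hA' : A' = Aᴴ := (h.uni a).symm
    have hzs : star z = z := by
      rw [hz, hA', Matrix.conjTranspose_apply, star_mul', star_star, mul_comm]
    have hps : pᴴ = p := by simp [hp]
    have hqs : qᴴ = q := by
      rw [hq, Matrix.conjTranspose_mul, Matrix.conjTranspose_mul, hps, hA',
        Matrix.conjTranspose_conjTranspose, mul_assoc]
    set Q := (p - q) * (p - q) with hQ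
    have hQQ : Q * Q = (1 - z) • Q := paPQ p q z hpp hqq hpqp hqpq
    have hQs : Qᴴ = Q := by
      rw [hQ, Matrix.conjTranspose_mul, Matrix.conjTranspose_sub, hps, hqs]
    set b : Γ := r * (a * r⁻¹ * a⁻¹) with hb
    have hb' : b = r * a * r⁻¹ * a⁻¹ := by rw [hb]; group
    have hbN : b ∈ N := by
      rw [hb']; exact N.mul_mem (hN.conj_mem a ha r) (N.inv_mem ha)
    have hρb : ρ b = (1 - (2 : K) • p) * (1 - (2 : K) • q) := by
      rw [hb, map_mul, map_mul, map_mul, hr, hr']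
      congr 1
      rw [mul_sub, sub_mul, mul_one, hAA', mul_smul_comm, smul_mul_assoc]
    have hρb' : ρ b⁻¹ = (1 - (2 : K) • q) * (1 - (2 : K) • p) := by
      rw [← h.uni, hρb, Matrix.conjTranspose_mul, paReflStar, Matrix.conjTranspose_sub,
        Matrix.conjTranspose_smul, hqs]
      rw [star_ofNat, Matrix.conjTranspose_one]
    have hsum : ρ b + ρ b⁻¹ = (2 : K) • (1 : Matrix ι ι K) - (4 : K) • Q := by
      rw [hρb, hρb', hQ]
      simp only [sub_mul, mul_sub, one_mul, mul_one, smul_mul_assoc, mul_smul_comm, hpp, hqq]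
      module
    have hb1 : ρ b ≠ 1 := by
      intro hc
      apply hne
      have h3 : ρ (b * a * r) = ρ (r * a) := by rw [hb']; congr 1; group
      rw [map_mul, map_mul, hc, one_mul, map_mul, hr] at h3
      exact h3
    have hsq : (ρ b - 1) * (ρ b - 1) = -(4 : K) • (ρ b * Q) := by
      have : (4 : K) • Q = (2 : K) • (1 : Matrix ι ι K) - (ρ b + ρ b⁻¹) := by rw [hsum]; abel
      rw [neg_smul, ← mul_smul_comm, this]
      simp only [sub_mul, mul_sub, mul_add, paMulInv, mul_smul_comm, mul_one, one_mul]
      module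
    have hbnil : (ρ b - 1) * (ρ b - 1) * ((ρ b - 1) * (ρ b - 1)) ≠ 0 := by
      intro hc
      obtain ⟨M, hM, hM1⟩ := h.fin b
      exact hb1 (paUnip _ M hM hM1 ⟨4, by rw [← hc]; simp only [pow_succ, pow_zero, one_mul, mul_assoc]⟩)
    have h4 : (4 : K) ≠ 0 := by
      have : (4 : K) = 2 * 2 := by norm_num
      rw [this]; exact mul_ne_zero h.two h.two
    have hQdc : ∀ X : Matrix ι ι K, (∀ a ∈ N, X * ρ a = ρ a * X) → Q * X = X * Q := by
      intro X hX
      have h5 : (4 : K) • Q = (2 : K) • (1 : Matrix ι ι K) - (ρ b + ρ b⁻¹) := by rw [hsum]; abel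
      have h6 : ((4 : K) • Q) * X = X * ((4 : K) • Q) := by
        rw [h5, sub_mul, mul_sub, add_mul, mul_add, hX b hbN, hX _ (N.inv_mem hbN)]
        simp
      rw [smul_mul_assoc, mul_smul_comm] at h6
      exact smul_right_injective _ h4 h6
    have hcommbQ : Q * ρ b = ρ b * Q := hQdc _ fun a ha => hab b hbN a ha
    by_cases hz1 : 1 - z = 0
    · apply hbnil
      rw [hsq, smul_mul_smul_comm]
      have : ρ b * Q * (ρ b * Q) = 0 := by
        calc _ = ρ b * (Q * ρ b) * Q := by simp only [mul_assoc]
          _ = ρ b * ρ b * (Q * Q) := by rw [hcommbQ]; simp only [mul_assoc]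
          _ = 0 := by rw [hQQ, hz1]; simp
      rw [this, smul_zero]
    · have := paPrimDc h N hN hab ((1 - z)⁻¹ • Q) ?_ ?_ ?_
      · rcases this with h0 | h0
        · have hQ0 : Q = 0 := (smul_eq_zero.mp h0).resolve_left (inv_ne_zero hz1)
          apply hbnil; rw [hsq, hQ0]; simp
        · have h7 : Q = (1 - z) • (1 : Matrix ι ι K) := by
            rw [← h0, smul_smul, mul_inv_cancel₀ hz1, one_smul]
          have h8 := paRankScalar (ι := ι) (1 - z) hz1
          rw [← h7] at h8
          have h9 : Q.rank ≤ 2 := by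
            refine (Matrix.rank_mul_le_left _ _).trans ((paRankSub _ _).trans ?_)
            have h10 := paRankSingle (K := K) i i 1
            have h11 : q.rank ≤ 1 := (Matrix.rank_mul_le_left _ _).trans
              ((Matrix.rank_mul_le_right _ _).trans h10)
            change p.rank + _ ≤ 2
            change p.rank ≤ 1 at h10
            omega
          have := h.card
          omega
      · rw [Matrix.conjTranspose_smul, hQs, star_inv₀, star_sub, hzs, star_one]
      · rw [smul_mul_smul_comm, hQQ, smul_smul, mul_assoc, inv_mul_cancel₀ hz1, mul_one]
      · intro X hX
        rw [smul_mul_assoc, mul_smul_comm, hQdc X hX]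

end PartA2

section PartA3
variable {K : Type*} [Field K] [StarRing K] {ι : Type*} [Fintype ι] [DecidableEq ι]
    {Γ : Type*} [Group Γ] {ρ : Γ →* Matrix ι ι K}

structure PAA (ρ : Γ →* Matrix ι ι K) (A : Subgroup Γ) : Prop where
  normal : A.Normal
  comm : ∀ a ∈ A, ∀ d ∈ A, ∃ ν : K, ρ a * ρ d = ν • (ρ d * ρ a)
  tr : ∀ a ∈ A, (∃ c : K, ρ a = c • (1 : Matrix ι ι K)) ∨ ((ρ a).trace = 0 ∧
    ∃ d ∈ A, ∃ ν : K, ν ≠ 1 ∧ ρ a * ρ d = ν • (ρ d * ρ a))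
  nonab : ∃ a ∈ A, ∃ d ∈ A, ρ a * ρ d ≠ ρ d * ρ a

lemma paExistsA (h : PALoc ρ) [hs : Group.IsSolvable Γ] : ∃ A : Subgroup Γ, PAA ρ A := by
  have h1 : ∃ n, ∀ a ∈ derivedSeries Γ n, ∃ c : K, ρ a = c • (1 : Matrix ι ι K) := by
    obtain ⟨n, hn⟩ := hs.solvable
    refine ⟨n, fun a ha => ⟨1, ?_⟩⟩
    rw [hn, Subgroup.mem_bot] at ha
    simp [ha]
  classical
  have hspec := Nat.find_spec h1
  have hmin := fun m => Nat.find_min h1 (m := m)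
  set n := Nat.find h1
  have hn0 : n ≠ 0 := by
    intro hn0
    rw [hn0, derivedSeries_zero] at hspec
    have hc := h.card
    obtain ⟨i, j, hij⟩ := Fintype.exists_pair_of_one_lt_card (α := ι) (by omega)
    obtain ⟨r, hr⟩ := h.refl i
    obtain ⟨c, hc⟩ := hspec r trivial
    rw [hr] at hc
    have e1 := congrFun (congrFun hc i) i
    have e2 := congrFun (congrFun hc j) j
    simp [hij] at e1 e2
    rw [← e2] at e1
    exact h.two (by linear_combination -e1)
  obtain ⟨m, hm⟩ := Nat.exists_eq_succ_of_ne_zero hn0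
  have hm1 := hmin m (by omega)
  push Not at hm1
  obtain ⟨a0, ha0, hna0⟩ := hm1
  set A := derivedSeries Γ m with hA
  have hAn : A.Normal := derivedSeries_normal Γ m
  have hcomm : ∀ a ∈ A, ∀ d ∈ A, ∃ ν : K, ρ a * ρ d = ν • (ρ d * ρ a) := by
    intro a ha d hd
    have : a * d * a⁻¹ * d⁻¹ ∈ derivedSeries Γ n := by
      rw [hm, derivedSeries_succ]
      exact Subgroup.commutator_mem_commutator ha hd
    obtain ⟨c, hc⟩ := hspec _ this
    refine ⟨c, ?_⟩
    have h2 : a * d = (a * d * a⁻¹ * d⁻¹) * (d * a) := by group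
    rw [← map_mul, h2, map_mul ρ (a * d * a⁻¹ * d⁻¹), hc, smul_mul_assoc, one_mul, map_mul]
  have htr : ∀ a ∈ A, (∃ c : K, ρ a = c • (1 : Matrix ι ι K)) ∨ ((ρ a).trace = 0 ∧
    ∃ d ∈ A, ∃ ν : K, ν ≠ 1 ∧ ρ a * ρ d = ν • (ρ d * ρ a)) := by
    intro a ha
    by_cases hz : ∀ d ∈ A, ρ a * ρ d = ρ d * ρ a
    · left
      let Z : Subgroup Γ :=
        { carrier := {z | z ∈ A ∧ ∀ d ∈ A, ρ z * ρ d = ρ d * ρ z}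
          one_mem' := ⟨A.one_mem, by simp⟩
          mul_mem' := by
            rintro x y ⟨hx, hx'⟩ ⟨hy, hy'⟩
            refine ⟨A.mul_mem hx hy, fun d hd => ?_⟩
            rw [map_mul, mul_assoc, hy' d hd, ← mul_assoc, hx' d hd, mul_assoc]
          inv_mem' := by
            rintro x ⟨hx, hx'⟩
            refine ⟨A.inv_mem hx, fun d hd => ?_⟩
            have := hx' d hd
            calc ρ x⁻¹ * ρ d = ρ x⁻¹ * (ρ d * ρ x) * ρ x⁻¹ := by
                  simp only [mul_assoc, paMulInv, mul_one]
              _ = (ρ x⁻¹ * ρ x) * ρ d * ρ x⁻¹ := by rw [← this]; simp only [mul_assoc]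
              _ = _ := by rw [paInvMul, one_mul] }
      refine paAbScalar h Z ⟨?_⟩ (fun a ha b hb => ha.2 b hb.1) a ⟨ha, hz⟩
      rintro x ⟨hx, hx'⟩ g
      refine ⟨hAn.conj_mem x hx g, fun d hd => ?_⟩
      have h3 := hx' (g⁻¹ * d * g) (by simpa using hAn.conj_mem d hd g⁻¹)
      simp only [← map_mul] at h3 ⊢
      have h4 : ρ (g * (x * (g⁻¹ * d * g)) * g⁻¹) = ρ (g * ((g⁻¹ * d * g) * x) * g⁻¹) := by
        simp only [map_mul] at h3 ⊢
        rw [h3]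
      convert h4 using 2 <;> group
    · right
      push Not at hz
      obtain ⟨d, hd, hne⟩ := hz
      obtain ⟨ν, hν⟩ := hcomm a ha d hd
      have hν1 : ν ≠ 1 := by rintro rfl; exact hne (by rw [hν, one_smul])
      refine ⟨?_, d, hd, ν, hν1, hν⟩
      have h5 : (ρ a).trace = ν * (ρ a).trace := by
        calc (ρ a).trace = (ρ d⁻¹ * (ρ a * ρ d)).trace := by
              rw [Matrix.trace_mul_comm, mul_assoc, paMulInv, mul_one]
          _ = _ := by
              rw [hν, mul_smul_comm, ← mul_assoc, paInvMul, one_mul, Matrix.trace_smul, smul_eq_mul]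
      have h6 : (1 - ν) * (ρ a).trace = 0 := by linear_combination h5
      exact (mul_eq_zero.mp h6).resolve_left (sub_ne_zero.mpr (Ne.symm hν1))
  refine ⟨A, hAn, hcomm, htr, ?_⟩
  rcases htr a0 ha0 with ⟨c, hc⟩ | ⟨_, d, hd, ν, hν, e⟩
  · exact absurd hc (hna0 c)
  · refine ⟨a0, ha0, d, hd, fun hc => ?_⟩
    rw [hc] at e
    have h7 : (1 - ν) • (ρ d * ρ a0) = 0 := by
      rw [sub_smul, one_smul, sub_eq_zero]; exact e
    rcases smul_eq_zero.mp h7 with h8 | h8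
    · exact hν (by linear_combination -h8)
    · have h9 : ρ (d * a0) * ρ (d * a0)⁻¹ = 1 := paMulInv ρ _
      rw [map_mul, h8, zero_mul] at h9
      have hc := h.card
      have : Nonempty ι := Fintype.card_pos_iff.mp (by omega)
      exact zero_ne_one h9

lemma paScalarOne (M : Matrix ι ι K) (hM : ∃ c : K, M = c • (1 : Matrix ι ι K))
    (hr : (M - 1).rank < Fintype.card ι) : M = 1 := by
  obtain ⟨c, rfl⟩ := hM
  by_cases hc : c = 1
  · simp [hc]
  · have h1 : c • (1 : Matrix ι ι K) - 1 = (c - 1) • (1 : Matrix ι ι K) := by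
      rw [sub_smul, one_smul]
    rw [h1, paRankScalar _ (sub_ne_zero.mpr hc)] at hr
    exact absurd hr (lt_irrefl _)

lemma paRankComm (p A A' : Matrix ι ι K) (hA : A * A' = 1) (h h' : Matrix ι ι K) (m : ℕ)
    (hp : p.rank ≤ m) (u u' : Matrix ι ι K) (hh : h = 1 + p * u) (hh' : h' = 1 + p * u') :
    (h * A * h' * A' - 1).rank ≤ m + m := by
  have : h * A * h' * A' - 1 = p * (u * A * h' * A') + A * p * (u' * A') := by
    rw [hh]
    have e : A * h' * A' = 1 + A * p * u' * A' := by
      rw [hh', mul_add, add_mul, mul_one, hA]; simp only [mul_assoc]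
    calc (1 + p * u) * A * h' * A' - 1 = A * h' * A' + p * (u * A * h' * A') - 1 := by
          simp only [add_mul, one_mul, mul_assoc]
      _ = _ := by rw [e]; simp only [mul_assoc]; abel
  rw [this]
  refine (paRankAdd _ _).trans ?_
  have h1 := (Matrix.rank_mul_le_left p (u * A * h' * A')).trans hp
  have h2 := (Matrix.rank_mul_le_left (A * p) (u' * A')).trans
    ((Matrix.rank_mul_le_right A p).trans hp)
  omega

/-- if everything in `A` commutes with all reflections then contradiction -/
lemma paDiagFalse (h : PALoc ρ) {A : Subgroup Γ} (hA : PAA ρ A)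
    (hall : ∀ a ∈ A, ∀ i, ρ a * (1 - (2 : K) • Matrix.single i i (1 : K)) =
      (1 - (2 : K) • Matrix.single i i (1 : K)) * ρ a) : False := by
  obtain ⟨a, ha, d, hd, hne⟩ := hA.nonab
  apply hne
  rw [paDiagOfComm h.two _ (hall a ha), paDiagOfComm h.two _ (hall d hd),
    Matrix.diagonal_mul_diagonal, Matrix.diagonal_mul_diagonal]
  congr 1; ext i; rw [mul_comm]

lemma paCommIff (h a : Γ) : ρ (h * a * h⁻¹ * a⁻¹) = 1 ↔ ρ a * ρ h = ρ h * ρ a := by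
  constructor
  · intro e
    have : ρ (h * a) = ρ ((h * a * h⁻¹ * a⁻¹) * (a * h)) := by congr 1; group
    rw [map_mul, map_mul ρ (h * a * h⁻¹ * a⁻¹), e, one_mul, map_mul] at this
    exact this.symm
  · intro e
    rw [map_mul, map_mul, map_mul, ← e, mul_assoc (ρ a), paMulInv, mul_one, paMulInv]

lemma paCardLe (h : PALoc ρ) {A : Subgroup Γ} (hA : PAA ρ A) : Fintype.card ι ≤ 4 := by
  by_contra hk
  apply paDiagFalse h hA
  intro a ha i
  obtain ⟨r, hr⟩ := h.refl i
  have hr' := paReflInv h hr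
  set b := r * a * r⁻¹ * a⁻¹ with hb
  have hbA : b ∈ A := A.mul_mem (hA.normal.conj_mem a ha r) (A.inv_mem ha)
  have hrk : (ρ b - 1).rank ≤ 2 := by
    rw [hb, map_mul, map_mul, map_mul, hr, hr']
    exact paRankCommRefl i _ _ (paMulInv ρ a)
  have hb1 : ρ b = 1 := by
    rcases hA.tr b hbA with hc | ⟨_, d, hd, ν, hν, e⟩
    · exact paScalarOne _ hc (by omega)
    · exfalso
      have e2 : ((ρ b - 1) * ρ d - ρ d * (ρ b - 1)) * ρ (d * b)⁻¹ = (ν - 1) • 1 := by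
        have : (ρ b - 1) * ρ d - ρ d * (ρ b - 1) = (ν - 1) • ρ (d * b) := by
          rw [sub_mul, mul_sub, e, one_mul, mul_one, map_mul ρ d, sub_smul, one_smul]; abel
        rw [this, smul_mul_assoc, paMulInv]
      have e3 := paRankScalar (ι := ι) (ν - 1) (sub_ne_zero.mpr hν)
      rw [← e2] at e3
      have e4 := Matrix.rank_mul_le_left ((ρ b - 1) * ρ d - ρ d * (ρ b - 1)) (ρ (d * b)⁻¹)
      have e5 := paRankSub ((ρ b - 1) * ρ d) (ρ d * (ρ b - 1))
      have e6 := Matrix.rank_mul_le_left (ρ b - 1) (ρ d)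
      have e7 := Matrix.rank_mul_le_right (ρ d) (ρ b - 1)
      omega
  rw [← hr]
  exact (paCommIff r a).mp hb1

end PartA3

section PartA4
variable {K : Type*} [Field K] [StarRing K] {ι : Type*} [Fintype ι] [DecidableEq ι]
    {Γ : Type*} [Group Γ] {ρ : Γ →* Matrix ι ι K}

lemma paUnitDet (ρ : Γ →* Matrix ι ι K) (g : Γ) : (ρ g).det ≠ 0 := by
  intro h
  have := congrArg Matrix.det (paMulInv ρ g)
  rw [Matrix.det_mul, h, zero_mul, Matrix.det_one] at this
  exact zero_ne_one this

lemma paCube (h3 : Fintype.card ι = 3) (M N : Matrix ι ι K) (ν : K) (hMN : M = ν • N)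
    (hd : M.det = N.det) (h0 : N.det ≠ 0) : ν ^ 3 = 1 := by
  rw [hMN, Matrix.det_smul, h3] at hd
  exact mul_right_cancel₀ h0 (by rw [hd, one_mul])

lemma paNeZero [Nonempty ι] (ρ : Γ →* Matrix ι ι K) (g : Γ) : ρ g ≠ 0 := by
  intro h
  have := paMulInv ρ g
  rw [h, zero_mul] at this
  exact zero_ne_one this

lemma paSmulOne [Nonempty ι] (ρ : Γ →* Matrix ι ι K) (g : Γ) (ν : K) (h : ρ g = ν • ρ g) :
    ν = 1 := by
  have h7 : (1 - ν) • ρ g = 0 := by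
    rw [sub_smul, one_smul, sub_eq_zero]; exact h
  rcases smul_eq_zero.mp h7 with h8 | h8
  · linear_combination -h8
  · exact absurd h8 (paNeZero ρ g)

lemma paRowOfComm (h2 : (2 : K) ≠ 0) (i : ι) (M : Matrix ι ι K)
    (hM : M * (1 - (2 : K) • Matrix.single i i (1 : K)) =
      (1 - (2 : K) • Matrix.single i i (1 : K)) * M) (j : ι) (hij : i ≠ j) :
    M i j = 0 ∧ M j i = 0 := by
  constructor
  · have := congrFun (congrFun hM i) j
    rw [mul_sub, sub_mul, mul_smul_comm, smul_mul_assoc] at this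
    simp [-Matrix.smul_single, Matrix.mul_single_apply_of_ne _ _ _ _ _ (Ne.symm hij)] at this
    have h3 : 2 * M i j = 0 := by linear_combination this
    exact (mul_eq_zero.mp h3).resolve_left h2
  · have := congrFun (congrFun hM j) i
    rw [mul_sub, sub_mul, mul_smul_comm, smul_mul_assoc] at this
    simp [-Matrix.smul_single, Matrix.single_mul_apply_of_ne _ _ _ _ _ (Ne.symm hij)] at this
    exact this.resolve_left h2

lemma paDiagEntry (i : ι) (M N : Matrix ι ι K) (hM : ∀ j, i ≠ j → M i j = 0) :
    (M * N) i i = M i i * N i i := by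
  rw [Matrix.mul_apply, Finset.sum_eq_single i]
  · intro j _ hj; rw [hM j (Ne.symm hj), zero_mul]
  · simp

lemma paThree (h : PALoc ρ) {A : Subgroup Γ} (hA : PAA ρ A) (h3 : Fintype.card ι = 3) : False := by
  have hne : Nonempty ι := Fintype.card_pos_iff.mp (by omega)
  -- basic: ν from commuting relation has ν^3 = 1
  have hcub : ∀ a d : Γ, ∀ ν : K, ρ a * ρ d = ν • (ρ d * ρ a) → ν ^ 3 = 1 := by
    intro a d ν e
    refine paCube h3 _ _ ν e ?_ ?_
    · rw [Matrix.det_mul, Matrix.det_mul, mul_comm]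
    · rw [← map_mul]; exact paUnitDet ρ _
  have h23 : ∀ ν : K, ν ^ 3 = 1 → ν ^ 2 = 1 → ν = 1 := by
    intro ν e3 e2; linear_combination e3 - ν * e2
  have hconj : ∀ i, ∀ a ∈ A, ∃ κ : K,
      (1 - (2 : K) • Matrix.single i i (1 : K)) * ρ a * (1 - (2 : K) • Matrix.single i i (1 : K)) =
        κ • ρ a⁻¹ ∧ κ ≠ 0 := by
    intro i a ha
    obtain ⟨r, hr⟩ := h.refl i
    have hr' := paReflInv h hr
    have hrr : ρ (r * r) = 1 := by rw [map_mul, hr]; exact paReflSq i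
    -- step 1
    have step1 : ∀ a ∈ A, (a * (r * a * r⁻¹)) ∈ A ∧
        ρ (a * (r * a * r⁻¹)) * ρ r = ρ r * ρ (a * (r * a * r⁻¹)) := by
      intro a ha
      have hx := hA.normal.conj_mem a ha r
      refine ⟨A.mul_mem ha hx, ?_⟩
      obtain ⟨ν, hν⟩ := hA.comm _ hx a ha
      have hν3 := hcub _ _ _ hν
      have hν2 : ν ^ 2 = 1 := by
        have e1 : ρ a * ρ (r * a * r⁻¹) = ρ r * (ρ (r * a * r⁻¹) * ρ a) * ρ r⁻¹ := by
          have : ρ (r * ((r * a * r⁻¹) * a) * r⁻¹) = ρ ((r * r) * a * (r * r)⁻¹ * (r * a * r⁻¹)) := by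
            congr 1; group
          rw [map_mul, map_mul, map_mul] at this
          rw [this, map_mul ρ (r * r * a * (r * r)⁻¹), map_mul ρ (r * r * a), map_mul ρ (r * r), hrr, one_mul]
          have h8 : ρ (r * r)⁻¹ = 1 := by
            have := paMulInv ρ (r * r)
            rwa [hrr, one_mul] at this
          rw [h8, mul_one]
        have e2 : ρ r * (ρ a * ρ (r * a * r⁻¹)) * ρ r⁻¹ = ρ (r * a * r⁻¹) * ρ a := by
          calc _ = (ρ r * ρ a * ρ r⁻¹) * (ρ (r * r) * ρ a * ρ r⁻¹ * ρ r⁻¹) := by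
                simp only [← map_mul]; congr 1; group
            _ = ρ (r * a * r⁻¹) * (ρ a * (ρ r⁻¹ * ρ r⁻¹)) := by
                rw [hrr, one_mul, map_mul, map_mul]; simp only [mul_assoc]
            _ = _ := by rw [hr', paReflSq, mul_one]
        rw [hν, mul_smul_comm, smul_mul_assoc, e2, hν, smul_smul, ← map_mul] at e1
        have := paSmulOne ρ _ _ e1
        rw [pow_two]; exact this
      have hν1 := h23 ν hν3 hν2
      rw [hν1, one_smul] at hν
      calc ρ (a * (r * a * r⁻¹)) * ρ r = ρ (a * (r * a)) := by
            rw [← map_mul]; congr 1; group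
        _ = ρ a * ρ (r * a * r⁻¹) * ρ r := by rw [← map_mul, ← map_mul]; congr 1; group
        _ = ρ (r * a * r⁻¹) * ρ a * ρ r := by rw [hν]
        _ = ρ r * (ρ a * (ρ r * ρ a * ρ r⁻¹)) := by
            have : ρ r⁻¹ = ρ r := by rw [hr, hr']
            rw [map_mul, map_mul, this]; simp only [mul_assoc]
        _ = _ := by rw [map_mul ρ a, map_mul, map_mul]
    obtain ⟨hcA, hcr⟩ := step1 a ha
    set c := a * (r * a * r⁻¹) with hc
    clear_value c
    have hcomm : ∀ d ∈ A, ρ c * ρ d = ρ d * ρ c := by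
      intro d hd
      obtain ⟨hdA, hdr⟩ := step1 d hd
      obtain ⟨μ, hμ⟩ := hA.comm c hcA _ hdA
      rw [hr] at hcr hdr
      have hc0 := fun j hj => (paRowOfComm h.two i _ hcr j hj).1
      have hd0 := fun j hj => (paRowOfComm h.two i _ hdr j hj).1
      have hnz : ∀ g : Γ, (∀ j, i ≠ j → ρ g i j = 0) → ρ g i i ≠ 0 := by
        intro g hg hz
        have := congrFun (congrFun (paMulInv ρ g) i) i
        rw [paDiagEntry i _ _ hg, hz, zero_mul, Matrix.one_apply_eq] at this
        exact zero_ne_one this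
      have hμ1 : μ = 1 := by
        have := congrFun (congrFun hμ i) i
        rw [Matrix.smul_apply, paDiagEntry i _ _ hc0, paDiagEntry i _ _ hd0, smul_eq_mul] at this
        have h9 := mul_ne_zero (hnz _ hc0) (hnz _ hd0)
        have : (μ - 1) * (ρ c i i * ρ (d * (r * d * r⁻¹)) i i) = 0 := by linear_combination -this
        have := (mul_eq_zero.mp this).resolve_right h9
        linear_combination this
      rw [hμ1, one_smul] at hμ
      obtain ⟨ν, hν⟩ := hA.comm c hcA d hd
      have hν3 := hcub _ _ _ hν
      rw [← hr] at hcr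
      have hcr' : ρ c * ρ r⁻¹ = ρ r⁻¹ * ρ c := by
        have : ρ r⁻¹ = ρ r := by rw [hr, hr']
        rw [this, hcr]
      have hν' : ρ c * ρ (r * d * r⁻¹) = ν • (ρ (r * d * r⁻¹) * ρ c) := by
        rw [map_mul, map_mul]
        calc ρ c * (ρ r * ρ d * ρ r⁻¹) = (ρ c * ρ r) * ρ d * ρ r⁻¹ := by simp only [mul_assoc]
          _ = ρ r * (ρ c * ρ d) * ρ r⁻¹ := by rw [hcr]; simp only [mul_assoc]
          _ = ν • (ρ r * ρ d * (ρ c * ρ r⁻¹)) := by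
              rw [hν, mul_smul_comm, smul_mul_assoc]; simp only [mul_assoc]
          _ = _ := by rw [hcr']; simp only [mul_assoc]
      have hν2 : ν ^ 2 = 1 := by
        rw [map_mul ρ d, ← mul_assoc, hν, smul_mul_assoc, mul_assoc, hν', mul_smul_comm, smul_smul,
          ← mul_assoc] at hμ
        simp only [← map_mul] at hμ
        have := paSmulOne ρ _ _ hμ.symm
        rw [pow_two]; exact this
      rw [hν, h23 ν hν3 hν2, one_smul]
    rcases hA.tr c hcA with ⟨κ, hκ⟩ | ⟨_, d, hd, ν, hν, e⟩
    · refine ⟨κ, ?_, ?_⟩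
      · have : ρ (r * a * r⁻¹) = ρ a⁻¹ * ρ c := by
          rw [← map_mul, hc]; congr 1; group
        rw [hκ, mul_smul_comm, mul_one, map_mul, map_mul, hr', hr] at this
        exact this
      · rintro rfl
        rw [zero_smul] at hκ
        exact paNeZero ρ c hκ
    · exfalso
      rw [hcomm d hd, ← map_mul] at e
      exact hν (paSmulOne ρ _ _ e)
  -- conclude: every a in A is diagonal
  have hdiag : ∀ a ∈ A, ∀ x y, x ≠ y → ρ a x y = 0 := by
    intro a ha x y hxy
    obtain ⟨z, hzx, hzy⟩ : ∃ z, z ≠ x ∧ z ≠ y := by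
      by_contra hcon
      push Not at hcon
      have : (Finset.univ : Finset ι) ⊆ {x, y} := by
        intro z _
        by_cases hzx : z = x
        · simp [hzx]
        · simp [hcon z hzx]
      have h5 := Finset.card_le_card this
      have h6 := Finset.card_le_two (a := x) (b := y)
      rw [Finset.card_univ] at h5
      omega
    set R1 := (1 - (2 : K) • Matrix.single x x (1 : K)) with hR1
    set R2 := (1 - (2 : K) • Matrix.single z z (1 : K)) with hR2
    obtain ⟨κ1, hκ1, h1⟩ := hconj x a⁻¹ (A.inv_mem ha)
    obtain ⟨κ2, hκ2, h2⟩ := hconj z a ha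
    rw [inv_inv] at hκ1
    have e : (R1 * R2) * ρ a * (R2 * R1) = (κ2 * κ1) • ρ a := by
      calc _ = R1 * (R2 * ρ a * R2) * R1 := by simp only [mul_assoc]
        _ = _ := by rw [hκ2, mul_smul_comm, smul_mul_assoc, hκ1, smul_smul]
    have hR1d : R1 * R1 = 1 := paReflSq x
    have hR2d : R2 * R2 = 1 := paReflSq z
    have hRR : R1 * R2 = R2 * R1 := by
      simp only [hR1, hR2, mul_sub, sub_mul, mul_one, one_mul, smul_mul_smul_comm]
      rw [Matrix.single_mul_single_of_ne _ _ _ _ (Ne.symm hzx), Matrix.single_mul_single_of_ne _ _ _ _ hzx]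
      abel
    have hs2 : (R1 * R2) * (R2 * R1) = 1 := by
      calc _ = R1 * (R2 * R2) * R1 := by simp only [mul_assoc]
        _ = 1 := by rw [hR2d, mul_one, hR1d]
    have hs2' : (R2 * R1) * (R1 * R2) = 1 := by
      calc _ = R2 * (R1 * R1) * R2 := by simp only [mul_assoc]
        _ = 1 := by rw [hR1d, mul_one, hR2d]
    have k3 : (κ2 * κ1) ^ 3 = 1 := by
      refine paCube h3 _ _ _ e ?_ (paUnitDet ρ a)
      have := congrArg Matrix.det hs2
      simp only [Matrix.det_mul, Matrix.det_one] at this ⊢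
      linear_combination (ρ a).det * this
    have k2 : (κ2 * κ1) ^ 2 = 1 := by
      have e2 : (κ2 * κ1) • ((R2 * R1) * ρ a * (R1 * R2)) = ρ a := by
        rw [← smul_mul_assoc, ← mul_smul_comm, ← e]
        calc _ = ((R2 * R1) * (R1 * R2)) * ρ a * ((R2 * R1) * (R1 * R2)) := by
              simp only [mul_assoc]
          _ = _ := by rw [hs2', one_mul, mul_one]
      rw [← hRR] at e2
      nth_rewrite 2 [hRR] at e2
      rw [e, smul_smul] at e2
      have := paSmulOne ρ _ _ e2.symm
      rw [pow_two]; exact this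
    have k1 := h23 _ k3 k2
    rw [k1, one_smul] at e
    have e3 : (R1 * R2) * ρ a = ρ a * (R1 * R2) := by
      calc (R1 * R2) * ρ a = ((R1 * R2) * ρ a * (R2 * R1)) * (R1 * R2) := by
            rw [mul_assoc _ (R2 * R1), hs2', mul_one]
        _ = _ := by rw [e]
    have hd1 : R1 * R2 = Matrix.diagonal (fun j => (if j = x then -1 else 1) * (if j = z then -1 else 1)) := by
      have hf : ∀ x : ι, (1 - (2 : K) • Matrix.single x x (1 : K)) =
          Matrix.diagonal (fun j => (if j = x then -1 else 1)) := by
        intro x; ext u v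
        by_cases huv : u = v
        · subst huv
          by_cases hux : u = x
          · subst hux; simp; norm_num
          · simp [hux, Ne.symm hux]
        · have : ¬ (x = u ∧ x = v) := by rintro ⟨rfl, rfl⟩; exact huv rfl
          simp [huv, this]
      rw [hR1, hR2, hf, hf, Matrix.diagonal_mul_diagonal]
    rw [hd1] at e3
    have e4 := congrFun (congrFun e3 x) y
    rw [Matrix.diagonal_mul, Matrix.mul_diagonal] at e4
    simp [Ne.symm hxy, Ne.symm hzx, Ne.symm hzy] at e4
    have e5 : 2 * ρ a x y = 0 := by linear_combination -e4
    exact (mul_eq_zero.mp e5).resolve_left h.two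
  apply paDiagFalse h hA
  intro a ha i
  have hd : ρ a = Matrix.diagonal (fun j => ρ a j j) := by
    ext x y
    by_cases hxy : x = y
    · subst hxy; simp
    · rw [hdiag a ha x y hxy, Matrix.diagonal_apply_ne _ hxy]
  have hs : Matrix.single i i (1 : K) = Matrix.diagonal (Pi.single i 1) := by
    rw [Matrix.diagonal_single]
  rw [hd, mul_sub, sub_mul, mul_smul_comm, smul_mul_assoc, hs, Matrix.diagonal_mul_diagonal,
    Matrix.diagonal_mul_diagonal, mul_one, one_mul]
  congr 3
  ext j; rw [mul_comm]

end PartA4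

section PartA5
variable {K : Type*} [Field K] [StarRing K] {ι : Type*} [Fintype ι] [DecidableEq ι]
    {Γ : Type*} [Group Γ]

lemma paFourJ {ρ : Γ →* Matrix ι ι K} (h : PALoc ρ) {A : Subgroup Γ} (hA : PAA ρ A)
    (h4 : Fintype.card ι = 4) (I : K) (hI : I * I = -1) (hIs : star I = -I)
    (hJ : ∀ i, ∃ j : Γ, ρ j = 1 + (I - 1) • Matrix.single i i (1 : K)) : False := by
  have key : ∀ (g a : Γ) (i : ι) (u u' : K), a ∈ A → ρ g = 1 + u • Matrix.single i i (1 : K) →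
      ρ g⁻¹ = 1 + u' • Matrix.single i i (1 : K) →
      4 + u + u' + u * u' * (ρ a i i * ρ a⁻¹ i i) = 0 ∨ ρ a * ρ g = ρ g * ρ a := by
    intro g a i u u' ha hg hg'
    have hb : g * a * g⁻¹ * a⁻¹ ∈ A := A.mul_mem (hA.normal.conj_mem a ha g) (A.inv_mem ha)
    rcases hA.tr _ hb with hc | ⟨ht, _⟩
    · right
      rw [← paCommIff]
      apply paScalarOne _ hc
      rw [map_mul, map_mul, map_mul]
      have := paRankComm (Matrix.single i i (1 : K)) (ρ a) (ρ a⁻¹) (paMulInv ρ a) (ρ g) (ρ g⁻¹) 1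
        (paRankSingle i i 1) (u • 1) (u' • 1) (by simpa using hg) (by simpa using hg')
      omega
    · left
      rw [map_mul, map_mul, map_mul, hg, hg'] at ht
      rw [← ht]
      set p := Matrix.single i i (1 : K) with hp
      have e : (1 + u • p) * ρ a * (1 + u' • p) * ρ a⁻¹ = 1 + u • (p * (ρ a * ρ a⁻¹)) +
          u' • (ρ a * (p * ρ a⁻¹)) + (u * u') • ((p * ρ a * p) * ρ a⁻¹) := by
        have h1 : ρ a * (1 + u' • p) * ρ a⁻¹ = 1 + u' • (ρ a * (p * ρ a⁻¹)) := by
          rw [mul_add, add_mul, mul_one, paMulInv, mul_smul_comm, smul_mul_assoc, mul_assoc]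
        calc (1 + u • p) * ρ a * (1 + u' • p) * ρ a⁻¹ = (1 + u • p) * (ρ a * (1 + u' • p) * ρ a⁻¹) := by
              simp only [mul_assoc]
          _ = _ := by
              rw [h1, paMulInv, add_mul, mul_add, mul_add, one_mul, one_mul, mul_one,
                smul_mul_smul_comm, mul_one]
              simp only [mul_assoc]
              abel
      have hpX : p * ρ a * p = ρ a i i • p := by
        rw [hp, Matrix.single_mul_mul_single, Matrix.smul_single]; simp
      rw [e, hpX]
      simp only [Matrix.trace_add, Matrix.trace_smul, Matrix.trace_one, smul_mul_assoc, paMulInv,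
        mul_one, smul_eq_mul, h4]
      rw [Matrix.trace_mul_comm (ρ a), mul_assoc p, paInvMul, mul_one]
      have t1 : p.trace = 1 := by simp [hp]
      have t2 : (p * ρ a⁻¹).trace = ρ a⁻¹ i i := by
        rw [hp, Matrix.trace_mul_comm, Matrix.trace_mul_single]; simp
      rw [t1, t2]; push_cast; ring
  have h1 : ∀ a ∈ A, ∀ i, ∀ j : Γ, ρ j = 1 + (I - 1) • Matrix.single i i (1 : K) →
      ρ a * ρ j = ρ j * ρ a := by
    intro a ha i j hj
    have hj' : ρ j⁻¹ = 1 + (-I - 1) • Matrix.single i i (1 : K) := by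
      rw [← h.uni, hj]
      simp [-Matrix.smul_single, Matrix.conjTranspose_smul, hIs]
    rcases key j a i _ _ ha hj hj' with h5 | h5
    · obtain ⟨r, hr⟩ := h.refl i
      have hr' := paReflInv h hr
      have e1 : (1 - (2 : K) • Matrix.single i i (1 : K)) = 1 + (-2 : K) • Matrix.single i i (1 : K) := by
        rw [neg_smul, sub_eq_add_neg]
      rcases key r a i (-2) (-2) ha (by rw [hr, e1]) (by rw [hr', e1]) with h6 | h6
      · exfalso
        have : (2 : K) * 2 = 0 := by linear_combination 2 * h5 - h6 + 2 * hI * (ρ a i i * ρ a⁻¹ i i)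
        exact mul_ne_zero h.two h.two this
      · rw [hr, mul_sub, sub_mul, mul_smul_comm, smul_mul_assoc, mul_one, one_mul] at h6
        have h7 := smul_right_injective _ h.two (sub_right_injective h6)
        rw [hj, mul_add, add_mul, mul_smul_comm, smul_mul_assoc, mul_one, one_mul]
        rw [h7]
    · exact h5
  apply paDiagFalse h hA
  intro a ha i
  obtain ⟨j, hj⟩ := hJ i
  have e := h1 a ha i j hj
  have e2 : (1 - (2 : K) • Matrix.single i i (1 : K)) = ρ j * ρ j := by
    rw [hj]
    simp only [mul_add, add_mul, mul_one, one_mul, smul_mul_smul_comm, paSingleSq]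
    have : (I - 1) * (I - 1) = -2 * I := by linear_combination hI
    rw [this]; module
  rw [e2, ← mul_assoc, e, mul_assoc, e, mul_assoc]

lemma paBlkTrace (M M' α β γ δ : Matrix (Fin 2) (Fin 2) K)
    (h1 : α * αᴴ + β * βᴴ = 1) (h2 : αᴴ * α + γᴴ * γ = 1) (h3 : γ * γᴴ + δ * δᴴ = 1) :
    (fromBlocks M 0 0 1 * fromBlocks α β γ δ * fromBlocks M' 0 0 1 *
      fromBlocks αᴴ γᴴ βᴴ δᴴ).trace =
    ((M - 1) * α * (M' - 1) * αᴴ).trace + M.trace + M'.trace := by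
  simp only [fromBlocks_multiply, zero_mul, add_zero, one_mul, mul_zero, zero_add, mul_one]
  have e1 : M * β * βᴴ = M - M * α * αᴴ := by
    rw [mul_assoc, mul_assoc, eq_sub_iff_add_eq, ← mul_add, add_comm, h1, mul_one]
  have e2 : (γ * M' * γᴴ).trace = M'.trace - (α * M' * αᴴ).trace := by
    rw [Matrix.trace_mul_comm, ← mul_assoc, Matrix.trace_mul_comm (α * M') αᴴ, ← mul_assoc,
      eq_sub_iff_add_eq, ← Matrix.trace_add, ← add_mul, add_comm, h2, one_mul]
  have e3 : (δ * δᴴ).trace = (α * αᴴ).trace := by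
    have t1 := congrArg Matrix.trace h2
    have t2 := congrArg Matrix.trace h3
    rw [Matrix.trace_add, Matrix.trace_mul_comm αᴴ, Matrix.trace_mul_comm γᴴ] at t1
    rw [Matrix.trace_add] at t2
    linear_combination t2 - t1
  have : (fromBlocks (M * α * M' * αᴴ + M * β * βᴴ) (M * α * M' * γᴴ + M * β * δᴴ)
      (γ * M' * αᴴ + δ * βᴴ) (γ * M' * γᴴ + δ * δᴴ)).trace =
      (M * α * M' * αᴴ + M * β * βᴴ).trace + (γ * M' * γᴴ + δ * δᴴ).trace := by
    simp [Matrix.trace, Fintype.sum_sum_type]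
  rw [this, Matrix.trace_add, Matrix.trace_add, e1, e2, e3]
  simp only [mul_sub, sub_mul, mul_one, one_mul, Matrix.trace_sub]
  ring

/-- `h` acting on the first block. -/
lemma paBlk {ρ : Γ →* Matrix (Fin 2 ⊕ Fin 2) (Fin 2 ⊕ Fin 2) K} (h : PALoc ρ) {A : Subgroup Γ}
    (hA : PAA ρ A) (M M' α β γ δ : Matrix (Fin 2) (Fin 2) K) (g a : Γ) (ha : a ∈ A)
    (hg : ρ g = fromBlocks M 0 0 1) (hM' : M' = Mᴴ) (hM : ∀ c : K, M ≠ c • 1)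
    (hab : ρ a = fromBlocks α β γ δ) :
    ((M - 1) * α * (M' - 1) * αᴴ).trace + M.trace + M'.trace = 0 ∨
      (M * α = α * M ∧ M * β = β) := by
  have hg' : ρ g⁻¹ = fromBlocks M' 0 0 1 := by
    rw [← h.uni, hg, fromBlocks_conjTranspose, hM']; simp
  have ha' : ρ a⁻¹ = fromBlocks αᴴ γᴴ βᴴ δᴴ := by
    rw [← h.uni, hab, fromBlocks_conjTranspose]
  have e1 := paMulInv ρ a
  have e2 := paInvMul ρ a
  rw [hab, ha', fromBlocks_multiply, ← fromBlocks_one, fromBlocks_inj] at e1 e2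
  have hb : g * a * g⁻¹ * a⁻¹ ∈ A := A.mul_mem (hA.normal.conj_mem a ha g) (A.inv_mem ha)
  rcases hA.tr _ hb with ⟨c, hc⟩ | ⟨ht, _⟩
  · right
    have e3 : ρ g * ρ a = c • (ρ a * ρ g) := by
      have : g * a = (g * a * g⁻¹ * a⁻¹) * (a * g) := by group
      rw [← map_mul, this, map_mul ρ (g * a * g⁻¹ * a⁻¹), hc, smul_mul_assoc, one_mul, map_mul]
    rw [hg, hab, fromBlocks_multiply, fromBlocks_multiply, fromBlocks_smul, fromBlocks_inj] at e3
    simp only [zero_mul, add_zero, one_mul, mul_zero, zero_add, mul_one] at e3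
    obtain ⟨c1, c2, c3, c4⟩ := e3
    have hc1 : c = 1 := by
      by_contra hc1
      have hδ : δ = 0 := by
        have : (1 - c) • δ = 0 := by rw [sub_smul, one_smul, ← c4, sub_self]
        exact (smul_eq_zero.mp this).resolve_left (sub_ne_zero.mpr (Ne.symm hc1))
      have hβ : βᴴ * β = 1 := by
        have := e2.2.2.2; rw [hδ] at this; simpa using this
      have hβ' : β * βᴴ = 1 := mul_eq_one_comm.mp hβ
      apply hM c
      calc M = M * β * βᴴ := by rw [mul_assoc, hβ', mul_one]
        _ = _ := by rw [c2, smul_mul_assoc, hβ']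
    rw [hc1, one_smul] at c1 c2
    exact ⟨c1, c2⟩
  · left
    rw [map_mul, map_mul, map_mul, hg, hg', hab, ha', paBlkTrace] at ht
    · exact ht
    · exact e1.1
    · exact e2.1
    · exact e1.2.2.2

lemma paClass {ρ : Γ →* Matrix (Fin 2 ⊕ Fin 2) (Fin 2 ⊕ Fin 2) K} (h : PALoc ρ) {A : Subgroup Γ}
    (hA : PAA ρ A) (gi gh : Γ) (x y : K) (hx : star x = -x) (hy : star y = -y)
    (hxy : x * x + y * y = -1) (hx0 : x ≠ 0) (hy0 : y ≠ 0)
    (hgi : ρ gi = fromBlocks !![0, 1; -1, 0] 0 0 1)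
    (hgh : ρ gh = fromBlocks !![x, y; -y, x] 0 0 1)
    (α β γ δ : Matrix (Fin 2) (Fin 2) K) (a : Γ) (ha : a ∈ A)
    (hab : ρ a = fromBlocks α β γ δ) :
    α = 0 ∨ (β = 0 ∧ ((∃ μ : K, μ ≠ 0 ∧ α = !![μ, 0; 0, μ]) ∨ (∃ s : K, s ≠ 0 ∧ α = !![0, s; -s, 0]))) := by
  obtain ⟨r0, hr0⟩ := h.refl (Sum.inl 0)
  obtain ⟨r1, hr1⟩ := h.refl (Sum.inl 1)
  have two := h.two
  have hR0 : ρ r0 = fromBlocks !![-1, 0; 0, 1] 0 0 1 := by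
    rw [hr0]; ext (i | i) (j | j) <;> fin_cases i <;> fin_cases j <;> simp [Matrix.single_apply]
    norm_num
  have hR1 : ρ r1 = fromBlocks !![1, 0; 0, -1] 0 0 1 := by
    rw [hr1]; ext (i | i) (j | j) <;> fin_cases i <;> fin_cases j <;> simp [Matrix.single_apply]
    norm_num
  have hW : ρ (r1 * gi) = fromBlocks !![0, 1; 1, 0] 0 0 1 := by
    rw [map_mul, hR1, hgi, fromBlocks_multiply]; congr 1 <;> simp
  have hW' : ρ (r0 * gi) = fromBlocks !![0, -1; -1, 0] 0 0 1 := by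
    rw [map_mul, hR0, hgi, fromBlocks_multiply]; congr 1 <;> simp
  have hns : ∀ p q r s c : K, (p ≠ s ∨ q ≠ 0) → !![p, q; r, s] ≠ c • (1 : Matrix (Fin 2) (Fin 2) K) := by
    intro p q r s c hor he
    have h1 := congrFun (congrFun he 0) 0
    have h2 := congrFun (congrFun he 1) 1
    have h3 := congrFun (congrFun he 0) 1
    simp at h1 h2 h3
    rcases hor with h4 | h4
    · exact h4 (by rw [h1, h2])
    · exact h4 h3
  have one_ne : (-1 : K) ≠ 1 := by
    intro e; exact two (by linear_combination -e)
  have star2 : ∀ p q r s : K, (!![p, q; r, s] : Matrix (Fin 2) (Fin 2) K)ᴴ = !![star p, star r; star q, star s] := by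
    intro p q r s; ext i j; fin_cases i <;> fin_cases j <;> simp
  have k0 := paBlk h hA _ _ α β γ δ r0 a ha hR0 rfl (fun c => hns _ _ _ _ c (Or.inl one_ne)) hab
  have k1 := paBlk h hA _ _ α β γ δ r1 a ha hR1 rfl (fun c => hns _ _ _ _ c (Or.inl one_ne.symm)) hab
  have k2 := paBlk h hA _ _ α β γ δ _ a ha hW rfl (fun c => hns _ _ _ _ c (Or.inr one_ne_zero)) hab
  have k3 := paBlk h hA _ _ α β γ δ _ a ha hW' rfl (fun c => hns _ _ _ _ c (Or.inr (neg_ne_zero.mpr one_ne_zero))) hab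
  have k4 := paBlk h hA _ _ α β γ δ gh a ha hgh rfl (fun c => hns _ _ _ _ c (Or.inr hy0)) hab
  have e1 := paMulInv ρ a
  rw [← h.uni, hab, fromBlocks_conjTranspose, fromBlocks_multiply, ← fromBlocks_one, fromBlocks_inj] at e1
  have e1 := e1.1
  clear hab
  obtain ⟨a00, a01, a10, a11, rfl⟩ : ∃ p q r s, α = !![p, q; r, s] :=
    ⟨_, _, _, _, Matrix.eta_fin_two α⟩
  obtain ⟨b00, b01, b10, b11, rfl⟩ : ∃ p q r s, β = !![p, q; r, s] :=
    ⟨_, _, _, _, Matrix.eta_fin_two β⟩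
  have hone : (1 : Matrix (Fin 2) (Fin 2) K) = !![1, 0; 0, 1] := Matrix.one_fin_two
  have hze : (0 : Matrix (Fin 2) (Fin 2) K) = !![0, 0; 0, 0] := by
    ext i j; fin_cases i <;> fin_cases j <;> rfl
  have inj2 : ∀ p q r s p' q' r' s' : K, !![p, q; r, s] = !![p', q'; r', s'] ↔
      p = p' ∧ q = q' ∧ r = r' ∧ s = s' := by
    intro p q r s p' q' r' s'
    constructor
    · intro e
      exact ⟨by simpa using congrFun (congrFun e 0) 0, by simpa using congrFun (congrFun e 0) 1,
        by simpa using congrFun (congrFun e 1) 0, by simpa using congrFun (congrFun e 1) 1⟩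
    · rintro ⟨rfl, rfl, rfl, rfl⟩; rfl
  have sub2 : ∀ p q r s p' q' r' s' : K, !![p, q; r, s] - !![p', q'; r', s'] =
      !![p - p', q - q'; r - r', s - s'] := by
    intro p q r s p' q' r' s'; ext i j; fin_cases i <;> fin_cases j <;> rfl
  have add2 : ∀ p q r s p' q' r' s' : K, !![p, q; r, s] + !![p', q'; r', s'] =
      !![p + p', q + q'; r + r', s + s'] := by
    intro p q r s p' q' r' s'; ext i j; fin_cases i <;> fin_cases j <;> rfl
  simp only [star2, hone, sub2, Matrix.mul_fin_two, Matrix.trace_fin_two_of, inj2, star_neg, star_one,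
    star_zero, hx, hy, add2] at k0 k1 k2 k3 k4 e1
  rw [hze]
  simp only [inj2]
  have hz : ∀ z : K, z + z = 0 → z = 0 := by
    intro z e
    have : 2 * z = 0 := by linear_combination e
    exact (mul_eq_zero.mp this).resolve_left two
  have hnn : ∀ z : K, z * star z = 0 → z = 0 := by
    intro z e
    rcases mul_eq_zero.mp e with e | e
    · exact e
    · exact (star_eq_zero).mp e
  have hnn4 : ∀ z : K, (z * star z + z * star z) + (z * star z + z * star z) = 0 → z = 0 :=
    fun z e => hnn z (hz _ (hz _ e))
  have K0 : a00 = 0 ∨ (a01 = 0 ∧ a10 = 0 ∧ b00 = 0 ∧ b01 = 0) := by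
    rcases k0 with e | ⟨⟨_, e2, e3, _⟩, e4, e5, _⟩
    · left; apply hnn4; linear_combination e
    · right
      exact ⟨hz _ (by linear_combination -e2), hz _ (by linear_combination e3),
        hz _ (by linear_combination -e4), hz _ (by linear_combination -e5)⟩
  have K1 : a11 = 0 ∨ (a01 = 0 ∧ a10 = 0 ∧ b10 = 0 ∧ b11 = 0) := by
    rcases k1 with e | ⟨⟨_, e2, e3, _⟩, _, _, e4, e5⟩
    · left; apply hnn4; linear_combination e
    · right
      exact ⟨hz _ (by linear_combination e2), hz _ (by linear_combination -e3),
        hz _ (by linear_combination -e4), hz _ (by linear_combination -e5)⟩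
  have K2 : a00 - a01 - a10 + a11 = 0 ∨ (a10 = a01 ∧ a11 = a00 ∧ b10 = b00 ∧ b11 = b01) := by
    rcases k2 with e | ⟨⟨e1, e2, e3, _⟩, e4, e5, _⟩
    · left; apply hnn
      simp only [star_add, star_sub]
      linear_combination e
    · right
      exact ⟨by linear_combination e1, by linear_combination e2, by linear_combination e4,
        by linear_combination e5⟩
  have K3 : a00 + a01 + a10 + a11 = 0 ∨ (a10 = a01 ∧ a11 = a00 ∧ b10 = -b00 ∧ b11 = -b01) := by
    rcases k3 with e | ⟨⟨e1, e2, e3, _⟩, e4, e5, _⟩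
    · left; apply hnn
      simp only [star_add, star_sub]
      linear_combination e
    · right
      exact ⟨by linear_combination -e1, by linear_combination -e2, by linear_combination -e4,
        by linear_combination -e5⟩
  clear k0 k1 k2 k3
  by_cases h00 : a00 = 0
  · by_cases h11 : a11 = 0
    · subst h00; subst h11
      by_cases hs : a01 + a10 = 0
      · obtain rfl : a10 = -a01 := by linear_combination hs
        by_cases h01 : a01 = 0
        · left; simp [h01]
        · right
          refine ⟨?_, Or.inr ⟨a01, h01, by simp⟩⟩
          rcases k4 with e | ⟨_, f1, f2, f3, f4⟩
          · exfalso
            apply h01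
            apply hnn4
            simp only [star_neg, star_zero] at e
            linear_combination e + 2 * a01 * star a01 * hxy
          · have hdet : ∀ u v : K, x * u + y * v = u → -y * u + x * v = v → u = 0 ∧ v = 0 := by
              intro u v g1 g2
              have hu : (x + x) * u = 0 := by
                linear_combination - (x - 1) * g1 + y * g2 + u * hxy
              have hv : (x + x) * v = 0 := by
                linear_combination - (x - 1) * g2 - y * g1 + v * hxy
              have hxx : x + x ≠ 0 := fun e => hx0 (hz x e)
              exact ⟨(mul_eq_zero.mp hu).resolve_left hxx, (mul_eq_zero.mp hv).resolve_left hxx⟩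
            obtain ⟨g1, g2⟩ := hdet _ _ f1 f3
            obtain ⟨g3, g4⟩ := hdet _ _ f2 f4
            exact ⟨g1, g3, g2, g4⟩
      · exfalso
        rcases K2 with e | ⟨e6, _, e2, e3⟩
        · exact hs (by linear_combination -e)
        rcases K3 with e | ⟨_, _, e4, e5⟩
        · exact hs (by linear_combination e)
        have hb00 : b00 = 0 := hz _ (by linear_combination e4 - e2)
        have hb01 : b01 = 0 := hz _ (by linear_combination e5 - e3)
        subst hb00; subst hb01; subst e6
        have hN : a10 * star a10 = 1 := by
          have := e1.1
          simpa using this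
        rcases k4 with e | ⟨⟨f1, _⟩, _⟩
        · apply hx0
          have : x * x = 0 := by
            apply hz; apply hz
            simp only [star_zero] at e
            linear_combination -e + 2*(1+y*y-x*x)*hN + 2*hxy
          exact mul_self_eq_zero.mp this
        · apply hs
          have : y * (a10 + a10) = 0 := by linear_combination f1
          exact (mul_eq_zero.mp this).resolve_left hy0
    · exfalso
      rcases K1 with e | ⟨rfl, rfl, rfl, rfl⟩
      · exact h11 e
      rcases K2 with e | ⟨_, e, _⟩
      · apply h11; linear_combination e - h00
      · exact h11 (by rw [e, h00])
  · rcases K0 with e | ⟨rfl, rfl, rfl, rfl⟩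
    · exact absurd e h00
    by_cases h11 : a11 = 0
    · exfalso
      rcases K2 with e | ⟨_, e, _⟩
      · apply h00; linear_combination e - h11
      · exact h00 (by rw [← e, h11])
    · rcases K1 with e | ⟨_, _, rfl, rfl⟩
      · exact absurd e h11
      right
      refine ⟨by simp, Or.inl ⟨a00, h00, ?_⟩⟩
      rcases K2 with e | ⟨_, e, _⟩
      · exfalso
        obtain rfl : a11 = -a00 := by linear_combination e
        have hN : a00 * star a00 = 1 := by
          have := e1.1
          simpa using this
        rcases k4 with e | ⟨⟨_, f1, _⟩, _⟩
        · apply hx0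
          have : x * x = 0 := by
            apply hz; apply hz
            simp only [star_zero, star_neg] at e
            linear_combination -e + 2*(1+y*y-x*x)*hN + 2*hxy
          exact mul_self_eq_zero.mp this
        · apply h00
          apply hz
          have : y * (a00 + a00) = 0 := by linear_combination -f1
          exact (mul_eq_zero.mp this).resolve_left hy0
      · simp [e]

lemma paFourH {ρ : Γ →* Matrix (Fin 2 ⊕ Fin 2) (Fin 2 ⊕ Fin 2) K} (h : PALoc ρ) {A : Subgroup Γ}
    (hA : PAA ρ A) (gi gh : Γ) (x y : K) (hx : star x = -x) (hy : star y = -y)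
    (hxy : x * x + y * y = -1) (hx0 : x ≠ 0) (hy0 : y ≠ 0)
    (hgi : ρ gi = fromBlocks !![0, 1; -1, 0] 0 0 1)
    (hgh : ρ gh = fromBlocks !![x, y; -y, x] 0 0 1) : False := by
  have hB : ∀ a : Γ, ρ a = fromBlocks (ρ a).toBlocks₁₁ (ρ a).toBlocks₁₂ (ρ a).toBlocks₂₁ (ρ a).toBlocks₂₂ :=
    fun a => (Matrix.fromBlocks_toBlocks _).symm
  have cl := fun a ha => paClass h hA gi gh x y hx hy hxy hx0 hy0 hgi hgh _ _ _ _ a ha (hB a)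
  by_cases hd : ∃ d ∈ A, (ρ d).toBlocks₁₁ = 0
  · obtain ⟨d, hdA, hd⟩ := hd
    have hb : gh * d * gh⁻¹ * d⁻¹ ∈ A := A.mul_mem (hA.normal.conj_mem d hdA gh) (A.inv_mem hdA)
    have hgh' : ρ gh⁻¹ = fromBlocks (!![x, y; -y, x]ᴴ) 0 0 1 := by
      rw [← h.uni, hgh, Matrix.fromBlocks_conjTranspose]; simp
    have hdd := hB d
    rw [hd] at hdd
    have hd' : ρ d⁻¹ = fromBlocks 0 ((ρ d).toBlocks₂₁)ᴴ ((ρ d).toBlocks₁₂)ᴴ ((ρ d).toBlocks₂₂)ᴴ := by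
      rw [← h.uni]; conv_lhs => rw [hdd, Matrix.fromBlocks_conjTranspose]
      simp
    have hm := paMulInv ρ d
    rw [hd'] at hm
    conv_lhs at hm => lhs; rw [hdd]
    rw [Matrix.fromBlocks_multiply, ← Matrix.fromBlocks_one, Matrix.fromBlocks_inj] at hm
    have hbb := hm.1
    rw [zero_mul, zero_add] at hbb
    have e : (ρ (gh * d * gh⁻¹ * d⁻¹)).toBlocks₁₁ = !![x, y; -y, x] := by
      rw [map_mul, map_mul, map_mul, hgh, hgh', hd']
      conv_lhs => arg 1; lhs; lhs; rhs; rw [hdd]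
      simp only [Matrix.fromBlocks_multiply, Matrix.toBlocks_fromBlocks₁₁, zero_mul, mul_zero,
        add_zero, zero_add, mul_one]
      rw [mul_assoc, hbb, mul_one]
    have := cl _ hb
    rw [e] at this
    rcases this with h1 | ⟨_, ⟨m, _, h1⟩ | ⟨m, _, h1⟩⟩
    · exact hx0 (by simpa using congrFun (congrFun h1 0) 0)
    · exact hy0 (by simpa using congrFun (congrFun h1 0) 1)
    · exact hx0 (by simpa using congrFun (congrFun h1 0) 0)
  · push Not at hd
    obtain ⟨a, ha, d, hdA, hne⟩ := hA.nonab
    obtain ⟨ν, hν⟩ := hA.comm a ha d hdA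
    obtain ⟨ba, ca⟩ := (cl a ha).resolve_left (hd a ha)
    obtain ⟨bd, cd⟩ := (cl d hdA).resolve_left (hd d hdA)
    have e := hν
    rw [hB a, hB d, ba, bd, Matrix.fromBlocks_multiply, Matrix.fromBlocks_multiply,
      Matrix.fromBlocks_smul, Matrix.fromBlocks_inj] at e
    have e1 := e.1
    simp only [zero_mul, add_zero] at e1
    have hν1 : ν = 1 := by
      rcases ca with ⟨m, hm, ca⟩ | ⟨m, hm, ca⟩ <;> rcases cd with ⟨k, hk, cd⟩ | ⟨k, hk, cd⟩ <;>
      · rw [ca, cd] at e1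
        have f0 := congrFun (congrFun e1 0) 0
        have f1 := congrFun (congrFun e1 0) 1
        have hmk : m * k ≠ 0 := mul_ne_zero hm hk
        simp [Matrix.mul_fin_two] at f0 f1
        have : (1 - ν) * (m * k) = 0 := by first | linear_combination f0 | linear_combination -f0 | linear_combination f1
        exact (sub_eq_zero.mp ((mul_eq_zero.mp this).resolve_right hmk)).symm
    rw [hν1, one_smul] at hν
    exact hne hν

end PartA5

section PartC1
variable {K : Type*} [Field K] [StarRing K] {ι : Type*} [Fintype ι] [DecidableEq ι]

def PCSt (τ : ι → ι) (g : Matrix ι ι K) : Prop :=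
  ∀ a b a' b', g a b ≠ 0 → g a' b' ≠ 0 → ((b' = b ∨ b' = τ b) ↔ (a' = a ∨ a' = τ a))

/-- the column `j` of `g` is supported on the diagonal -/
def PCD (g : Matrix ι ι K) (j : ι) : Prop := ∀ i, i ≠ j → g i j = 0

lemma pcFlip {g : Matrix ι ι K} (hg : gᴴ * g = 1) : g * gᴴ = 1 := mul_eq_one_comm.mp hg

lemma pcColNe {g : Matrix ι ι K} (hg : gᴴ * g = 1) (b : ι) : ∃ a, g a b ≠ 0 := by
  by_contra hc
  push Not at hc
  have h1 := congrFun (congrFun hg b) b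
  rw [Matrix.mul_apply] at h1
  simp [hc] at h1

lemma pcRowNe {g : Matrix ι ι K} (hg : gᴴ * g = 1) (b : ι) : ∃ a, g b a ≠ 0 := by
  by_contra hc
  push Not at hc
  have h1 := congrFun (congrFun (pcFlip hg) b) b
  rw [Matrix.mul_apply] at h1
  simp [hc] at h1

lemma pcLine {τ : ι → ι} {M : Matrix ι ι K} (hM : Mᴴ * M = 1) (hS : PCSt τ M) (b : ι)
    (hb : τ b = b) : ∃ (k : ι) (c : K), τ k = k ∧ c ≠ 0 ∧ ∀ i, M i b = if i = k then c else 0 := by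
  obtain ⟨a, ha⟩ := pcColNe hM b
  have hrow : ∀ b', M a b' ≠ 0 → b' = b := by
    intro b' h'
    simpa [hb] using (hS a b a b' ha h').mpr (Or.inl rfl)
  have ht : τ a = a := by
    by_contra hne
    obtain ⟨b', hb'⟩ := pcRowNe hM (τ a)
    have : b' = b := by simpa [hb] using (hS a b (τ a) b' ha hb').mpr (Or.inr rfl)
    subst this
    have h1 := congrFun (congrFun (pcFlip hM) a) (τ a)
    rw [Matrix.mul_apply, Finset.sum_eq_single b', Matrix.one_apply_ne (Ne.symm hne)] at h1
    · simp at h1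
      exact h1.elim ha hb'
    · intro c _ hc
      rw [by_contra fun h => hc (hrow c h), zero_mul]
    · simp
  refine ⟨a, M a b, ht, ha, fun i => ?_⟩
  split_ifs with hi
  · rw [hi]
  · by_contra hne
    have := (hS a b i b ha hne).mp (Or.inl rfl)
    rw [ht] at this
    exact hi (by simpa using this)

lemma pcCol {g h : Matrix ι ι K} (hh : hᴴ * h = 1) {b k : ι} {c : K}
    (hM : ∀ i, (hᴴ * g * h) i b = if i = k then c else 0) (i : ι) :
    (g * h) i b = c * h i k := by
  have e : g * h = h * (hᴴ * g * h) := by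
    rw [mul_assoc, ← mul_assoc, pcFlip hh, one_mul]
  rw [e, Matrix.mul_apply]
  simp [hM, mul_comm]

lemma pcConjUni {g h : Matrix ι ι K} (hg : gᴴ * g = 1) (hh : hᴴ * h = 1) :
    (hᴴ * g * h)ᴴ * (hᴴ * g * h) = 1 := by
  have e : (hᴴ * g * h)ᴴ * (hᴴ * g * h) = hᴴ * gᴴ * (h * hᴴ) * g * h := by
    simp [Matrix.conjTranspose_mul, mul_assoc]
  rw [e, pcFlip hh, mul_one, mul_assoc hᴴ, hg, mul_one, hh]

lemma pcDne {g : Matrix ι ι K} (hg : gᴴ * g = 1) {b : ι} (hD : PCD g b) : g b b ≠ 0 := by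
  obtain ⟨a, ha⟩ := pcColNe hg b
  by_cases h : a = b
  · rwa [h] at ha
  · exact absurd (hD a h) ha

lemma pcDnorm {g : Matrix ι ι K} (hg : gᴴ * g = 1) {b : ι} (hD : PCD g b) :
    g b b * star (g b b) = 1 := by
  have h1 := congrFun (congrFun hg b) b
  rw [Matrix.mul_apply, Finset.sum_eq_single b, Matrix.one_apply_eq] at h1
  · rw [mul_comm]; simpa using h1
  · intro c _ hc; rw [hD c hc, mul_zero]
  · simp

lemma pcDrow {g : Matrix ι ι K} (hg : gᴴ * g = 1) {b : ι} (hD : PCD g b) (j : ι) (hj : j ≠ b) :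
    g b j = 0 := by
  have h1 := congrFun (congrFun hg b) j
  rw [Matrix.mul_apply, Finset.sum_eq_single b, Matrix.one_apply_ne (Ne.symm hj)] at h1
  · simp at h1
    exact h1.resolve_left (pcDne hg hD)
  · intro c _ hc; simp [hD c hc]
  · simp

lemma pcProp {σ : ι → ι} {g : Matrix ι ι K} (hg : gᴴ * g = 1) (hS : PCSt σ g) {b : ι}
    (hD : PCD g b) : PCD g (σ b) := by
  by_cases hb : σ b = b
  · rwa [hb]
  intro i hi
  by_contra hne
  have := (hS b b i (σ b) (pcDne hg hD) hne).mp (Or.inr rfl)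
  rcases this with h | h
  · rw [h] at hne
    exact hne (pcDrow hg hD _ hb)
  · exact hi h

/-- the defining properties of a rotation matrix along `ρ` -/
structure PCRot (ρ : ι → ι) (R : Matrix ι ι K) : Prop where
  uni : Rᴴ * R = 1
  supp : ∀ i b, R i b ≠ 0 ↔ (i = b ∨ i = ρ b)
  fix : ∀ b, ρ b = b → R b b = 1
  eq : ∀ b k : ι, ∀ t t' c : K, ρ b ≠ b → (k = b ∨ k = ρ b) → t * star t = 1 → t' * star t' = 1 →
    t * R b b = c * R b k → t' * R (ρ b) b = c * R (ρ b) k → t = t'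

lemma pcMulDiag {g : Matrix ι ι K} (hg : gᴴ * g = 1) {j : ι} (hD : PCD g j) (h : Matrix ι ι K)
    (b : ι) : (g * h) j b = g j j * h j b := by
  rw [Matrix.mul_apply, Finset.sum_eq_single j]
  · intro c _ hc; rw [pcDrow hg hD c hc, zero_mul]
  · simp

lemma pcStep {τ ρ : ι → ι} {g h R : Matrix ι ι K} (hg : gᴴ * g = 1) (hh : hᴴ * h = 1)
    (hS : PCSt τ (hᴴ * g * h)) (hR : PCRot ρ R) (hρ : ∀ x, ρ (ρ x) = x) {j : ι} (hτ : τ j = j)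
    (hj : ρ j ≠ j)
    (h1 : ∀ i, h i j = R i j) (h2 : ∀ k, τ k = k → h j k ≠ 0 → ∀ i, h i k = R i k)
    (hD : PCD g j) : PCD g (ρ j) ∧ g (ρ j) (ρ j) = g j j := by
  obtain ⟨k, c, hk, hc, hM⟩ := pcLine (pcConjUni hg hh) hS j hτ
  have hcol := pcCol hh hM
  have hjj : h j j ≠ 0 := by rw [h1, hR.supp]; exact Or.inl rfl
  have hjk : h j k ≠ 0 := by
    intro h0
    have := hcol j
    rw [pcMulDiag hg hD, h0, mul_zero] at this
    exact (mul_ne_zero (pcDne hg hD) hjj) this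
  have h2 := h2 k hk hjk
  have hkj : k = j ∨ k = ρ j := by
    rw [h2, hR.supp] at hjk
    rcases hjk with e | e
    · exact Or.inl e.symm
    · right; rw [e, hρ]
  have hD' : PCD g (ρ j) := by
    intro i hi
    by_cases hij : i = j
    · rw [hij]; exact pcDrow hg hD _ hj
    have h3 := hcol i
    have h4 : h i k = 0 := by
      rw [h2]; by_contra hne
      rw [← ne_eq, hR.supp] at hne
      rcases hkj with e | e
      · rw [e] at hne; tauto
      · rw [e, hρ] at hne; tauto
    rw [h4, mul_zero, Matrix.mul_apply, Finset.sum_eq_single (ρ j)] at h3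
    · refine (mul_eq_zero.mp h3).resolve_right ?_
      rw [h1]; exact (hR.supp _ _).mpr (Or.inr rfl)
    · intro x _ hx
      by_cases hxj : x = j
      · rw [hxj, hD i hij, zero_mul]
      · have : h x j = 0 := by
          rw [h1]; by_contra hne
          rw [← ne_eq, hR.supp] at hne
          tauto
        rw [this, mul_zero]
    · simp
  refine ⟨hD', ?_⟩
  have e1 := hcol j
  have e2 := hcol (ρ j)
  rw [pcMulDiag hg hD, h1, h2] at e1
  rw [pcMulDiag hg hD', h1, h2] at e2
  exact (hR.eq j k _ _ c hj hkj (pcDnorm hg hD) (pcDnorm hg hD') e1 e2).symm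

lemma pcRotExists [LinearOrder ι] (ρ : ι → ι) (hρ : ∀ x, ρ (ρ x) = x) (h2 : (2 : K) ≠ 0) (h3 : (3 : K) ≠ 0)
    (hN : ∀ a : K, star a = a → ∃ b, b * star b = a) : ∃ R : Matrix ι ι K, PCRot ρ R := by
  obtain ⟨α, hα⟩ := hN 2 (by simp)
  obtain ⟨β, hβ⟩ := hN (-1) (by simp)
  have hα0 : α ≠ 0 := by rintro rfl; simp at hα; exact h2 hα.symm
  have hβ0 : β ≠ 0 := by rintro rfl; simp at hβ
  set A : ι → K := fun j => if j < ρ j then α else if ρ j < j then star α else 1 with hA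
  set B : ι → K := fun j => if j < ρ j then β else if ρ j < j then -star β else 0 with hB
  have tri : ∀ j, (j < ρ j ∧ ρ j ≠ j ∧ A j = α ∧ B j = β ∧ A (ρ j) = star α ∧ B (ρ j) = -star β) ∨
      (ρ j < j ∧ ρ j ≠ j ∧ A j = star α ∧ B j = -star β ∧ A (ρ j) = α ∧ B (ρ j) = β) ∨
      (ρ j = j ∧ A j = 1 ∧ B j = 0) := by
    intro j
    rcases lt_trichotomy j (ρ j) with h | h | h
    · left; refine ⟨h, h.ne', ?_⟩; simp [hA, hB, h, hρ, h.not_gt]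
    · right; right; refine ⟨h.symm, ?_⟩; simp [hA, hB, ← h]
    · right; left; refine ⟨h, h.ne, ?_⟩; simp [hA, hB, h, hρ, h.not_gt]
  set R : Matrix ι ι K := Matrix.of fun i j => (if i = j then A j else 0) + (if i = ρ j then B j else 0) with hRdef
  have Rap : ∀ i j, R i j = (if i = j then A j else 0) + (if i = ρ j then B j else 0) := fun i j => rfl
  have supp : ∀ i b, R i b ≠ 0 ↔ (i = b ∨ i = ρ b) := by
    intro i b
    rw [Rap]
    rcases tri b with ⟨_, hb, a1, a2, _, _⟩ | ⟨_, hb, a1, a2, _, _⟩ | ⟨hb, a1, a2⟩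
    · rw [a1, a2]
      by_cases e : i = b
      · have : i ≠ ρ b := by rw [e]; exact hb.symm
        simp [e, hb.symm, hα0]
      · by_cases e' : i = ρ b <;> simp [e, e', hβ0, hb]
    · rw [a1, a2]
      by_cases e : i = b
      · have : i ≠ ρ b := by rw [e]; exact hb.symm
        simp [e, hb.symm, hα0]
      · by_cases e' : i = ρ b <;> simp [e, e', hβ0, hb]
    · rw [a1, a2, hb]; by_cases e : i = b <;> simp [e]
  clear_value A B R
  refine ⟨R, ?_, supp, ?_, ?_⟩
  · ext j k
    rw [Matrix.mul_apply]
    have hinj : ∀ x y, ρ x = ρ y → x = y := fun x y e => by rw [← hρ x, e, hρ]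
    have : ∀ i, Rᴴ j i * R i k = (if i = j then star (A j) * R j k else 0) +
        (if i = ρ j then star (B j) * R (ρ j) k else 0) := by
      intro i
      rw [Matrix.conjTranspose_apply, Rap i j, star_add, add_mul]
      congr 1
      · split_ifs with e
        · rw [e]
        · simp
      · split_ifs with e
        · rw [e]
        · simp
    rw [Finset.sum_congr rfl fun i _ => this i, Finset.sum_add_distrib, Finset.sum_ite_eq',
      Finset.sum_ite_eq']
    simp only [Finset.mem_univ, if_true]
    rw [Rap, Rap]
    by_cases e : j = k
    · subst e
      rcases tri j with ⟨_, hb, a1, a2, _, _⟩ | ⟨_, hb, a1, a2, _, _⟩ | ⟨hb, a1, a2⟩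
      · simp [a1, a2, hb, hb.symm]; linear_combination hα + hβ
      · simp [a1, a2, hb, hb.symm]; linear_combination hα + hβ
      · simp [a1, a2, hb]
    · rw [Matrix.one_apply_ne e]
      have e' : ρ j ≠ ρ k := fun h => e (hinj _ _ h)
      by_cases f : j = ρ k
      · subst f
        rw [hρ]
        rcases tri k with ⟨_, hb, a1, a2, a3, a4⟩ | ⟨_, hb, a1, a2, a3, a4⟩ | ⟨hb, a1, a2⟩
        · simp [a1, a2, a3, a4, hb, hb.symm]; ring
        · simp [a1, a2, a3, a4, hb, hb.symm]; ring
        · exact absurd hb e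
      · have f' : ρ j ≠ k := by rintro rfl; exact f (hρ j).symm
        simp [e, e', f, f']
  · intro b hb
    rcases tri b with ⟨_, h, _⟩ | ⟨_, h, _⟩ | ⟨_, a1, a2⟩
    · exact absurd hb h
    · exact absurd hb h
    · simp [Rap, a1, a2]
  · intro b k t t' c hb hk ht ht' e1 e2
    have hN1 : R b b * star (R b b) = 2 := by
      rw [Rap]
      rcases tri b with ⟨_, _, a1, a2, _, _⟩ | ⟨_, _, a1, a2, _, _⟩ | ⟨h, a1, a2⟩
      · simp [a1, a2, hb.symm, hα]
      · simp [a1, a2, hb.symm]; linear_combination hα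
      · exact absurd h hb
    have hN2 : R (ρ b) b * star (R (ρ b) b) = -1 := by
      rw [Rap]
      rcases tri b with ⟨_, _, a1, a2, _, _⟩ | ⟨_, _, a1, a2, _, _⟩ | ⟨h, a1, a2⟩
      · simp [a2, hb, hβ]
      · simp [a2, hb]; linear_combination hβ
      · exact absurd h hb
    have n1 : R b b ≠ 0 := by rw [supp]; exact Or.inl rfl
    have n2 : R (ρ b) b ≠ 0 := by rw [supp]; exact Or.inr rfl
    rcases hk with rfl | rfl
    · exact (mul_right_cancel₀ n1 e1).trans (mul_right_cancel₀ n2 e2).symm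
    · exfalso
      have hN3 : R b (ρ b) * star (R b (ρ b)) = -1 := by
        rw [Rap, hρ]
        rcases tri b with ⟨_, _, a1, a2, a3, a4⟩ | ⟨_, _, a1, a2, a3, a4⟩ | ⟨h, a1, a2⟩
        · simp [a4, hb.symm]; linear_combination hβ
        · simp [a4, hb.symm]; linear_combination hβ
        · exact absurd h hb
      have hN4 : R (ρ b) (ρ b) * star (R (ρ b) (ρ b)) = 2 := by
        rw [Rap, hρ]
        rcases tri b with ⟨_, _, a1, a2, a3, a4⟩ | ⟨_, _, a1, a2, a3, a4⟩ | ⟨h, a1, a2⟩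
        · simp [a3, hb]; linear_combination hα
        · simp [a3, hb]; linear_combination hα
        · exact absurd h hb
      have f1 := congrArg (fun z => z * star z) e1
      have f2 := congrArg (fun z => z * star z) e2
      simp only [star_mul] at f1 f2
      have g1 : (2 : K) = c * star c * (-1) := by
        rw [← hN1, ← hN3]; linear_combination f1 - R b b * star (R b b) * ht
      have g2 : (-1 : K) = c * star c * 2 := by
        rw [← hN2, ← hN4]; linear_combination f2 - R (ρ b) b * star (R (ρ b) b) * ht'
      exact h3 (by linear_combination 2 * g1 + g2)

end PartC1

section PartC2
variable {K : Type*} [Field K] [StarRing K] {ι : Type*} [Fintype ι] [DecidableEq ι]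

lemma pcUnitVec (S : Finset ι) (s : ι) (hs : s ∈ S) (hS : 2 ≤ S.card) (h2 : (2 : K) ≠ 0)
    (hN : ∀ a : K, star a = a → ∃ b, b * star b = a) :
    ∃ u : ι → K, (∀ i, u i ≠ 0 ↔ i ∈ S) ∧ ∑ i, u i * star (u i) = 1 ∧ u s ≠ 1 := by
  obtain ⟨t, ht, hts⟩ := Finset.exists_mem_ne (by omega : 1 < S.card) s
  set r : K := 1 - ((S.card - 2 : ℕ) : K) with hr
  have hrs : star r = r := by simp [hr]
  obtain ⟨a, ha, ha0, har⟩ : ∃ a : K, star a = a ∧ a ≠ 0 ∧ r - a ≠ 0 := by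
    by_cases h : r = 1
    · refine ⟨2, by simp, h2, fun e => ?_⟩
      rw [h] at e
      exact one_ne_zero (α := K) (by linear_combination -e)
    · exact ⟨1, by simp, one_ne_zero, sub_ne_zero.mpr h⟩
  set w : ι → K := fun i => if i = s then a else if i = t then r - a else if i ∈ S then 1 else 0 with hw
  have hw0 : ∀ i, w i ≠ 0 ↔ i ∈ S := by
    intro i
    simp only [hw]
    by_cases h : i = s
    · simp [h, ha0, hs]
    by_cases h' : i = t
    · simp [h', hts, har, ht]
    by_cases h'' : i ∈ S <;> simp [h, h', h'']
  have hws : ∀ i, star (w i) = w i := by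
    intro i
    simp only [hw]
    split_ifs <;> simp [ha, hrs]
  have hsum : ∑ i, w i = 1 := by
    rw [← Finset.sum_subset (Finset.subset_univ S) (fun i _ hi => by
      by_contra h; exact hi ((hw0 i).mp h))]
    rw [← Finset.add_sum_erase S w hs, ← Finset.add_sum_erase (S.erase s) w
      (Finset.mem_erase.mpr ⟨hts, ht⟩)]
    have e1 : w s = a := by simp [hw]
    have e2 : w t = r - a := by simp [hw, hts]
    have e3 : ∑ i ∈ (S.erase s).erase t, w i = ((S.card - 2 : ℕ) : K) := by
      rw [Finset.sum_congr rfl (g := fun _ => (1 : K))]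
      · rw [Finset.sum_const, Finset.card_erase_of_mem (Finset.mem_erase.mpr ⟨hts, ht⟩),
          Finset.card_erase_of_mem hs, nsmul_eq_mul, mul_one]
        rfl
      · intro i hi
        simp only [Finset.mem_erase] at hi
        simp [hw, hi.1, hi.2.1, hi.2.2]
    rw [e1, e2, e3, hr]; ring
  choose v hv using fun i => hN (w i) (hws i)
  have hv0 : ∀ i, v i ≠ 0 ↔ i ∈ S := by
    intro i
    rw [← hw0, ← hv]
    simp
  by_cases h1 : v s = 1
  · refine ⟨fun i => - v i, by simpa using hv0, by simpa [hv] using hsum, ?_⟩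
    show - v s ≠ 1
    rw [h1]; intro e
    exact h2 (by linear_combination -e)
  · exact ⟨v, hv0, by simpa [hv] using hsum, h1⟩

lemma pcUExists (S : Finset ι) (s : ι) (hs : s ∈ S) (hS : 2 ≤ S.card) (h2 : (2 : K) ≠ 0)
    (hN : ∀ a : K, star a = a → ∃ b, b * star b = a) :
    ∃ U : Matrix ι ι K, Uᴴ * U = 1 ∧ (∀ i, U i s ≠ 0 ↔ i ∈ S) ∧
      ∀ b, b ∉ S → ∀ i, U i b = if i = b then 1 else 0 := by
  obtain ⟨u, hu, hsum, hus⟩ := pcUnitVec S s hs hS h2 hN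
  set v : ι → K := fun i => (if i = s then 1 else 0) - u i with hv
  set c : K := 1 - star (u s) with hc
  have hc0 : c ≠ 0 := by
    intro h
    apply hus
    have : star (u s) = 1 := by rw [hc] at h; linear_combination -h
    rw [← star_star (u s), this, star_one]
  have hvv : ∑ i, star (v i) * v i = c + star c := by
    have : ∀ i, star (v i) * v i = (if i = s then 1 - u s - star (u s) else 0) + u i * star (u i) := by
      intro i
      simp only [hv]
      split_ifs with h
      · rw [h]; simp; ring
      · simp; ring
    rw [Finset.sum_congr rfl fun i _ => this i, Finset.sum_add_distrib, hsum]
    simp [hc]; ring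
  refine ⟨1 - c⁻¹ • Matrix.vecMulVec v (star v), ?_, ?_, ?_⟩
  · have e1 : (Matrix.vecMulVec v (star v))ᴴ = Matrix.vecMulVec v (star v) := by
      ext i j; simp [Matrix.vecMulVec_apply, mul_comm]
    have e2 : Matrix.vecMulVec v (star v) * Matrix.vecMulVec v (star v) =
        (c + star c) • Matrix.vecMulVec v (star v) := by
      ext i j
      rw [Matrix.mul_apply, Matrix.smul_apply, ← hvv, smul_eq_mul, Finset.sum_mul]
      apply Finset.sum_congr rfl
      intro k _
      simp [Matrix.vecMulVec_apply]; ring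
    rw [Matrix.conjTranspose_sub, Matrix.conjTranspose_one, Matrix.conjTranspose_smul, e1]
    rw [sub_mul, mul_sub, mul_sub, one_mul, one_mul, mul_one, smul_mul_smul_comm, e2, smul_smul]
    have hcs : star c ≠ 0 := by simpa using hc0
    have : star c⁻¹ * c⁻¹ * (c + star c) = star c⁻¹ + c⁻¹ := by
      rw [star_inv₀]; field_simp
    rw [this, add_smul]; abel
  · intro i
    rw [← hu]
    have : (1 - c⁻¹ • Matrix.vecMulVec v (star v)) i s = u i := by
      simp only [Matrix.sub_apply, Matrix.smul_apply, Matrix.vecMulVec_apply, smul_eq_mul,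
        Pi.star_apply, Matrix.one_apply]
      have : star (v s) = c := by simp [hv, hc]
      rw [this]
      have : c⁻¹ * (v i * c) = v i := by field_simp
      rw [this]; simp [hv]
    rw [this]
  · intro b hb i
    have hbs : b ≠ s := fun h => hb (h ▸ hs)
    have : u b = 0 := by by_contra h; exact hb ((hu b).mp h)
    simp [Matrix.vecMulVec_apply, Matrix.one_apply, hv, hbs, this]

lemma pcQ {τ : ι → ι} {g U : Matrix ι ι K} (z0 z1 z2 : ι) (h01 : z1 ≠ z0) (h02 : z2 ≠ z0) (h12 : z2 ≠ z1)
    (hsing : ∀ a a', g a z0 ≠ 0 → g a' z0 ≠ 0 → a = a')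
    (hτ : τ z1 = z0 ∨ τ z1 = z1) (hg : gᴴ * g = 1) (hU : Uᴴ * U = 1)
    (hU0 : ∀ i, U i z0 = if i = z0 then 1 else 0) (hU1 : ∀ i, U i z1 ≠ 0 ↔ i ≠ z0)
    (hS : PCSt τ (Uᴴ * g * U)) : PCD g z0 := by
  obtain ⟨j, hj⟩ := pcColNe hg z0
  by_cases hj0 : j = z0
  · intro i hi
    by_contra h
    exact hi ((hsing i j h hj).trans hj0)
  exfalso
  have hz : ∀ i, i ≠ j → g i z0 = 0 := fun i hi => by
    by_contra h; exact hi (hsing i j h hj)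
  have hgU : ∀ i, (g * U) i z0 = g i z0 := by
    intro i; rw [Matrix.mul_apply]; simp [hU0]
  have hM : ∀ b, (Uᴴ * g * U) b z0 = star (U j b) * g j z0 := by
    intro b
    rw [mul_assoc, Matrix.mul_apply, Finset.sum_eq_single j]
    · rw [hgU]; rfl
    · intro i _ hi; rw [hgU, hz i hi, mul_zero]
    · simp
  have hM1 : (Uᴴ * g * U) z1 z0 ≠ 0 := by
    rw [hM]; exact mul_ne_zero (by simpa using (hU1 j).mpr hj0) hj
  have hM0 : (Uᴴ * g * U) z0 z0 = 0 := by
    rw [hM, hU0, if_neg hj0]; simp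
  have hcol := pcCol (g := g) hU (b := z0) (k := z1) (c := (Uᴴ * g * U) z1 z0) (by
    intro i
    split_ifs with h
    · rw [h]
    · by_contra hne
      have := (hS z1 z0 i z0 hM1 hne).mp (Or.inl rfl)
      rcases this with e | e
      · exact h e
      · rcases hτ with f | f
        · rw [e, f] at hne; exact hne hM0
        · exact h (e.trans f))
  have : ∀ i, i ≠ z0 → g i z0 ≠ 0 := by
    intro i hi
    rw [← hgU, hcol]
    exact mul_ne_zero hM1 ((hU1 i).mpr hi)
  exact h12 (hsing _ _ (this z2 h02) (this z1 h01))

lemma pcStPerm {τ : ι → ι} {g : Matrix ι ι K} (κ : Equiv.Perm ι) (h : PCSt τ (g.submatrix κ κ)) :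
    PCSt (fun x => κ (τ (κ.symm x))) g := by
  intro a b a' b' h1 h2
  have := h (κ.symm a) (κ.symm b) (κ.symm a') (κ.symm b') (by simpa using h1) (by simpa using h2)
  simpa [Equiv.symm_apply_eq] using this

lemma pcStPerm' {τ : ι → ι} {g : Matrix ι ι K} (κ : Equiv.Perm ι) (h : PCSt (fun x => κ (τ (κ.symm x))) g) :
    PCSt τ (g.submatrix κ κ) := by
  intro a b a' b' h1 h2
  have := h _ _ _ _ h1 h2
  simpa using this

lemma pcPermMat (κ : Equiv.Perm ι) (g : Matrix ι ι K) :
    ((1 : Matrix ι ι K).submatrix id κ)ᴴ * g * ((1 : Matrix ι ι K).submatrix id κ) = g.submatrix κ κ := by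
  ext i j
  simp [Matrix.mul_apply, Matrix.one_apply]

lemma pcPermUni (κ : Equiv.Perm ι) :
    ((1 : Matrix ι ι K).submatrix id κ)ᴴ * ((1 : Matrix ι ι K).submatrix id κ) = 1 := by
  have := pcPermMat κ (1 : Matrix ι ι K)
  rw [mul_one] at this
  rw [this]; ext i j; simp [Matrix.one_apply]

lemma pcStH {τ : ι → ι} {g : Matrix ι ι K} (h : PCSt τ g) : PCSt τ gᴴ := by
  intro a b a' b' h1 h2
  exact (h b a b' a' (by simpa using h1) (by simpa using h2)).symm

lemma pcScalar {g : Matrix ι ι K} (c : K) (hD : ∀ j, PCD g j) (hc : ∀ j, g j j = c) :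
    g = c • (1 : Matrix ι ι K) := by
  ext i j
  by_cases h : i = j
  · subst h; simp [hc]
  · simp [hD j i h, h]

end PartC2

section PartC3
variable {K : Type*} [Field K] [StarRing K]

def pcAdj (n s e : ℕ) (j : Fin n) : Fin n :=
  if h : s ≤ j.val ∧ (j.val - s) % 2 = 0 ∧ j.val + 1 < e ∧ j.val + 1 < n then ⟨j.val + 1, h.2.2.2⟩
  else if s < j.val ∧ (j.val - s) % 2 = 1 ∧ j.val < e then ⟨j.val - 1, by omega⟩ else j

lemma pcAdjVal (n s e : ℕ) (j : Fin n) : (pcAdj n s e j).val =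
    if s ≤ j.val ∧ (j.val - s) % 2 = 0 ∧ j.val + 1 < e ∧ j.val + 1 < n then j.val + 1
    else if s < j.val ∧ (j.val - s) % 2 = 1 ∧ j.val < e then j.val - 1 else j.val := by
  unfold pcAdj
  split_ifs <;> rfl

lemma pcAdjInv (n s e : ℕ) (he : e ≤ n) (j : Fin n) : pcAdj n s e (pcAdj n s e j) = j := by
  apply Fin.ext
  rw [pcAdjVal]
  have := pcAdjVal n s e j
  have hj := j.isLt
  split_ifs at this with h1 h2 <;> split_ifs <;> omega

lemma pcTail {n : ℕ} (s : ℕ) (hs : s < n) (τ ρ1 ρ2 : Fin n → Fin n) (hτ : ∀ j, τ j = j ↔ s ≤ j.val)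
    (hρ1 : ∀ x, ρ1 (ρ1 x) = x) (hρ2 : ∀ x, ρ2 (ρ2 x) = x)
    (hρ : ∀ j : Fin n, s ≤ j.val → j.val + 1 < n → (ρ1 j).val = j.val + 1 ∨
      (s < j.val ∧ (ρ2 j).val = j.val + 1))
    (hρs : ∀ j : Fin n, s < j.val → s < (ρ2 j).val)
    (hρs' : ρ2 ⟨s, hs⟩ = ⟨s, hs⟩)
    {U R1 R2 g : Matrix (Fin n) (Fin n) K} (hU : Uᴴ * U = 1)
    (hUs : ∀ i, U i ⟨s, hs⟩ ≠ 0 ↔ i.val ≤ s)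
    (hUb : ∀ b : Fin n, s < b.val → ∀ i, U i b = if i = b then 1 else 0)
    (hR1 : PCRot ρ1 R1) (hR2 : PCRot ρ2 R2) (hg : gᴴ * g = 1)
    (h1 : PCSt τ (R1ᴴ * g * R1)) (h2 : PCSt τ ((U * R2)ᴴ * g * (U * R2)))
    (hD : ∀ j : Fin n, j.val ≤ s → PCD g j) : ∃ c : K, g = c • (1 : Matrix (Fin n) (Fin n) K) := by
  have hh3 : (U * R2)ᴴ * (U * R2) = 1 := by
    rw [Matrix.conjTranspose_mul, mul_assoc, ← mul_assoc Uᴴ, hU, one_mul, hR2.uni]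
  have hcolb : ∀ b : Fin n, s < b.val → ∀ i, (U * R2) i b = R2 i b := by
    intro b hb i
    have : ∀ x, U i x * R2 x b = (if i = x then R2 x b else 0) := by
      intro x
      by_cases hx : R2 x b = 0
      · simp [hx]
      · have hxs : s < x.val := by
          rcases (hR2.supp x b).mp hx with e | e
          · rw [e]; exact hb
          · rw [e]; exact hρs b hb
        rw [hUb x hxs]; simp
    rw [Matrix.mul_apply, Finset.sum_congr rfl fun x _ => this x]
    simp
  have hcols : ∀ i, (U * R2) i ⟨s, hs⟩ = U i ⟨s, hs⟩ := by
    intro i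
    rw [Matrix.mul_apply, Finset.sum_eq_single ⟨s, hs⟩, hR2.fix _ hρs', mul_one]
    · intro x _ hx
      have : R2 x ⟨s, hs⟩ = 0 := by
        by_contra h
        rw [← ne_eq, hR2.supp, hρs'] at h
        tauto
      rw [this, mul_zero]
    · simp
  have main : ∀ k : ℕ, ∀ h : s + k < n, PCD g ⟨s + k, h⟩ ∧ g ⟨s + k, h⟩ ⟨s + k, h⟩ = g ⟨s, hs⟩ ⟨s, hs⟩ := by
    intro k
    induction k with
    | zero => intro h; exact ⟨hD _ le_rfl, rfl⟩
    | succ k ih =>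
      intro h
      obtain ⟨ihD, ihg⟩ := ih (by omega)
      have hτj := (hτ ⟨s + k, by omega⟩).mpr (by simp)
      rcases hρ ⟨s + k, by omega⟩ (by simp) (by simp; omega) with e | ⟨e0, e⟩
      · have e' : ρ1 ⟨s + k, by omega⟩ = ⟨s + (k + 1), h⟩ := Fin.ext e
        have := pcStep hg hR1.uni h1 hR1 hρ1 hτj (by rw [e']; simp) (fun _ => rfl)
          (fun _ _ _ _ => rfl) ihD
        rw [e'] at this
        exact ⟨this.1, this.2.trans ihg⟩
      · have e' : ρ2 ⟨s + k, by omega⟩ = ⟨s + (k + 1), h⟩ := Fin.ext e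
        have := pcStep hg hh3 h2 hR2 hρ2 hτj (by rw [e']; simp) (hcolb _ e0) (by
          intro b hb hne
          have hbs := (hτ b).mp hb
          rcases hbs.lt_or_eq with h | h
          · exact hcolb b h
          · exfalso
            have hb' : b = ⟨s, hs⟩ := Fin.ext h.symm
            rw [hb', hcols, hUs] at hne
            simp at hne e0
            omega) ihD
        rw [e'] at this
        exact ⟨this.1, this.2.trans ihg⟩
  have hDall : ∀ j, PCD g j := by
    intro j
    by_cases h : j.val ≤ s
    · exact hD j h
    · have := (main (j.val - s) (by omega)).1
      convert this using 1
      apply Fin.ext; simp; omega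
  obtain ⟨k, c, hk, hc, hM⟩ := pcLine (pcConjUni hg hh3) h2 ⟨s, hs⟩ ((hτ _).mpr le_rfl)
  have hcol := pcCol hh3 hM
  have hUss : U ⟨s, hs⟩ ⟨s, hs⟩ ≠ 0 := (hUs _).mpr le_rfl
  have hks : k = ⟨s, hs⟩ := by
    have hk' := (hτ k).mp hk
    rcases hk'.lt_or_eq with h | h
    · exfalso
      have e := hcol ⟨s, hs⟩
      rw [pcMulDiag hg (hDall _), hcols, hcolb k h] at e
      have : R2 ⟨s, hs⟩ k = 0 := by
        by_contra hne
        rw [← ne_eq, hR2.supp] at hne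
        rcases hne with e | e
        · rw [← e] at h; simp at h
        · have := hρs k h
          rw [← e] at this; simp at this
      rw [this, mul_zero] at e
      exact mul_ne_zero (pcDne hg (hDall _)) hUss e
    · exact Fin.ext h.symm
  have hle : ∀ i : Fin n, i.val ≤ s → g i i = c := by
    intro i hi
    have e := hcol i
    rw [pcMulDiag hg (hDall _), hks, hcols] at e
    exact mul_right_cancel₀ ((hUs i).mpr hi) e
  refine ⟨c, pcScalar c hDall fun j => ?_⟩
  by_cases h : j.val ≤ s
  · exact hle j h
  · have := (main (j.val - s) (by omega)).2
    rw [hle ⟨s, hs⟩ le_rfl] at this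
    rw [← this]
    congr 1 <;> (apply Fin.ext; simp; omega)

/-- the cycle on `0..t` -/
lemma pcKappa {n : ℕ} (t : ℕ) (ht : t < n) : ∃ κ : Equiv.Perm (Fin n), ∀ j : Fin n, (κ j).val =
    if j.val < t then j.val + 1 else if j.val = t then 0 else j.val := by
  haveI : NeZero n := ⟨by omega⟩
  refine ⟨Fin.cycleRange ⟨t, ht⟩, fun j => ?_⟩
  split_ifs with h1 h2
  · rw [Fin.coe_cycleRange_of_lt h1]
  · rw [Fin.cycleRange_of_eq (Fin.ext h2)]; rfl
  · rw [Fin.cycleRange_of_gt]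
    show t < j.val
    omega

lemma pcWalk {n : ℕ} (s t : ℕ) (hs : s % 2 = 0) (ht : t < n) (hts : t ≤ s) (hsn : s ≤ n)
    (κ : Equiv.Perm (Fin n)) (hκ : ∀ j : Fin n, (κ j).val =
      if j.val < t then j.val + 1 else if j.val = t then 0 else j.val)
    {g : Matrix (Fin n) (Fin n) K} (hg : gᴴ * g = 1) (h0 : PCSt (pcAdj n 0 s) g)
    (h1 : PCSt (pcAdj n 0 s) (g.submatrix κ κ)) (hD : PCD g ⟨0, by omega⟩) :
    ∀ j : ℕ, ∀ h : j ≤ t, PCD g ⟨j, by omega⟩ := by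
  intro j
  induction j with
  | zero => intro _; exact hD
  | succ j ih =>
    intro h
    have ih := ih (by omega)
    by_cases hj : j % 2 = 0
    · have := pcProp hg h0 ih
      convert this using 1
      apply Fin.ext
      rw [pcAdjVal, if_pos]
      simp; omega
    · have := pcProp hg (pcStPerm κ h1) ih
      convert this using 1
      have e1 : κ.symm ⟨j, by omega⟩ = ⟨j - 1, by omega⟩ := by
        rw [Equiv.symm_apply_eq]
        apply Fin.ext
        rw [hκ]; simp; split_ifs <;> omega
      have e2 : pcAdj n 0 s ⟨j - 1, by omega⟩ = ⟨j, by omega⟩ := by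
        apply Fin.ext
        rw [pcAdjVal, if_pos]
        · simp; omega
        · simp; omega
      simp only [e1, e2]
      apply Fin.ext
      rw [hκ, if_pos]
      simp; omega

end PartC3

section PartC4
variable {K : Type*} [Field K] [StarRing K]

def PCGood {n : ℕ} (K : Type*) [Field K] [StarRing K] (τ : Fin n → Fin n) : Prop :=
  ∃ h1 h2 h3 : Matrix (Fin n) (Fin n) K, h1ᴴ * h1 = 1 ∧ h2ᴴ * h2 = 1 ∧ h3ᴴ * h3 = 1 ∧
    ∀ g : Matrix (Fin n) (Fin n) K, gᴴ * g = 1 → PCSt τ g → PCSt τ (h1ᴴ * g * h1) →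
      PCSt τ (h2ᴴ * g * h2) → PCSt τ (h3ᴴ * g * h3) → ∃ c : K, g = c • (1 : Matrix (Fin n) (Fin n) K)

lemma pcAdjFix (n s : ℕ) (hs : s % 2 = 0) (hsn : s ≤ n) (j : Fin n) :
    pcAdj n 0 s j = j ↔ s ≤ j.val := by
  rw [Fin.ext_iff, pcAdjVal]
  have := j.isLt
  split_ifs <;> omega

lemma pcF01 {n : ℕ} (hn : 3 ≤ n) (s : ℕ) (hs : s % 2 = 0) (hsn : s < n) (h2 : (2 : K) ≠ 0) (h3 : (3 : K) ≠ 0)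
    (hN : ∀ a : K, star a = a → ∃ b, b * star b = a) : PCGood K (pcAdj n 0 s) := by
  have inv1 := pcAdjInv n s n le_rfl
  have inv2 := pcAdjInv n (s + 1) n le_rfl
  obtain ⟨R1, hR1⟩ := pcRotExists (pcAdj n s n) inv1 h2 h3 hN
  obtain ⟨R2, hR2⟩ := pcRotExists (pcAdj n (s + 1) n) inv2 h2 h3 hN
  obtain ⟨U, hU, hUs, hUb⟩ : ∃ U : Matrix (Fin n) (Fin n) K, Uᴴ * U = 1 ∧
      (∀ i, U i ⟨s, hsn⟩ ≠ 0 ↔ i.val ≤ s) ∧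
      (∀ b : Fin n, s < b.val → ∀ i, U i b = if i = b then 1 else 0) := by
    by_cases h0 : s = 0
    · subst h0
      refine ⟨1, by simp, ?_, fun b _ i => by rw [Matrix.one_apply]⟩
      intro i
      rw [Matrix.one_apply]
      simp [Fin.ext_iff]
    · obtain ⟨U, e1, e2, e3⟩ := pcUExists (Finset.univ.filter fun i : Fin n => i.val ≤ s) ⟨s, hsn⟩ (by simp)
        (by
          have : ({⟨0, by omega⟩, ⟨1, by omega⟩} : Finset (Fin n)) ⊆
              Finset.univ.filter fun i : Fin n => i.val ≤ s := by
            intro i hi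
            simp at hi
            rcases hi with rfl | rfl <;> simp <;> omega
          have h := Finset.card_le_card this
          rw [Finset.card_pair (by simp [Fin.ext_iff])] at h
          exact h) h2 hN
      exact ⟨U, e1, by simpa using e2, fun b hb => e3 b (by simpa using hb)⟩
  have hh3 : (U * R2)ᴴ * (U * R2) = 1 := by
    rw [Matrix.conjTranspose_mul, mul_assoc, ← mul_assoc Uᴴ, hU, one_mul, hR2.uni]
  have tail : ∀ g : Matrix (Fin n) (Fin n) K, gᴴ * g = 1 → PCSt (pcAdj n 0 s) (R1ᴴ * g * R1) →
      PCSt (pcAdj n 0 s) ((U * R2)ᴴ * g * (U * R2)) → (∀ j : Fin n, j.val ≤ s → PCD g j) →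
      ∃ c : K, g = c • (1 : Matrix (Fin n) (Fin n) K) := by
    intro g hg k1 k2 hD
    refine pcTail s hsn (pcAdj n 0 s) (pcAdj n s n) (pcAdj n (s + 1) n) (pcAdjFix n s hs hsn.le) inv1 inv2
      ?_ ?_ ?_ hU hUs hUb hR1 hR2 hg k1 k2 hD
    · intro j hj hj'
      rw [pcAdjVal, pcAdjVal]
      split_ifs <;> omega
    · intro j hj
      rw [pcAdjVal]
      split_ifs <;> omega
    · apply Fin.ext
      rw [pcAdjVal]
      simp
  by_cases h0 : s = 0
  · subst h0
    obtain ⟨V, e1, e2, e3⟩ := pcUExists (K := K) (Finset.univ.filter fun i : Fin n => i ≠ ⟨0, hsn⟩) ⟨1, by omega⟩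
      (by simp)
      (by
        have : ({⟨1, by omega⟩, ⟨2, by omega⟩} : Finset (Fin n)) ⊆
            Finset.univ.filter fun i : Fin n => i ≠ ⟨0, hsn⟩ := by
          intro i hi
          simp at hi
          rcases hi with rfl | rfl <;> simp
        have h := Finset.card_le_card this
        rw [Finset.card_pair (by simp [Fin.ext_iff])] at h
        exact h) h2 hN
    refine ⟨V, R1, U * R2, e1, hR1.uni, hh3, ?_⟩
    intro g hg k0 k1 k2 k3
    apply tail g hg k2 k3
    have hfix := pcAdjFix n 0 hs hsn.le
    have hD0 : PCD g ⟨0, hsn⟩ := by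
      have l1 : 1 < n := by omega
      have l2 : 2 < n := by omega
      refine pcQ ⟨0, hsn⟩ ⟨1, l1⟩ ⟨2, l2⟩ (by simp) (by simp) (by simp) ?_
        (Or.inr ((hfix _).mpr (Nat.zero_le _))) hg e1 (fun i => e3 ⟨0, hsn⟩ (by simp) i)
        (by simpa using e2) k1
      intro a a' ha ha'
      have := (k0 a _ a' _ ha ha').mp (Or.inl rfl)
      rw [(hfix a).mpr (Nat.zero_le _)] at this
      tauto
    intro j hj
    have : j = ⟨0, hsn⟩ := Fin.ext (by simpa using hj)
    rwa [this]
  · obtain ⟨κ, hκ⟩ := pcKappa s hsn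
    refine ⟨_, R1, U * R2, pcPermUni κ, hR1.uni, hh3, ?_⟩
    intro g hg k0 k1 k2 k3
    rw [pcPermMat] at k1
    apply tail g hg k2 k3
    have hfix := pcAdjFix n s hs hsn.le
    have hgu : (g.submatrix κ κ)ᴴ * (g.submatrix κ κ) = 1 := by
      rw [← pcPermMat]; exact pcConjUni hg (pcPermUni κ)
    have hκs : κ ⟨s, hsn⟩ = ⟨0, by omega⟩ := by
      apply Fin.ext; rw [hκ]; simp
    have hD0 : PCD g ⟨0, by omega⟩ := by
      obtain ⟨k, c, hk, hc, hM⟩ := pcLine hgu k1 ⟨s, hsn⟩ ((hfix _).mpr le_rfl)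
      have hcol : ∀ i, g i ⟨0, by omega⟩ = if i = κ k then c else 0 := by
        intro i
        have := hM (κ.symm i)
        rw [Matrix.submatrix_apply, hκs, Equiv.apply_symm_apply] at this
        rw [this]
        simp [Equiv.symm_apply_eq]
      have hk' := (hfix k).mp hk
      rcases hk'.lt_or_eq with h | h
      · exfalso
        have hkk : κ k = k := by
          apply Fin.ext; rw [hκ]; split_ifs <;> omega
        obtain ⟨l, d, hl, hd, hM'⟩ := pcLine (M := gᴴ) (by
          rw [Matrix.conjTranspose_conjTranspose]; exact pcFlip hg) (pcStH k0) k ((hfix k).mpr h.le)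
        have e := hM' ⟨0, by omega⟩
        rw [Matrix.conjTranspose_apply, hcol, hkk, if_pos rfl] at e
        by_cases hl0 : (⟨0, by omega⟩ : Fin n) = l
        · have := (hfix l).mp hl
          rw [← hl0] at this
          simp at this
          exact h0 this
        · rw [if_neg hl0] at e
          simp at e
          exact hc e
      · have hkk : κ k = ⟨0, by omega⟩ := by
          rw [← hκs]; congr 1; exact Fin.ext h.symm
        intro i hi
        rw [hcol, hkk, if_neg hi]
    intro j hj
    exact pcWalk s s hs hsn le_rfl hsn.le κ hκ hg k0 k1 hD0 j.val hj

lemma pcF2 {n : ℕ} (hn : 4 ≤ n) (hs : n % 2 = 0) (h2 : (2 : K) ≠ 0) (h3 : (3 : K) ≠ 0)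
    (hN : ∀ a : K, star a = a → ∃ b, b * star b = a) : PCGood K (pcAdj n 0 n) := by
  set z0 : Fin n := ⟨0, by omega⟩ with hz0
  set z1 : Fin n := ⟨1, by omega⟩ with hz1
  set z2 : Fin n := ⟨2, by omega⟩ with hz2
  have n01 : z1 ≠ z0 := by simp [hz0, hz1]
  have n02 : z2 ≠ z0 := by simp [hz0, hz2]
  have n12 : z2 ≠ z1 := by simp [hz1, hz2]
  obtain ⟨κ, hκ⟩ := pcKappa (n := n) (n - 1) (by omega)
  obtain ⟨U, hU, hU1, hUb⟩ := pcUExists (K := K) (Finset.univ.filter fun i : Fin n => i ≠ z0) z1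
      (by simpa using n01)
      (by
        have : ({z1, z2} : Finset (Fin n)) ⊆
            Finset.univ.filter fun i : Fin n => i ≠ z0 := by
          intro i hi
          simp at hi
          rcases hi with rfl | rfl <;> simp [n01, n02]
        have h := Finset.card_le_card this
        rw [Finset.card_pair n12.symm] at h
        exact h) h2 hN
  have hU0 := hUb z0 (by simp)
  have hU1 : ∀ i, U i z1 ≠ 0 ↔ i ≠ z0 := by simpa using hU1
  obtain ⟨R, hR⟩ := pcRotExists (K := K) (Equiv.swap z0 z2) (fun x => Equiv.swap_apply_self _ _ x) h2 h3 hN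
  refine ⟨_, R, U, pcPermUni κ, hR.uni, hU, ?_⟩
  intro g hg k0 k1 k2 k3
  rw [pcPermMat] at k1
  have t0 : pcAdj n 0 n z0 = z1 := by
    apply Fin.ext; rw [pcAdjVal, if_pos]
    simp [hz0]; omega
  have t1 : pcAdj n 0 n z1 = z0 := by rw [← t0, pcAdjInv n 0 n le_rfl]
  have hD0 : PCD g z0 := by
    refine pcQ z0 z1 z2 n01 n02 n12 ?_ (Or.inl t1) hg hU hU0 hU1 k3
    intro a a' ha ha'
    by_contra hne
    have e1 := (k0 a _ a' _ ha ha').mp (Or.inl rfl)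
    have e2 := (pcStPerm κ k1 a _ a' _ ha ha').mp (Or.inl rfl)
    rcases e1 with e1 | e1
    · exact hne e1.symm
    rcases e2 with e2 | e2
    · exact hne e2.symm
    obtain ⟨b, rfl⟩ := κ.surjective a
    simp only [Equiv.symm_apply_apply] at e2
    rw [e1] at e2
    have e3 := congrArg Fin.val e2
    have f1 := pcAdjVal n 0 n (κ b)
    have f2 := pcAdjVal n 0 n b
    have f3 := hκ (pcAdj n 0 n b)
    have f4 := hκ b
    have := b.isLt
    rw [e3] at f1
    rw [f3] at f1
    generalize (pcAdj n 0 n b).val = X at *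
    generalize (κ b).val = Y at *
    split_ifs at f2 f4 f1 <;> omega
  have hD : ∀ j, PCD g j := fun j =>
    pcWalk n (n - 1) hs (by omega) (by omega) le_rfl κ hκ hg k0 k1 hD0 j.val (by omega)
  -- constant off z0
  obtain ⟨c, hc⟩ : ∃ c : K, ∀ i, i ≠ z0 → g i i = c := by
    have m00 : (Uᴴ * g * U) z0 z0 ≠ 0 := by
      have : (Uᴴ * g * U) z0 z0 = g z0 z0 := by
        rw [mul_assoc, Matrix.mul_apply, Finset.sum_eq_single z0, pcMulDiag hg hD0, hU0,
          Matrix.conjTranspose_apply, hU0]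
        · simp
        · intro i _ hi; rw [Matrix.conjTranspose_apply, hU0, if_neg hi]; simp
        · simp
      rw [this]; exact pcDne hg hD0
    have m01 : (Uᴴ * g * U) z0 z1 = 0 := by
      have hz : U z0 z1 = 0 := by by_contra h; exact (hU1 z0).mp h rfl
      rw [mul_assoc, Matrix.mul_apply]
      apply Finset.sum_eq_zero
      intro i _
      by_cases hi : i = z0
      · rw [hi, pcMulDiag hg hD0, hz]; simp
      · rw [Matrix.conjTranspose_apply, hU0, if_neg hi]; simp
    have hcol := pcCol (g := g) hU (b := z1) (k := z1) (c := (Uᴴ * g * U) z1 z1) (by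
      intro i
      split_ifs with h
      · rw [h]
      · by_contra hne
        have := (k3 z0 z0 i z1 m00 hne).mp (Or.inr t0.symm)
        rw [t0] at this
        rcases this with e | e
        · rw [e] at hne; exact hne m01
        · exact h e)
    refine ⟨(Uᴴ * g * U) z1 z1, fun i hi => ?_⟩
    have := hcol i
    rw [pcMulDiag hg (hD i)] at this
    exact mul_right_cancel₀ ((hU1 i).mpr hi) this
  have h02 : g z0 z0 = g z2 z2 := by
    have hz : ∀ i, i ≠ z0 → i ≠ z2 → (Rᴴ * g * R) i z0 = 0 := by
      intro i hi hi'
      rw [mul_assoc, Matrix.mul_apply]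
      apply Finset.sum_eq_zero
      intro x _
      rw [pcMulDiag hg (hD x), Matrix.conjTranspose_apply]
      by_cases h : R x i = 0
      · rw [h]; simp
      · have h := (hR.supp _ _).mp h
        rw [Equiv.swap_apply_of_ne_of_ne hi hi', or_self] at h
        have : R x z0 = 0 := by
          by_contra h'
          have h' := (hR.supp _ _).mp h'
          rw [Equiv.swap_apply_left, h] at h'
          tauto
        rw [this]; simp
    obtain ⟨k, hk⟩ := pcColNe (pcConjUni hg hR.uni) z0
    have hk02 : k = z0 ∨ k = z2 := by
      by_contra h
      push Not at h
      exact hk (hz k h.1 h.2)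
    have hcol := pcCol (g := g) hR.uni (b := z0) (k := k) (c := (Rᴴ * g * R) k z0) (by
      intro i
      split_ifs with h
      · rw [h]
      · by_contra hne
        have := (k2 k z0 i z0 hk hne).mp (Or.inl rfl)
        rcases this with e | e
        · exact h e
        · have hi02 : i = z0 ∨ i = z2 := by
            by_contra h'
            push Not at h'
            exact hne (hz i h'.1 h'.2)
          have t2 : pcAdj n 0 n z2 ≠ z0 := by
            intro h'
            have := congrArg (pcAdj n 0 n) h'
            rw [pcAdjInv n 0 n le_rfl, t0] at this
            exact n12 this
          rcases hk02 with rfl | rfl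
          · rw [t0] at e
            rcases hi02 with f | f
            · exact n01 (e.symm.trans f)
            · exact n12 (f.symm.trans e)
          · rcases hi02 with f | f
            · exact t2 (e.symm.trans f)
            · exact h f)
    have e1 := hcol z0
    have e2 := hcol z2
    rw [pcMulDiag hg (hD _)] at e1 e2
    have := hR.eq z0 k (g z0 z0) (g z2 z2) _ (by simpa using n02) (by simpa using hk02)
      (pcDnorm hg (hD _)) (pcDnorm hg (hD _)) e1 (by simpa using e2)
    exact this
  refine ⟨c, pcScalar c hD fun j => ?_⟩
  by_cases hj : j = z0
  · rw [hj, h02]; exact hc z2 n02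
  · exact hc j hj

lemma pcConj {n : ℕ} {τ : Fin n → Fin n} (κ : Equiv.Perm (Fin n)) (h : PCGood K τ) :
    PCGood K (fun x => κ (τ (κ.symm x))) := by
  obtain ⟨h1, h2, h3, u1, u2, u3, H⟩ := h
  have hu : ∀ h : Matrix (Fin n) (Fin n) K, hᴴ * h = 1 →
      (h.submatrix κ.symm κ.symm)ᴴ * (h.submatrix κ.symm κ.symm) = 1 := by
    intro h hh
    rw [Matrix.conjTranspose_submatrix, Matrix.submatrix_mul_equiv, hh, Matrix.submatrix_one_equiv]
  have hc : ∀ h g : Matrix (Fin n) (Fin n) K,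
      ((h.submatrix κ.symm κ.symm)ᴴ * g * (h.submatrix κ.symm κ.symm)).submatrix κ κ =
      hᴴ * (g.submatrix κ κ) * h := by
    intro h g
    rw [Matrix.conjTranspose_submatrix]
    have : g = (g.submatrix κ κ).submatrix κ.symm κ.symm := by simp
    conv_lhs => rw [this, Matrix.submatrix_mul_equiv, Matrix.submatrix_mul_equiv]
    simp
  refine ⟨_, _, _, hu h1 u1, hu h2 u2, hu h3 u3, ?_⟩
  intro g hg k0 k1 k2 k3
  obtain ⟨c, e⟩ := H (g.submatrix κ κ) (by
    rw [← pcPermMat]; exact pcConjUni hg (pcPermUni κ)) (pcStPerm' κ k0)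
    (by rw [← hc]; exact pcStPerm' κ k1) (by rw [← hc]; exact pcStPerm' κ k2)
    (by rw [← hc]; exact pcStPerm' κ k3)
  refine ⟨c, ?_⟩
  have : g = (g.submatrix κ κ).submatrix κ.symm κ.symm := by simp
  rw [this, e]
  ext i j
  simp [Matrix.one_apply]

lemma pcInvCycle {n : ℕ} (σ : Equiv.Perm (Fin n)) (h : σ * σ = 1) :
    σ.cycleType = Multiset.replicate (σ.support.card / 2) 2 := by
  have h2 : ∀ x ∈ σ.cycleType, x = 2 := by
    intro x hx
    have h1 := Equiv.Perm.two_le_of_mem_cycleType hx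
    have h3 := Equiv.Perm.dvd_of_mem_cycleType hx
    have h4 : orderOf σ ∣ 2 := orderOf_dvd_of_pow_eq_one (by rw [pow_two, h])
    have := Nat.le_of_dvd (by norm_num) (h3.trans h4)
    omega
  have e := Multiset.eq_replicate_card.mpr h2
  have hsum := σ.sum_cycleType
  rw [e, Multiset.sum_replicate, smul_eq_mul] at hsum
  rw [e, ← hsum]
  congr 1
  simp

lemma pcBase {n : ℕ} (hn : 3 ≤ n) (τ : Fin n → Fin n) (hτ : ∀ x, τ (τ x) = x) (h2 : (2 : K) ≠ 0) (h3 : (3 : K) ≠ 0)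
    (hN : ∀ a : K, star a = a → ∃ b, b * star b = a) : PCGood K τ := by
  set σ : Equiv.Perm (Fin n) := ⟨τ, τ, hτ, hτ⟩ with hσ
  have hσσ : σ * σ = 1 := by ext x; simp [hσ, hτ]
  have hc := pcInvCycle σ hσσ
  have hsum := σ.sum_cycleType
  rw [hc, Multiset.sum_replicate, smul_eq_mul] at hsum
  set s := σ.support.card with hs
  have hs2 : s % 2 = 0 := by omega
  have hsn : s ≤ n := by
    have := Finset.card_le_univ σ.support
    rwa [Fintype.card_fin] at this
  set σ' : Equiv.Perm (Fin n) := ⟨pcAdj n 0 s, pcAdj n 0 s, pcAdjInv n 0 s hsn, pcAdjInv n 0 s hsn⟩ with hσ'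
  have hσσ' : σ' * σ' = 1 := by ext x; simp [hσ', pcAdjInv n 0 s hsn]
  have hs' : σ'.support.card = s := by
    have : σ'.support = Finset.univ.filter (fun i : Fin n => i.val < s) := by
      ext i
      rw [Equiv.Perm.mem_support]
      have : σ' i = pcAdj n 0 s i := rfl
      rw [this, ne_eq, pcAdjFix n s hs2 hsn]
      simp
    rw [this, Fin.card_filter_val_lt]
    omega
  have hcc : σ'.cycleType = σ.cycleType := by
    rw [hc, pcInvCycle σ' hσσ', hs']
  rw [← Equiv.Perm.isConj_iff_cycleType_eq, isConj_iff] at hcc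
  obtain ⟨κ, hκ⟩ := hcc
  have : τ = fun x => κ (pcAdj n 0 s (κ.symm x)) := by
    funext x
    have := congrArg (fun e : Equiv.Perm (Fin n) => e x) hκ
    exact this.symm
  rw [this]
  apply pcConj
  rcases hsn.lt_or_eq with h | h
  · exact pcF01 hn s hs2 h h2 h3 hN
  · rw [h] at hs2 ⊢
    exact pcF2 (by omega) hs2 h2 h3 hN

end PartC4

section PartB1
variable {K : Type*} [Field K] [StarRing K] {ι : Type*} [Fintype ι] [DecidableEq ι]
    {Γ : Type*} [Group Γ]

structure PBG (θ : Γ →* Matrix ι ι K) : Prop where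
  uni : ∀ g, (θ g)ᴴ = θ g⁻¹
  two : (2 : K) ≠ 0
  fin : ∀ g, ∃ N : ℕ, (N : K) ≠ 0 ∧ (θ g) ^ N = 1
  refl : ∀ i, ∃ r, θ r = 1 + (-2 : K) • Matrix.single i i (1 : K)
  norm : ∀ a : K, star a = a → ∃ b, b * star b = a

structure PBFam (θ : Γ →* Matrix ι ι K) (S : Set (Matrix ι ι K)) : Prop where
  sa : ∀ t ∈ S, tᴴ = t
  idem : ∀ t ∈ S, t * t = t
  comm : ∀ s ∈ S, ∀ t ∈ S, s * t = t * s
  inv : ∀ g, ∀ t ∈ S, θ g * t * θ g⁻¹ ∈ S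

lemma pbConjMul (θ : Γ →* Matrix ι ι K) (g : Γ) (s t : Matrix ι ι K) :
    θ g * s * θ g⁻¹ * (θ g * t * θ g⁻¹) = θ g * (s * t) * θ g⁻¹ := by
  calc θ g * s * θ g⁻¹ * (θ g * t * θ g⁻¹) = θ g * s * (θ g⁻¹ * θ g) * t * θ g⁻¹ := by
        simp only [mul_assoc]
    _ = _ := by rw [paInvMul]; simp only [mul_assoc, one_mul]

lemma pbConjConj (θ : Γ →* Matrix ι ι K) (g h : Γ) (t : Matrix ι ι K) :
    θ g * (θ h * t * θ h⁻¹) * θ g⁻¹ = θ (g * h) * t * θ (g * h)⁻¹ := by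
  rw [_root_.mul_inv_rev, map_mul, map_mul]; simp only [mul_assoc]

lemma pbConjInv (θ : Γ →* Matrix ι ι K) (g : Γ) (t : Matrix ι ι K) :
    θ g * (θ g⁻¹ * t * θ g⁻¹⁻¹) * θ g⁻¹ = t := by
  rw [pbConjConj, mul_inv_cancel, inv_one, map_one, one_mul, mul_one]

lemma pbConjInv' (θ : Γ →* Matrix ι ι K) (g : Γ) (t : Matrix ι ι K) :
    θ g⁻¹ * (θ g * t * θ g⁻¹) * θ g = t := by
  have := pbConjInv θ g⁻¹ t
  simpa using this

variable {θ : Γ →* Matrix ι ι K}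

lemma pbConjStar (h : PBG θ) (g : Γ) (t : Matrix ι ι K) (ht : tᴴ = t) :
    (θ g * t * θ g⁻¹)ᴴ = θ g * t * θ g⁻¹ := by
  rw [Matrix.conjTranspose_mul, Matrix.conjTranspose_mul, ht, h.uni, h.uni, inv_inv, mul_assoc]

lemma pbAbsorb {S T : Set (Matrix ι ι K)} (hS : Maximal (PBFam θ) S) (hT : PBFam θ T)
    (hST : ∀ s ∈ S, ∀ t ∈ T, s * t = t * s) : T ⊆ S := by
  have : PBFam θ (S ∪ T) := by
    constructor
    · rintro t (h | h)
      exacts [hS.prop.sa t h, hT.sa t h]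
    · rintro t (h | h)
      exacts [hS.prop.idem t h, hT.idem t h]
    · rintro s (h | h) t (h' | h')
      · exact hS.prop.comm s h t h'
      · exact hST s h t h'
      · exact (hST t h' s h).symm
      · exact hT.comm s h t h'
    · rintro g t (h | h)
      · exact Or.inl (hS.prop.inv g t h)
      · exact Or.inr (hT.inv g t h)
  exact Set.subset_union_right.trans (hS.le_of_ge this Set.subset_union_left)

lemma pbMaxMul (h : PBG θ) {S : Set (Matrix ι ι K)} (hS : Maximal (PBFam θ) S) (u v : Matrix ι ι K) (hu : u ∈ S)
    (hv : v ∈ S) : u * v ∈ S := by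
  have hP := hS.prop
  refine pbAbsorb hS (T := {t | ∃ u ∈ S, ∃ v ∈ S, t = u * v}) ?_ ?_ ⟨u, hu, v, hv, rfl⟩
  · constructor
    · rintro t ⟨u, hu, v, hv, rfl⟩
      rw [Matrix.conjTranspose_mul, hP.sa u hu, hP.sa v hv, hP.comm u hu v hv]
    · rintro t ⟨u, hu, v, hv, rfl⟩
      calc u * v * (u * v) = u * (v * u) * v := by simp only [mul_assoc]
        _ = (u * u) * (v * v) := by rw [hP.comm v hv u hu]; simp only [mul_assoc]
        _ = _ := by rw [hP.idem u hu, hP.idem v hv]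
    · rintro t ⟨u, hu, v, hv, rfl⟩ t' ⟨u', hu', v', hv', rfl⟩
      have e1 : Commute u u' := hP.comm u hu u' hu'
      have e2 : Commute u v' := hP.comm u hu v' hv'
      have e3 : Commute v u' := hP.comm v hv u' hu'
      have e4 : Commute v v' := hP.comm v hv v' hv'
      exact (e1.mul_right e2).mul_left (e3.mul_right e4)
    · rintro g t ⟨u, hu, v, hv, rfl⟩
      exact ⟨_, hP.inv g u hu, _, hP.inv g v hv, (pbConjMul θ g u v).symm⟩
  · rintro s hs t ⟨u, hu, v, hv, rfl⟩
    have e1 : Commute s u := hP.comm s hs u hu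
    have e2 : Commute s v := hP.comm s hs v hv
    exact e1.mul_right e2

def PBAtom (S : Set (Matrix ι ι K)) (w : Matrix ι ι K) : Prop :=
  w ∈ S ∧ w ≠ 0 ∧ ∀ u ∈ S, u * w = 0 ∨ u * w = w

lemma pbAtomOrth {S : Set (Matrix ι ι K)} (hS : PBFam θ S) {w w' : Matrix ι ι K} (hw : PBAtom S w)
    (hw' : PBAtom S w') (hne : w * w' ≠ 0) : w = w' := by
  have h1 := (hw'.2.2 w hw.1).resolve_left hne
  have h2 := (hw.2.2 w' hw'.1).resolve_left (by rwa [hS.comm w' hw'.1 w hw.1])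
  rw [hS.comm w hw.1 w' hw'.1, h2] at h1
  exact h1

lemma pbAtomConj {S : Set (Matrix ι ι K)} (hS : PBFam θ S) {w : Matrix ι ι K} (hw : PBAtom S w) (g : Γ) :
    PBAtom S (θ g * w * θ g⁻¹) := by
  refine ⟨hS.inv g w hw.1, ?_, ?_⟩
  · intro h0
    have := pbConjInv' θ g w
    rw [h0] at this
    simp at this
    exact hw.2.1 this.symm
  · intro u hu
    have e : u * (θ g * w * θ g⁻¹) = θ g * ((θ g⁻¹ * u * θ g⁻¹⁻¹) * w) * θ g⁻¹ := by
      rw [← pbConjMul, pbConjInv]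
    rcases hw.2.2 _ (hS.inv g⁻¹ u hu) with h | h
    · left; rw [e, h]; simp
    · right; rw [e, h]

lemma pbAtomBelow [Finite K] (h : PBG θ) {S : Set (Matrix ι ι K)} (hS : Maximal (PBFam θ) S) (x : Matrix ι ι K)
    (hx : x ∈ S) (hx0 : x ≠ 0) : ∃ w, PBAtom S w ∧ w * x = w := by
  have hP := hS.prop
  haveI : Finite (Matrix ι ι K) := inferInstanceAs (Finite (ι → ι → K))
  have key : ∀ m : ℕ, ∀ w ∈ S, w ≠ 0 → w * x = w → Set.ncard {u | u ∈ S ∧ u * w = u} = m →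
      ∃ w, PBAtom S w ∧ w * x = w := by
    intro m
    induction m using Nat.strong_induction_on with
    | _ m ih =>
      intro w hw hw0 hwx hm
      by_cases hat : PBAtom S w
      · exact ⟨w, hat, hwx⟩
      · have : ∃ u ∈ S, u * w ≠ 0 ∧ u * w ≠ w := by
          by_contra hc
          apply hat
          refine ⟨hw, hw0, fun u hu => ?_⟩
          by_contra hc'
          push Not at hc'
          exact hc ⟨u, hu, hc'⟩
        obtain ⟨u, hu, h1, h2⟩ := this
        refine ih _ ?_ (u * w) (pbMaxMul h hS u w hu hw) h1 (by rw [mul_assoc, hwx]) rfl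
        rw [← hm]
        apply Set.ncard_lt_ncard _ (Set.toFinite _)
        constructor
        · rintro v ⟨hv, hvw⟩
          refine ⟨hv, ?_⟩
          conv_lhs => rw [← hvw]
          rw [mul_assoc, mul_assoc, hP.idem w hw, hvw]
        · intro hsub
          have := (hsub ⟨hw, hP.idem w hw⟩ : w ∈ {v | v ∈ S ∧ v * (u * w) = v}).2
          rw [← mul_assoc, hP.comm w hw u hu, mul_assoc, hP.idem w hw] at this
          exact h2 this
  exact key _ x hx hx0 (hP.idem x hx) rfl

lemma pbSum [Finite K] (h : PBG θ) {S : Set (Matrix ι ι K)} (hS : Maximal (PBFam θ) S)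
    [Fintype {w // PBAtom S w}] : ∑ w : {w // PBAtom S w}, (w : Matrix ι ι K) = 1 := by
  classical
  have hP := hS.prop
  set e := ∑ w : {w // PBAtom S w}, (w : Matrix ι ι K) with he
  have hwe : ∀ w, PBAtom S w → w * e = w := by
    intro w hw
    rw [he, Finset.mul_sum, Finset.sum_eq_single ⟨w, hw⟩]
    · exact hP.idem w hw.1
    · intro b _ hb
      by_contra hne
      exact hb (Subtype.ext (pbAtomOrth hP hw b.2 hne).symm)
    · simp
  have hee : e * e = e := by
    conv_lhs => lhs; rw [he]
    rw [Finset.sum_mul, he]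
    exact Finset.sum_congr rfl fun w _ => hwe w w.2
  have hes : eᴴ = e := by
    rw [he, Matrix.conjTranspose_sum]
    exact Finset.sum_congr rfl fun w _ => hP.sa w w.2.1
  have hce : ∀ g, θ g * e * θ g⁻¹ = e := by
    intro g
    rw [he, Finset.mul_sum, Finset.sum_mul]
    refine Fintype.sum_bijective (fun w : {w // PBAtom S w} => ⟨θ g * w * θ g⁻¹, pbAtomConj hP w.2 g⟩)
      ⟨?_, ?_⟩ _ _ fun w => rfl
    · intro a b hab
      have := congrArg (fun x : {w // PBAtom S w} => θ g⁻¹ * (x : Matrix ι ι K) * θ g) hab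
      simp only [pbConjInv'] at this
      exact Subtype.ext this
    · intro b
      exact ⟨⟨_, pbAtomConj hP b.2 g⁻¹⟩, Subtype.ext (pbConjInv θ g b)⟩
  have h1e : 1 - e ∈ S := by
    refine pbAbsorb hS (T := {1 - e}) ?_ ?_ rfl
    · constructor
      · rintro t rfl; rw [Matrix.conjTranspose_sub, hes, Matrix.conjTranspose_one]
      · rintro t rfl; rw [mul_sub, sub_mul, sub_mul, hee]; simp
      · rintro s rfl t rfl; rfl
      · rintro g t rfl
        rw [Set.mem_singleton_iff, mul_sub, sub_mul, hce, mul_one, paMulInv]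
    · rintro s hs t rfl
      rw [mul_sub, sub_mul, mul_one, one_mul, he, Finset.mul_sum, Finset.sum_mul]
      congr 1
      exact Finset.sum_congr rfl fun w _ => hP.comm s hs w w.2.1
  by_contra hne
  obtain ⟨w, hw, hw'⟩ := pbAtomBelow h hS (1 - e) h1e (by
    intro h0; exact hne (sub_eq_zero.mp h0).symm)
  rw [mul_sub, hwe w hw, mul_one, sub_self] at hw'
  exact hw.2.1 hw'.symm

end PartB1

section PartB2
variable {K : Type*} [Field K] [StarRing K] {ι : Type*} [Fintype ι] [DecidableEq ι]
    {Γ : Type*} [Group Γ] {θ : Γ →* Matrix ι ι K}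

lemma pbSwap {S : Set (Matrix ι ι K)} (hS : PBFam θ S) {w : Matrix ι ι K} (hw : PBAtom S w) (g : Γ) :
    θ g * w = w * θ g ∨ w * θ g * w = 0 := by
  by_cases h0 : w * (θ g * w * θ g⁻¹) = 0
  · right
    have : w * (θ g * w * θ g⁻¹) * θ g = w * θ g * w := by
      simp only [mul_assoc, paInvMul, mul_one]
    rw [← this, h0, zero_mul]
  · left
    have e := pbAtomOrth hS hw (pbAtomConj hS hw g) h0
    conv_rhs => rw [e]
    simp only [mul_assoc, paInvMul, mul_one]

def PBN (w : Matrix ι ι K) : Prop :=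
  ∃ k : ℕ, (k = 1 ∨ k = 2) ∧ ∃ N : Matrix ι (Fin k) K, Nᴴ * N = 1 ∧ N * Nᴴ = w

lemma pbLine (h : PBG θ) {w : Matrix ι ι K} (hw0 : w ≠ 0) (hsa : wᴴ = w) (hid : w * w = w) (i : ι)
    (hi : w * (1 + (-2 : K) • Matrix.single i i (1 : K)) * w = 0) : PBN w := by
  have hent : ∀ a b, w a b = 2 * (w a i * w i b) := by
    intro a b
    have e : w * (1 + (-2 : K) • Matrix.single i i (1 : K)) * w
        = w - (2 : K) • (w * Matrix.single i i (1 : K) * w) := by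
      rw [mul_add, add_mul, mul_one, hid]
      rw [Matrix.mul_smul, Matrix.smul_mul, neg_smul, sub_eq_add_neg]
    rw [e] at hi
    have := congrFun (congrFun (sub_eq_zero.mp hi) a) b
    rw [this, Matrix.smul_apply, Matrix.mul_apply, Finset.sum_eq_single i]
    · simp
    · intro c _ hc
      rw [Matrix.mul_single_apply_of_ne _ _ _ _ _ hc, zero_mul]
    · simp
  have hst : ∀ a b, star (w b a) = w a b := fun a b => congrFun (congrFun hsa a) b
  have hii : w i i ≠ 0 := by
    intro h0
    apply hw0
    have h1 : ∀ a, w a i = 0 := by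
      intro a; rw [hent a i, h0]; ring
    ext a b
    rw [hent a b, h1]; simp
  have hii2 : 2 * w i i = 1 := by
    have := hent i i
    apply mul_right_cancel₀ hii
    rw [one_mul]; conv_rhs => rw [this]
    ring
  obtain ⟨c, hc⟩ := h.norm 2 (star_ofNat 2)
  refine ⟨1, Or.inl rfl, Matrix.of fun a _ => c * w a i, ?_, ?_⟩
  · ext x y
    obtain rfl : x = y := Subsingleton.elim _ _
    rw [Matrix.mul_apply, Matrix.one_apply_eq]
    have : ∀ a, ((Matrix.of fun a (_ : Fin 1) => c * w a i)ᴴ x a) * (Matrix.of fun a (_ : Fin 1) => c * w a i) a x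
        = 2 * (w i a * w a i) := by
      intro a
      rw [Matrix.conjTranspose_apply, Matrix.of_apply, star_mul', hst, ← hc]; ring
    simp only [this]
    rw [← Finset.mul_sum, ← Matrix.mul_apply, hid, hii2]
  · ext a b
    rw [Matrix.mul_apply, Fin.sum_univ_one, Matrix.conjTranspose_apply, Matrix.of_apply, Matrix.of_apply,
      star_mul', hst, hent a b, ← hc]; ring

def pbStab (θ : Γ →* Matrix ι ι K) (w : Matrix ι ι K) : Subgroup Γ where
  carrier := {g | θ g * w = w * θ g}
  one_mem' := by simp
  mul_mem' := by
    intro a b ha hb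
    simp only [Set.mem_setOf_eq, map_mul] at *
    rw [mul_assoc, hb, ← mul_assoc, ha, mul_assoc]
  inv_mem' := by
    intro a ha
    simp only [Set.mem_setOf_eq] at *
    calc θ a⁻¹ * w = θ a⁻¹ * w * (θ a * θ a⁻¹) := by rw [paMulInv, mul_one]
      _ = θ a⁻¹ * (w * θ a) * θ a⁻¹ := by simp only [mul_assoc]
      _ = θ a⁻¹ * θ a * w * θ a⁻¹ := by rw [← ha]; simp only [mul_assoc]
      _ = _ := by rw [paInvMul, one_mul]

variable {κ : Type*} [Fintype κ] [DecidableEq κ]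

lemma pbWJ {J : Matrix ι κ K} {w : Matrix ι ι K} (h1 : Jᴴ * J = 1) (h2 : J * Jᴴ = w) : w * J = J := by
  rw [← h2, Matrix.mul_assoc, h1, Matrix.mul_one]
lemma pbJW {J : Matrix ι κ K} {w : Matrix ι ι K} (h1 : Jᴴ * J = 1) (h2 : J * Jᴴ = w) : Jᴴ * w = Jᴴ := by
  rw [← h2, ← Matrix.mul_assoc, h1, Matrix.one_mul]

def pbRho (θ : Γ →* Matrix ι ι K) {w : Matrix ι ι K} {J : Matrix ι κ K} (h1 : Jᴴ * J = 1)
    (h2 : J * Jᴴ = w) : pbStab θ w →* Matrix κ κ K where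
  toFun g := Jᴴ * θ g * J
  map_one' := by simp [h1]
  map_mul' := by
    intro a b
    have hb : θ b * w = w * θ b := b.2
    rw [Subgroup.coe_mul, map_mul]
    calc Jᴴ * (θ a * θ b) * J = Jᴴ * (θ a * θ b) * (w * J) := by rw [pbWJ h1 h2]
      _ = Jᴴ * θ a * (θ b * w) * J := by simp only [Matrix.mul_assoc]
      _ = Jᴴ * θ a * (J * Jᴴ * θ b) * J := by rw [hb, h2]
      _ = _ := by simp only [Matrix.mul_assoc]

lemma pbRhoApply {w : Matrix ι ι K} {J : Matrix ι κ K} (h1 : Jᴴ * J = 1)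
    (h2 : J * Jᴴ = w) (g : pbStab θ w) : pbRho θ h1 h2 g = Jᴴ * θ g * J := rfl

lemma pbRhoJ {w : Matrix ι ι K} {J : Matrix ι κ K} (h1 : Jᴴ * J = 1)
    (h2 : J * Jᴴ = w) (g : pbStab θ w) : θ g * J = J * pbRho θ h1 h2 g := by
  have hg : θ g * w = w * θ g := g.2
  calc θ g * J = θ g * (w * J) := by rw [pbWJ h1 h2]
    _ = (θ g * w) * J := by rw [Matrix.mul_assoc]
    _ = J * Jᴴ * θ g * J := by rw [hg, h2]
    _ = _ := by rw [pbRhoApply]; simp only [Matrix.mul_assoc]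

/-- Elements of the form `1 + J X Jᴴ`. -/
lemma pbLift {w : Matrix ι ι K} {J : Matrix ι κ K} (h1 : Jᴴ * J = 1)
    (h2 : J * Jᴴ = w) (g : Γ) (X : Matrix κ κ K) (hg : θ g = 1 + J * X * Jᴴ) :
    ∃ r : pbStab θ w, pbRho θ h1 h2 r = 1 + X := by
  refine ⟨⟨g, ?_⟩, ?_⟩
  · change θ g * w = w * θ g
    rw [hg, add_mul, mul_add, one_mul, mul_one]
    congr 1
    rw [Matrix.mul_assoc, pbJW h1 h2, ← Matrix.mul_assoc, ← Matrix.mul_assoc, pbWJ h1 h2]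
  · rw [pbRhoApply]
    change Jᴴ * θ g * J = _
    rw [hg, Matrix.mul_add, Matrix.add_mul, Matrix.mul_one, h1]
    congr 1
    calc Jᴴ * (J * X * Jᴴ) * J = (Jᴴ * J) * X * (Jᴴ * J) := by simp only [Matrix.mul_assoc]
      _ = X := by rw [h1, Matrix.one_mul, Matrix.mul_one]

lemma pbPrim (h : PBG θ) {S : Set (Matrix ι ι K)} (hS : Maximal (PBFam θ) S) {w : Matrix ι ι K}
    (hw : PBAtom S w) {J : Matrix ι κ K} (h1 : Jᴴ * J = 1) (h2 : J * Jᴴ = w)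
    (T : Set (Matrix κ κ K)) (hT : ∀ t ∈ T, tᴴ = t ∧ t * t = t)
    (hc : ∀ s ∈ T, ∀ t ∈ T, s * t = t * s)
    (hinv : ∀ g, ∀ t ∈ T, pbRho θ h1 h2 g * t * pbRho θ h1 h2 g⁻¹ ∈ T) :
    ∀ t ∈ T, t = 0 ∨ t = 1 := by
  have hP := hS.prop
  have hwJ := pbWJ h1 h2
  have hJw := pbJW h1 h2
  have hLw : ∀ t : Matrix κ κ K, (J * t * Jᴴ) * w = J * t * Jᴴ := by
    intro t; rw [Matrix.mul_assoc, hJw]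
  have hwL : ∀ t : Matrix κ κ K, w * (J * t * Jᴴ) = J * t * Jᴴ := by
    intro t; rw [← Matrix.mul_assoc, ← Matrix.mul_assoc, hwJ]
  have hLL : ∀ s t : Matrix κ κ K, (J * s * Jᴴ) * (J * t * Jᴴ) = J * (s * t) * Jᴴ := by
    intro s t
    calc (J * s * Jᴴ) * (J * t * Jᴴ) = J * s * (Jᴴ * J) * t * Jᴴ := by simp only [Matrix.mul_assoc]
      _ = _ := by rw [h1, Matrix.mul_one]; simp only [Matrix.mul_assoc]
  have hLi : ∀ t : Matrix κ κ K, Jᴴ * (J * t * Jᴴ) * J = t := by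
    intro t
    calc Jᴴ * (J * t * Jᴴ) * J = (Jᴴ * J) * t * (Jᴴ * J) := by simp only [Matrix.mul_assoc]
      _ = t := by rw [h1, Matrix.one_mul, Matrix.mul_one]
  have hLs : ∀ t : Matrix κ κ K, tᴴ = t → (J * t * Jᴴ)ᴴ = J * t * Jᴴ := by
    intro t ht
    rw [Matrix.conjTranspose_mul, Matrix.conjTranspose_mul, ht, Matrix.conjTranspose_conjTranspose,
      Matrix.mul_assoc]
  -- conjugate by a stabilizer element
  have hLc : ∀ (g : pbStab θ w) (t : Matrix κ κ K), θ g * (J * t * Jᴴ) * θ (g : Γ)⁻¹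
      = J * (pbRho θ h1 h2 g * t * pbRho θ h1 h2 g⁻¹) * Jᴴ := by
    intro g t
    have e1 := pbRhoJ h1 h2 g
    have e2 := congrArg Matrix.conjTranspose (pbRhoJ h1 h2 g)
    have e3 : (pbRho θ h1 h2 g)ᴴ = pbRho θ h1 h2 g⁻¹ := by
      rw [pbRhoApply, pbRhoApply, Matrix.conjTranspose_mul, Matrix.conjTranspose_mul, h.uni,
        Matrix.conjTranspose_conjTranspose, Subgroup.coe_inv, Matrix.mul_assoc]
    rw [Matrix.conjTranspose_mul, Matrix.conjTranspose_mul, h.uni, e3] at e2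
    calc θ g * (J * t * Jᴴ) * θ (g : Γ)⁻¹ = (θ g * J) * t * (Jᴴ * θ (g : Γ)⁻¹) := by
          simp only [Matrix.mul_assoc]
      _ = _ := by rw [e1, e2]; simp only [Matrix.mul_assoc]
  have hsub : {x | ∃ g : Γ, ∃ t ∈ T, x = θ g * (J * t * Jᴴ) * θ g⁻¹} ⊆ S := by
    refine pbAbsorb hS ?_ ?_
    · constructor
      · rintro x ⟨g, t, ht, rfl⟩
        exact pbConjStar h g _ (hLs t (hT t ht).1)
      · rintro x ⟨g, t, ht, rfl⟩
        rw [pbConjMul, hLL, (hT t ht).2]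
      · -- commutativity
        have base : ∀ k : Γ, ∀ s ∈ T, ∀ t ∈ T, (J * s * Jᴴ) * (θ k * (J * t * Jᴴ) * θ k⁻¹)
            = (θ k * (J * t * Jᴴ) * θ k⁻¹) * (J * s * Jᴴ) := by
          intro k s hs t ht
          rcases pbSwap hP hw k with hk | hk
          · have := hLc ⟨k, hk⟩ t
            change θ k * (J * t * Jᴴ) * θ k⁻¹ = _ at this
            rw [this, hLL, hLL, hc s hs _ (hinv _ t ht)]
          · have hk' : w * θ k⁻¹ * w = 0 := by
              have := congrArg Matrix.conjTranspose hk
              rw [Matrix.conjTranspose_mul, Matrix.conjTranspose_mul, h.uni, hP.sa w hw.1,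
                Matrix.conjTranspose_zero] at this
              rw [mul_assoc]; exact this
            have z1 : (J * s * Jᴴ) * (θ k * (J * t * Jᴴ) * θ k⁻¹) = 0 := by
              rw [← hLw s, ← hwL t]
              calc _ = (J * s * Jᴴ) * (w * θ k * w) * (J * t * Jᴴ) * θ k⁻¹ := by
                    simp only [Matrix.mul_assoc]
                _ = 0 := by rw [hk]; simp
            have z2 : (θ k * (J * t * Jᴴ) * θ k⁻¹) * (J * s * Jᴴ) = 0 := by
              rw [← hLw t, ← hwL s]
              calc _ = θ k * (J * t * Jᴴ) * (w * θ k⁻¹ * w) * (J * s * Jᴴ) := by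
                    simp only [Matrix.mul_assoc]
                _ = 0 := by rw [hk']; simp
            rw [z1, z2]
        rintro x ⟨g, s, hs, rfl⟩ y ⟨g', t, ht, rfl⟩
        have e : θ g' * (J * t * Jᴴ) * θ g'⁻¹
            = θ g * (θ (g⁻¹ * g') * (J * t * Jᴴ) * θ (g⁻¹ * g')⁻¹) * θ g⁻¹ := by
          rw [pbConjConj, mul_inv_cancel_left]
        rw [e, pbConjMul, pbConjMul, base _ s hs t ht]
      · rintro g x ⟨g', t, ht, rfl⟩
        exact ⟨g * g', t, ht, pbConjConj θ g g' _⟩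
    · rintro s hs x ⟨g, t, ht, rfl⟩
      have e : s = θ g * (θ g⁻¹ * s * θ g⁻¹⁻¹) * θ g⁻¹ := (pbConjInv θ g s).symm
      have hs' := hP.inv g⁻¹ s hs
      rw [e, pbConjMul, pbConjMul]
      clear e
      generalize θ g⁻¹ * s * θ g⁻¹⁻¹ = u at hs' ⊢
      have hcw := hP.comm u hs' w hw.1
      have e1 : u * (J * t * Jᴴ) = (u * w) * (J * t * Jᴴ) := by rw [mul_assoc, hwL]
      have e2 : (J * t * Jᴴ) * u = (J * t * Jᴴ) * (u * w) := by
        rw [hcw, ← mul_assoc, hLw]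
      rw [e1, e2]
      rcases hw.2.2 u hs' with hu | hu
      · rw [hu]; simp
      · rw [hu, hLw, hwL]
  intro t ht
  have hm : J * t * Jᴴ ∈ S := hsub ⟨1, t, ht, by simp⟩
  rcases hw.2.2 _ hm with h0 | h0
  · left; rw [hLw] at h0; rw [← hLi t, h0]; simp
  · right; rw [hLw] at h0; rw [← hLi t, h0, hJw, h1]

lemma pbLoc (h : PBG θ) {S : Set (Matrix ι ι K)} (hS : Maximal (PBFam θ) S) {w : Matrix ι ι K}
    (hw : PBAtom S w) {J : Matrix ι κ K} (h1 : Jᴴ * J = 1) (h2 : J * Jᴴ = w) (f : κ → ι)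
    (hf : ∀ k, J * Matrix.single k k (1 : K) * Jᴴ = Matrix.single (f k) (f k) (1 : K))
    (hcard : 3 ≤ Fintype.card κ) : PALoc (pbRho θ h1 h2) where
  uni g := by
    rw [pbRhoApply, pbRhoApply, Matrix.conjTranspose_mul, Matrix.conjTranspose_mul, h.uni,
        Matrix.conjTranspose_conjTranspose, Subgroup.coe_inv, Matrix.mul_assoc]
  two := h.two
  fin g := by
    obtain ⟨N, hN, hg⟩ := h.fin (g : Γ)
    refine ⟨N, hN, ?_⟩
    rw [← map_pow, pbRhoApply, Subgroup.coe_pow, map_pow, hg, Matrix.mul_one, h1]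
  refl k := by
    obtain ⟨r, hr⟩ := h.refl (f k)
    obtain ⟨r', hr'⟩ := pbLift h1 h2 r ((-2 : K) • Matrix.single k k (1 : K)) (by
      rw [hr, Matrix.mul_smul, Matrix.smul_mul, hf])
    exact ⟨r', by rw [hr', neg_smul, sub_eq_add_neg]⟩
  card := hcard
  prim := pbPrim h hS hw h1 h2

/-- The inclusion matrix of an injection. -/
def pbInc (K : Type*) [Field K] (f : κ → ι) : Matrix ι κ K := Matrix.of fun i k => if i = f k then 1 else 0

lemma pbIncSingle (f : κ → ι) (k l : κ) :
    pbInc K f * Matrix.single k l (1 : K) * (pbInc K f)ᴴ = Matrix.single (f k) (f l) (1 : K) := by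
  ext a b
  rw [Matrix.mul_apply, Finset.sum_eq_single l, Matrix.mul_single_apply_same, Matrix.conjTranspose_apply,
    pbInc, Matrix.of_apply, Matrix.of_apply, Matrix.single_apply]
  · by_cases ha : a = f k <;> by_cases hb : b = f l <;> simp [ha, hb, eq_comm]
  · intro c _ hc
    rw [Matrix.mul_single_apply_of_ne _ _ _ _ _ hc, zero_mul]
  · simp

lemma pbIncOne (f : κ → ι) (hf : Function.Injective f) : (pbInc K f)ᴴ * pbInc K f = 1 := by
  ext a b
  rw [Matrix.mul_apply, Finset.sum_eq_single (f b), Matrix.conjTranspose_apply, pbInc, Matrix.of_apply,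
    Matrix.of_apply, if_pos rfl, Matrix.one_apply]
  · by_cases h : a = b
    · simp [h]
    · rw [if_neg (fun e => h (hf e).symm), if_neg h]; simp
  · intro c _ hc; simp [pbInc, hc]
  · simp

lemma pbIncW (f : κ → ι) (hf : Function.Injective f) (w : Matrix ι ι K) (d : ι → K)
    (hw : w = Matrix.diagonal d) (h1 : ∀ k, d (f k) = 1) (h0 : ∀ i, d i ≠ 0 → ∃ k, f k = i) :
    pbInc K f * (pbInc K f)ᴴ = w := by
  ext a b
  rw [Matrix.mul_apply, hw]
  by_cases hd : d a = 0
  · have : ∀ k, a ≠ f k := by rintro k rfl; rw [h1] at hd; exact one_ne_zero hd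
    rw [Finset.sum_eq_zero]
    · by_cases hab : a = b
      · subst hab; simp [hd]
      · simp [hab]
    · intro k _; simp [pbInc, this k]
  · obtain ⟨k, rfl⟩ := h0 a hd
    rw [Finset.sum_eq_single k]
    · by_cases hab : f k = b
      · subst hab; simp [pbInc, h1]
      · have : ¬ b = f k := fun e => hab e.symm
        simp [pbInc, hab, this]
    · intro c _ hc
      have : ¬ f k = f c := fun e => hc (hf e).symm
      simp [pbInc, this]
    · simp

end PartB2

section PartB3
variable {K : Type*} [Field K] [StarRing K] {ι : Type*} [Fintype ι] [DecidableEq ι]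
    {Γ : Type*} [Group Γ] {θ : Γ →* Matrix ι ι K}

/-- A plane rotation. -/
def pbPsi (a b : ι) (u v : K) : Matrix ι ι K :=
  1 + ((u - 1) • (Matrix.single a a (1 : K) + Matrix.single b b (1 : K)) +
    v • (Matrix.single a b (1 : K) - Matrix.single b a (1 : K)))

def PBHypJ (θ : Γ →* Matrix ι ι K) : Prop :=
  ∃ I : K, I * I = -1 ∧ star I = -I ∧ ∀ i, ∃ j, θ j = 1 + (I - 1) • Matrix.single i i (1 : K)

def PBHypH (θ : Γ →* Matrix ι ι K) : Prop :=
  ∃ x y : K, star x = -x ∧ star y = -y ∧ x * x + y * y = -1 ∧ x ≠ 0 ∧ y ≠ 0 ∧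
    ∃ o : ι, ∀ s, s ≠ o → ∃ a b, a ≠ b ∧ (s = a ∨ s = b) ∧ ∃ gi gh, θ gi = pbPsi a b 0 1 ∧
      θ gh = pbPsi a b x y

lemma pbPsiBlock (u v : K) : pbPsi (Sum.inl 0 : Fin 2 ⊕ Fin 2) (Sum.inl 1) u v
    = fromBlocks !![u, v; -v, u] 0 0 1 := by
  ext i j
  rcases i with i | i <;> rcases j with j | j <;> fin_cases i <;> fin_cases j <;>
    simp [pbPsi, Matrix.single_apply, Matrix.one_apply]

lemma pbPsiInc {κ : Type*} [Fintype κ] [DecidableEq κ] (f : κ → ι) (k l : κ) (u v : K) :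
    pbPsi (f k) (f l) u v = 1 + pbInc K f * (pbPsi k l u v - 1) * (pbInc K f)ᴴ := by
  rw [pbPsi, pbPsi, add_sub_cancel_left, Matrix.mul_add, Matrix.add_mul, Matrix.mul_smul, Matrix.smul_mul,
    Matrix.mul_smul, Matrix.smul_mul, Matrix.mul_add, Matrix.add_mul, Matrix.mul_sub, Matrix.sub_mul,
    pbIncSingle, pbIncSingle, pbIncSingle, pbIncSingle]

lemma pbPsiOut (a b s : ι) (u v : K) (ha : s ≠ a) (hb : s ≠ b) : pbPsi a b u v s s = 1 := by
  simp [pbPsi, Matrix.single_apply, ha.symm, hb.symm]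

lemma pbPsiAB (a b : ι) (u v : K) (h : a ≠ b) : pbPsi a b u v a b = v := by
  simp [pbPsi, Matrix.single_apply, h, h.symm]

lemma pbAtomN [Group.IsSolvable Γ] (h : PBG θ) {S : Set (Matrix ι ι K)} (hS : Maximal (PBFam θ) S)
    {w : Matrix ι ι K} (hw : PBAtom S w) (hyp : PBHypJ θ ∨ PBHypH θ) : PBN w := by
  classical
  have hP := hS.prop
  by_cases hcm : ∃ i, (1 + (-2 : K) • Matrix.single i i (1 : K)) * w
      ≠ w * (1 + (-2 : K) • Matrix.single i i (1 : K))
  · obtain ⟨i, hi⟩ := hcm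
    obtain ⟨r, hr⟩ := h.refl i
    have := pbSwap hP hw r
    rw [hr] at this
    exact pbLine h hw.2.1 (hP.sa w hw.1) (hP.idem w hw.1) i (this.resolve_left hi)
  push Not at hcm
  obtain ⟨d, hd⟩ : ∃ d, w = Matrix.diagonal d := ⟨_, paDiagOfComm h.two w (fun i => by
    have := (hcm i).symm
    rw [neg_smul, ← sub_eq_add_neg] at this
    exact this)⟩
  have hd01 : ∀ i, d i ≠ 0 → d i = 1 := by
    intro i hi
    have := congrFun (congrFun (hP.idem w hw.1) i) i
    rw [hd, Matrix.diagonal_mul_diagonal] at this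
    simp only [Matrix.diagonal_apply_eq] at this
    exact mul_right_cancel₀ hi (by rw [this, one_mul])
  let κ := {i // d i ≠ 0}
  have hpos : 0 < Fintype.card κ := by
    rw [Fintype.card_pos_iff]
    by_contra hne
    apply hw.2.1
    rw [hd]
    ext a b
    by_cases hab : a = b
    · subst hab
      have : d a = 0 := by
        by_contra h0; exact hne ⟨⟨a, h0⟩⟩
      simp [this]
    · simp [hab]
  have hN : ∀ k, Fintype.card κ = k → (k = 1 ∨ k = 2) → PBN w := by
    intro k hk hk'
    let e : Fin k ≃ κ := (Fintype.equivFinOfCardEq hk).symm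
    have hinj : Function.Injective (fun j => (e j : ι)) := Subtype.val_injective.comp e.injective
    refine ⟨k, hk', pbInc K (fun j => (e j : ι)), pbIncOne _ hinj, pbIncW _ hinj w d hd ?_ ?_⟩
    · exact fun j => hd01 _ (e j).2
    · intro i hi
      exact ⟨e.symm ⟨i, hi⟩, by simp⟩
  by_cases hc : Fintype.card κ ≤ 2
  · exact hN _ rfl (by omega)
  exfalso
  have hinj : Function.Injective (Subtype.val : κ → ι) := Subtype.val_injective
  have h1 := pbIncOne (K := K) (Subtype.val : κ → ι) hinj
  have h2 := pbIncW (K := K) (Subtype.val : κ → ι) hinj w d hd (fun k => hd01 _ k.2) (fun i hi => ⟨⟨i, hi⟩, rfl⟩)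
  have loc := pbLoc h hS hw h1 h2 (Subtype.val : κ → ι) (fun k => pbIncSingle _ k k)
    (by change 3 ≤ Fintype.card κ; omega)
  obtain ⟨A, hA⟩ := paExistsA loc
  have hle : Fintype.card κ ≤ 4 := paCardLe loc hA
  have hne3 : Fintype.card κ ≠ 3 := fun h3 => paThree loc hA h3
  have h4 : Fintype.card κ = 4 := by omega
  rcases hyp with ⟨I, hI, hIs, hJ⟩ | ⟨x, y, hx, hy, hxy, hx0, hy0, o, ho⟩
  · refine paFourJ loc hA h4 I hI hIs fun i => ?_
    obtain ⟨j, hj⟩ := hJ i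
    exact pbLift h1 h2 j ((I - 1) • Matrix.single i i (1 : K)) (by
      rw [hj, Matrix.mul_smul, Matrix.smul_mul, pbIncSingle])
  · have hex : ∀ a b : ι, ∃ s, d s ≠ 0 ∧ s ≠ a ∧ s ≠ b := by
      intro a b
      by_contra hc
      push Not at hc
      have hsub : (Finset.univ.filter fun i => d i ≠ 0) ⊆ {a, b} := by
        intro i hi
        simp only [Finset.mem_filter, Finset.mem_univ, true_and] at hi
        by_cases hia : i = a
        · simp [hia]
        · simp [hc i hi hia]
      have := Finset.card_le_card hsub
      have h5 : (Finset.univ.filter fun i => d i ≠ 0).card = 4 := by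
        rw [← h4, Fintype.card_subtype]
      have := Finset.card_le_two (a := a) (b := b)
      omega
    obtain ⟨s, hs, hso, -⟩ := hex o o
    obtain ⟨a, b, hab, hsab, gi, gh, hgi, hgh⟩ := ho s hso
    obtain ⟨s', hs', hsa', hsb'⟩ := hex a b
    have hcomm : θ gi * w = w * θ gi := by
      refine (pbSwap hP hw gi).resolve_right fun h0 => ?_
      have := congrFun (congrFun h0 s') s'
      rw [hd, Matrix.mul_diagonal, Matrix.diagonal_mul, hgi, pbPsiOut _ _ _ _ _ hsa' hsb', hd01 _ hs'] at this
      simp at this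
    have hdab : d b = d a := by
      have := congrFun (congrFun hcomm a) b
      rw [hd, Matrix.mul_diagonal, Matrix.diagonal_mul, hgi, pbPsiAB _ _ _ _ hab] at this
      simpa using this
    have hda : d a ≠ 0 := by
      rcases hsab with rfl | rfl
      · exact hs
      · rwa [← hdab]
    have hdb : d b ≠ 0 := by rwa [hdab]
    let κ' := {i // d i ≠ 0 ∧ i ≠ a ∧ i ≠ b}
    have hk' : Fintype.card κ' = 2 := by
      have e1 : (Finset.univ.filter fun i => d i ≠ 0 ∧ i ≠ a ∧ i ≠ b)
          = ((Finset.univ.filter fun i => d i ≠ 0).erase a).erase b := by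
        ext i; simp; tauto
      rw [Fintype.card_subtype, e1, Finset.card_erase_of_mem, Finset.card_erase_of_mem, ← Fintype.card_subtype]
      · change Fintype.card κ - 1 - 1 = 2
        omega
      · simp [hda]
      · simp [hdb, hab.symm]
    let e : Fin 2 ≃ κ' := (Fintype.equivFinOfCardEq hk').symm
    let f : Fin 2 ⊕ Fin 2 → ι := Sum.elim ![a, b] (fun j => (e j : ι))
    have hfa : f (Sum.inl 0) = a := rfl
    have hfb : f (Sum.inl 1) = b := rfl
    have hfr : ∀ j, f (Sum.inr j) = e j := fun j => rfl
    have hf : Function.Injective f := by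
      apply Function.Injective.sumElim
      · intro i j hij
        fin_cases i <;> fin_cases j <;> simp_all
      · exact Subtype.val_injective.comp e.injective
      · intro i j
        fin_cases i
        · exact fun h => (e j).2.2.1 h.symm
        · exact fun h => (e j).2.2.2 h.symm
    have h1' := pbIncOne (K := K) f hf
    have h2' := pbIncW (K := K) f hf w d hd (by
      rintro (i | i)
      · fin_cases i
        · exact hd01 a hda
        · exact hd01 b hdb
      · exact hd01 _ (e i).2.1) (by
      intro i hi
      by_cases hia : i = a
      · exact ⟨Sum.inl 0, hia.symm⟩
      by_cases hib : i = b
      · exact ⟨Sum.inl 1, hib.symm⟩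
      exact ⟨Sum.inr (e.symm ⟨i, hi, hia, hib⟩), by simp [f]⟩)
    have loc' := pbLoc h hS hw h1' h2' f (fun k => pbIncSingle _ k k) (by simp)
    obtain ⟨A', hA'⟩ := paExistsA loc'
    obtain ⟨ri, hri⟩ := pbLift h1' h2' gi (pbPsi (Sum.inl 0) (Sum.inl 1) 0 1 - 1) (by
      rw [hgi, ← pbPsiInc, hfa, hfb])
    obtain ⟨rh, hrh⟩ := pbLift h1' h2' gh (pbPsi (Sum.inl 0) (Sum.inl 1) x y - 1) (by
      rw [hgh, ← pbPsiInc, hfa, hfb])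
    rw [add_sub_cancel, pbPsiBlock] at hri hrh
    exact paFourH loc' hA' ri rh x y hx hy hxy hx0 hy0 hri hrh

end PartB3

section PartB4
variable {K : Type*} [Field K] [StarRing K]
    {Γ : Type*} [Group Γ]

lemma pbRevEq {k : ℕ} (hk : k = 1 ∨ k = 2) (i j : Fin k) : j = i ∨ j = Fin.rev i := by
  rcases hk with rfl | rfl
  · left; exact Subsingleton.elim _ _
  · fin_cases i <;> fin_cases j <;> simp [Fin.rev]

theorem pbMain [Finite K] [Group.IsSolvable Γ] {n : ℕ} {θ : Γ →* Matrix (Fin n) (Fin n) K} (h : PBG θ)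
    (hyp : PBHypJ θ ∨ PBHypH θ) : ∃ B : Matrix (Fin n) (Fin n) K, Bᴴ * B = 1 ∧
      ∃ τ : Fin n → Fin n, (∀ x, τ (τ x) = x) ∧ ∀ g, PCSt τ (Bᴴ * θ g * B) := by
  classical
  haveI : Finite (Matrix (Fin n) (Fin n) K) := inferInstanceAs (Finite (Fin n → Fin n → K))
  obtain ⟨S, hS⟩ : ∃ S, Maximal (PBFam θ) S :=
    (Set.toFinite {T | PBFam θ T}).exists_maximal ⟨∅, by constructor <;> simp⟩
  have hP := hS.prop
  letI : Fintype {w // PBAtom S w} := Fintype.ofFinite _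
  have hsum := pbSum h hS
  choose k hk N hN1 hN2 using fun w : {w // PBAtom S w} => pbAtomN h hS w.2 hyp
  let Jt := Σ w : {w // PBAtom S w}, Fin (k w)
  let Nt : Matrix (Fin n) Jt K := Matrix.of fun i x => N x.1 i x.2
  have hcomp : ∀ (M : Matrix (Fin n) (Fin n) K) (x y : Jt), (Ntᴴ * M * Nt) x y
      = ((N x.1)ᴴ * M * N y.1) x.2 y.2 := fun M x y => rfl
  have hwN : ∀ w : {w // PBAtom S w}, (w : Matrix (Fin n) (Fin n) K) * N w = N w := fun w => pbWJ (hN1 w) (hN2 w)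
  have hNw : ∀ w : {w // PBAtom S w}, (N w)ᴴ * (w : Matrix (Fin n) (Fin n) K) = (N w)ᴴ := fun w => pbJW (hN1 w) (hN2 w)
  have hent : ∀ g (x y : Jt), (Ntᴴ * θ g * Nt) x y ≠ 0 →
      (x.1 : Matrix (Fin n) (Fin n) K) = θ g * y.1 * θ g⁻¹ := by
    intro g x y hne
    by_contra hc
    apply hne
    have h0 : (x.1 : Matrix (Fin n) (Fin n) K) * (θ g * y.1 * θ g⁻¹) = 0 := by
      by_contra h0
      exact hc (pbAtomOrth hP x.1.2 (pbAtomConj hP y.1.2 g) h0)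
    rw [hcomp]
    have : (N x.1)ᴴ * θ g * N y.1 = 0 := by
      calc (N x.1)ᴴ * θ g * N y.1 = (N x.1)ᴴ * (x.1 : Matrix (Fin n) (Fin n) K) * θ g *
            ((y.1 : Matrix (Fin n) (Fin n) K) * N y.1) := by rw [hwN, hNw]
        _ = (N x.1)ᴴ * ((x.1 : Matrix (Fin n) (Fin n) K) * (θ g * (y.1 : Matrix (Fin n) (Fin n) K) * θ g⁻¹)) * θ g * N y.1 := by
            have e : ∀ X : Matrix (Fin n) (Fin (k y.1)) K, θ g⁻¹ * (θ g * X) = X := fun X => by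
              rw [← Matrix.mul_assoc, paInvMul, Matrix.one_mul]
            simp only [Matrix.mul_assoc, e]
        _ = 0 := by rw [h0]; simp
    rw [this]; rfl
  have hA : Ntᴴ * Nt = 1 := by
    ext x y
    have e : (Ntᴴ * Nt) x y = (Ntᴴ * θ 1 * Nt) x y := by rw [map_one, Matrix.mul_one]
    by_cases hxy : x.1 = y.1
    · obtain ⟨w, i⟩ := x
      obtain ⟨w', j⟩ := y
      obtain rfl : w = w' := hxy
      rw [e, hcomp, map_one, Matrix.mul_one, hN1, Matrix.one_apply, Matrix.one_apply]
      simp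
    · rw [Matrix.one_apply_ne (fun hh => hxy (by rw [hh])), e]
      by_contra hne
      have := hent 1 x y hne
      simp only [map_one, inv_one, one_mul, mul_one] at this
      exact hxy (Subtype.ext this)
  have hB : Nt * Ntᴴ = 1 := by
    rw [← hsum]
    ext i j
    rw [Matrix.mul_apply, Fintype.sum_sigma, Matrix.sum_apply]
    refine Finset.sum_congr rfl fun w _ => ?_
    conv_rhs => rw [← hN2 w]
    rw [Matrix.mul_apply]
    rfl
  have hcard : Fintype.card Jt = n := by
    have := Matrix.square_of_invertible Nt Ntᴴ hB hA
    simpa using this.symm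
  let e : Jt ≃ Fin n := Fintype.equivFinOfCardEq hcard
  refine ⟨Nt.submatrix id e.symm, ?_, fun a => e ⟨(e.symm a).1, Fin.rev (e.symm a).2⟩, ?_, ?_⟩
  · have e1 : (Nt.submatrix id e.symm)ᴴ * Nt.submatrix id e.symm = (Ntᴴ * Nt).submatrix e.symm e.symm := rfl
    rw [e1, hA, Matrix.submatrix_one_equiv]
  · intro x
    have : e.symm (e ⟨(e.symm x).1, Fin.rev (e.symm x).2⟩) = ⟨(e.symm x).1, Fin.rev (e.symm x).2⟩ :=
      e.symm_apply_apply _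
    rw [← Equiv.eq_symm_apply]
    rw [this]
    simp
  · intro g a b a' b' h1 h2
    have hcl : ∀ a a', (a' = a ∨ a' = e ⟨(e.symm a).1, Fin.rev (e.symm a).2⟩) ↔
        (e.symm a').1 = (e.symm a).1 := by
      intro a a'
      constructor
      · rintro (rfl | rfl)
        · rfl
        · simp
      · intro hh
        rw [← Equiv.symm_apply_eq, ← e.symm.apply_eq_iff_eq]
        generalize e.symm a' = x at *
        generalize e.symm a = y at *
        obtain ⟨w, i⟩ := x
        obtain ⟨w', j⟩ := y
        obtain rfl : w = w' := hh
        rcases pbRevEq (hk w) j i with rfl | rfl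
        · exact Or.inl rfl
        · exact Or.inr rfl
    have ha := hent g (e.symm a) (e.symm b) h1
    have hb := hent g (e.symm a') (e.symm b') h2
    rw [hcl, hcl, Subtype.ext_iff, Subtype.ext_iff, ha, hb]
    constructor
    · intro hh; rw [hh]
    · intro hh
      have := congrArg (fun t => θ g⁻¹ * t * θ g) hh
      simpa only [pbConjInv'] using this

end PartB4

section PartD1
variable {K : Type*} [Field K] [StarRing K] {n : ℕ}

lemma pdDiag {τ : Fin n → Fin n} (d : Fin n → K) (hd : ∀ i, d i ≠ 0) (M : Matrix (Fin n) (Fin n) K)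
    (hM : PCSt τ ((Matrix.diagonal d)ᴴ * M * Matrix.diagonal d)) : PCSt τ M := by
  intro a b a' b' h1 h2
  have hent : ∀ a b, M a b ≠ 0 → ((Matrix.diagonal d)ᴴ * M * Matrix.diagonal d) a b ≠ 0 := by
    intro a b h
    rw [Matrix.diagonal_conjTranspose, Matrix.mul_diagonal, Matrix.diagonal_mul]
    exact mul_ne_zero (mul_ne_zero (star_ne_zero.mpr (hd a)) h) (hd b)
  exact hM a b a' b' (hent _ _ h1) (hent _ _ h2)

lemma pdDet (hn : 0 < n) (h : Matrix (Fin n) (Fin n) K) (hh : hᴴ * h = 1) :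
    ∃ d : Fin n → K, (∀ i, star (d i) * d i = 1) ∧ (h * Matrix.diagonal d).det = 1 := by
  have h1 : star h.det * h.det = 1 := by
    rw [← Matrix.det_conjTranspose, ← Matrix.det_mul, hh, Matrix.det_one]
  refine ⟨Function.update 1 ⟨0, hn⟩ (star h.det), ?_, ?_⟩
  · intro i
    by_cases hi : i = ⟨0, hn⟩
    · subst hi; simp [mul_comm h.det, h1]
    · simp [Function.update_of_ne hi]
  · rw [Matrix.det_mul, Matrix.det_diagonal, Finset.prod_update_of_mem (Finset.mem_univ _)]
    simp [mul_comm h.det, h1]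

lemma pdX (hn : 0 < n) (H : Subgroup (GL (Fin n) K)) (B : Matrix (Fin n) (Fin n) K) (hB : Bᴴ * B = 1)
    (τ : Fin n → Fin n) (hS : ∀ g ∈ H, PCSt τ (Bᴴ * (g : Matrix (Fin n) (Fin n) K) * B))
    (h : Matrix (Fin n) (Fin n) K) (hh : hᴴ * h = 1) :
    ∃ x : GL (Fin n) K, (x : Matrix (Fin n) (Fin n) K)ᴴ * x = 1 ∧
      Matrix.det (x : Matrix (Fin n) (Fin n) K) = 1 ∧
      ∀ g : GL (Fin n) K, x * g * x⁻¹ ∈ H →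
        PCSt τ (hᴴ * (Bᴴ * (g : Matrix (Fin n) (Fin n) K) * B) * h) := by
  obtain ⟨d, hd, hdet⟩ := pdDet hn h hh
  set δ := Matrix.diagonal d with hδ
  have hδu : δᴴ * δ = 1 := by
    rw [hδ, Matrix.diagonal_conjTranspose, Matrix.diagonal_mul_diagonal]
    ext i j
    by_cases hij : i = j
    · subst hij; simp; exact hd i
    · simp [hij]
  have hB' := pcFlip hB
  have hh' := pcFlip hh
  have hδ' := pcFlip hδu
  set k := h * δ with hk
  have hku : kᴴ * k = 1 := by
    rw [hk, Matrix.conjTranspose_mul]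
    calc δᴴ * hᴴ * (h * δ) = δᴴ * (hᴴ * h) * δ := by simp only [Matrix.mul_assoc]
      _ = 1 := by rw [hh, Matrix.mul_one, hδu]
  have hk' := pcFlip hku
  set X := B * kᴴ * Bᴴ with hX
  have hXs : Xᴴ = B * k * Bᴴ := by
    rw [hX, Matrix.conjTranspose_mul, Matrix.conjTranspose_mul, Matrix.conjTranspose_conjTranspose,
      Matrix.conjTranspose_conjTranspose, ← Matrix.mul_assoc]
  have hXu : Xᴴ * X = 1 := by
    rw [hXs, hX]
    calc B * k * Bᴴ * (B * kᴴ * Bᴴ) = B * k * (Bᴴ * B) * kᴴ * Bᴴ := by simp only [Matrix.mul_assoc]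
      _ = B * (k * kᴴ) * Bᴴ := by rw [hB, Matrix.mul_one]; simp only [Matrix.mul_assoc]
      _ = 1 := by rw [hk', Matrix.mul_one, hB']
  refine ⟨⟨X, Xᴴ, pcFlip hXu, hXu⟩, hXu, ?_, ?_⟩
  · change X.det = 1
    rw [hX, Matrix.det_mul, Matrix.det_mul, Matrix.det_conjTranspose k, hdet, star_one, mul_one,
      ← Matrix.det_mul, hB', Matrix.det_one]
  · intro g hg
    have := hS _ hg
    have e : (((⟨X, Xᴴ, pcFlip hXu, hXu⟩ * g * (⟨X, Xᴴ, pcFlip hXu, hXu⟩)⁻¹ : GL (Fin n) K)) :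
      Matrix (Fin n) (Fin n) K) = X * g * Xᴴ := rfl
    rw [e] at this
    apply pdDiag d (fun i h0 => by have := hd i; rw [h0, mul_zero] at this; exact zero_ne_one this)
    convert this using 1
    rw [hXs, hX, ← hδ]
    calc δᴴ * (hᴴ * (Bᴴ * (g : Matrix (Fin n) (Fin n) K) * B) * h) * δ
        = kᴴ * (Bᴴ * (g : Matrix (Fin n) (Fin n) K) * B) * k := by
          rw [hk, Matrix.conjTranspose_mul]; simp only [Matrix.mul_assoc]
      _ = (Bᴴ * B) * kᴴ * (Bᴴ * (g : Matrix (Fin n) (Fin n) K) * B) * k * (Bᴴ * B) := by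
          rw [hB, Matrix.one_mul, Matrix.mul_one]
      _ = _ := by simp only [Matrix.mul_assoc]

theorem pdFinal (hn : 3 ≤ n) (H : Subgroup (GL (Fin n) K))
    (hHu : ∀ g ∈ H, (g : Matrix (Fin n) (Fin n) K)ᴴ * (g : Matrix (Fin n) (Fin n) K) = 1)
    (B : Matrix (Fin n) (Fin n) K) (hB : Bᴴ * B = 1)
    (τ : Fin n → Fin n) (hτ : ∀ x, τ (τ x) = x)
    (hS : ∀ g ∈ H, PCSt τ (Bᴴ * (g : Matrix (Fin n) (Fin n) K) * B))
    (h2 : (2 : K) ≠ 0) (h3 : (3 : K) ≠ 0) (hN : ∀ a : K, star a = a → ∃ b, b * star b = a) :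
    ∃ x y z : GL (Fin n) K,
      ((x : Matrix (Fin n) (Fin n) K)ᴴ * x = 1 ∧ Matrix.det (x : Matrix (Fin n) (Fin n) K) = 1) ∧
      ((y : Matrix (Fin n) (Fin n) K)ᴴ * y = 1 ∧ Matrix.det (y : Matrix (Fin n) (Fin n) K) = 1) ∧
      ((z : Matrix (Fin n) (Fin n) K)ᴴ * z = 1 ∧ Matrix.det (z : Matrix (Fin n) (Fin n) K) = 1) ∧
      ∀ g ∈ H, x * g * x⁻¹ ∈ H → y * g * y⁻¹ ∈ H → z * g * z⁻¹ ∈ H →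
        ∃ c : K, (g : Matrix (Fin n) (Fin n) K) = c • (1 : Matrix (Fin n) (Fin n) K) := by
  obtain ⟨h1, h2, h3, u1, u2, u3, hgood⟩ := pcBase hn τ hτ h2 h3 hN
  obtain ⟨x, a1, a2, a3⟩ := pdX (by omega) H B hB τ hS h1 u1
  obtain ⟨y, b1, b2, b3⟩ := pdX (by omega) H B hB τ hS h2 u2
  obtain ⟨z, c1, c2, c3⟩ := pdX (by omega) H B hB τ hS h3 u3
  refine ⟨x, y, z, ⟨a1, a2⟩, ⟨b1, b2⟩, ⟨c1, c2⟩, ?_⟩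
  intro g hg hx hy hz
  have hB' := pcFlip hB
  obtain ⟨c, hc⟩ := hgood (Bᴴ * (g : Matrix (Fin n) (Fin n) K) * B) (by
    have e : (Bᴴ * (g : Matrix (Fin n) (Fin n) K) * B)ᴴ = Bᴴ * (g : Matrix (Fin n) (Fin n) K)ᴴ * B := by
      rw [Matrix.conjTranspose_mul, Matrix.conjTranspose_mul, Matrix.conjTranspose_conjTranspose,
        Matrix.mul_assoc]
    rw [e]
    calc _ = Bᴴ * (g : Matrix (Fin n) (Fin n) K)ᴴ * (B * Bᴴ) * (g : Matrix (Fin n) (Fin n) K) * B := by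
          simp only [Matrix.mul_assoc]
      _ = Bᴴ * ((g : Matrix (Fin n) (Fin n) K)ᴴ * (g : Matrix (Fin n) (Fin n) K)) * B := by
          rw [hB', Matrix.mul_one]; simp only [Matrix.mul_assoc]
      _ = 1 := by rw [hHu g hg, Matrix.mul_one, hB]) (hS g hg) (a3 g hx) (b3 g hy) (c3 g hz)
  refine ⟨c, ?_⟩
  calc (g : Matrix (Fin n) (Fin n) K) = (B * Bᴴ) * g * (B * Bᴴ) := by
        rw [hB', Matrix.one_mul, Matrix.mul_one]
    _ = B * (Bᴴ * (g : Matrix (Fin n) (Fin n) K) * B) * Bᴴ := by simp only [Matrix.mul_assoc]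
    _ = c • 1 := by rw [hc, Matrix.mul_smul, Matrix.smul_mul, Matrix.mul_one, hB']

end PartD1

section PartD2

lemma pdSylow {G : Type*} [Group G] [Finite G] (U H P : Subgroup G) (h2 : ¬ 2 ∣ H.relIndex U)
    (hPU : P ≤ U) (hP : IsPGroup 2 P) : ∃ u ∈ U, ∀ g ∈ P, u⁻¹ * g * u ∈ H := by
  have hP' : IsPGroup 2 (P.subgroupOf U) :=
    hP.of_equiv (Subgroup.subgroupOfEquivOfLe hPU).symm
  have hf : Fact (Nat.Prime 2) := ⟨Nat.prime_two⟩
  have hc : ¬ 2 ∣ Nat.card (↥U ⧸ H.subgroupOf U) := h2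
  obtain ⟨x, hx⟩ := hP'.nonempty_fixed_point_of_prime_not_dvd_card (↥U ⧸ H.subgroupOf U) hc
  induction x using QuotientGroup.induction_on with
  | H u =>
    refine ⟨u, u.2, fun g hg => ?_⟩
    have h1 := hx ⟨⟨g, hPU hg⟩, hg⟩
    have h2 : ((⟨g, hPU hg⟩ * u : U) : ↥U ⧸ H.subgroupOf U) = (u : ↥U ⧸ H.subgroupOf U) := h1
    have h3 := QuotientGroup.eq.mp h2.symm
    rw [Subgroup.mem_subgroupOf] at h3
    simpa [mul_assoc] using h3

variable {K : Type*} [Field K] [StarRing K] {n : ℕ}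

theorem pdMid [Finite K] (hn : 3 ≤ n) (U H P : Subgroup (GL (Fin n) K))
    (hU : ∀ g, g ∈ U ↔ (g : Matrix (Fin n) (Fin n) K)ᴴ * (g : Matrix (Fin n) (Fin n) K) = 1)
    (hHU : H ≤ U) (hPU : P ≤ U) (hsol : Group.IsSolvable H) (hidx : ¬ 2 ∣ H.relIndex U)
    (hP : IsPGroup 2 P) (hcard : (Nat.card H : K) ≠ 0)
    (h2 : (2 : K) ≠ 0) (h3 : (3 : K) ≠ 0) (hN : ∀ a : K, star a = a → ∃ b, b * star b = a)
    (hR : ∀ i, ∃ r ∈ P, (r : Matrix (Fin n) (Fin n) K) = 1 + (-2 : K) • Matrix.single i i (1 : K))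
    (hyp : PBHypJ ((Units.coeHom (Matrix (Fin n) (Fin n) K)).comp P.subtype) ∨
      PBHypH ((Units.coeHom (Matrix (Fin n) (Fin n) K)).comp P.subtype)) :
    ∃ x y z : GL (Fin n) K,
      ((x : Matrix (Fin n) (Fin n) K)ᴴ * x = 1 ∧ Matrix.det (x : Matrix (Fin n) (Fin n) K) = 1) ∧
      ((y : Matrix (Fin n) (Fin n) K)ᴴ * y = 1 ∧ Matrix.det (y : Matrix (Fin n) (Fin n) K) = 1) ∧
      ((z : Matrix (Fin n) (Fin n) K)ᴴ * z = 1 ∧ Matrix.det (z : Matrix (Fin n) (Fin n) K) = 1) ∧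
      ∀ g ∈ H, x * g * x⁻¹ ∈ H → y * g * y⁻¹ ∈ H → z * g * z⁻¹ ∈ H →
        ∃ c : K, (g : Matrix (Fin n) (Fin n) K) = c • (1 : Matrix (Fin n) (Fin n) K) := by
  haveI : Finite (Matrix (Fin n) (Fin n) K) := inferInstanceAs (Finite (Fin n → Fin n → K))
  haveI : Finite (GL (Fin n) K) := inferInstanceAs (Finite (Matrix (Fin n) (Fin n) K)ˣ)
  obtain ⟨u, hu, huP⟩ := pdSylow U H P hidx hPU hP
  let θ : H →* Matrix (Fin n) (Fin n) K :=
    (Units.coeHom (Matrix (Fin n) (Fin n) K)).comp ((MulAut.conj u).toMonoidHom.comp H.subtype)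
  have hθ : ∀ g : H, θ g = ((u * g * u⁻¹ : GL (Fin n) K) : Matrix (Fin n) (Fin n) K) := fun g => rfl
  have hlift : ∀ g ∈ P, ∃ r : H, θ r = (g : Matrix (Fin n) (Fin n) K) := by
    intro g hg
    refine ⟨⟨_, huP g hg⟩, ?_⟩
    rw [hθ]
    simp only [mul_assoc, mul_inv_cancel_left, mul_inv_cancel, mul_one]
  have hinvU : ∀ g ∈ U, ((g⁻¹ : GL (Fin n) K) : Matrix (Fin n) (Fin n) K) = (g : Matrix (Fin n) (Fin n) K)ᴴ := by
    intro g hg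
    have h1 := (hU g).mp hg
    calc ((g⁻¹ : GL (Fin n) K) : Matrix (Fin n) (Fin n) K)
        = ((g : Matrix (Fin n) (Fin n) K)ᴴ * g) * ((g⁻¹ : GL (Fin n) K) : Matrix (Fin n) (Fin n) K) := by
          rw [h1, Matrix.one_mul]
      _ = _ := by rw [Matrix.mul_assoc, Units.mul_inv, Matrix.mul_one]
  have hG : PBG θ := by
    refine ⟨?_, h2, ?_, ?_, hN⟩
    · intro g
      have e : θ g⁻¹ = (((u * g * u⁻¹)⁻¹ : GL (Fin n) K) : Matrix (Fin n) (Fin n) K) := by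
        rw [hθ]; congr 1; push_cast; group
      rw [e, hθ, hinvU _ (U.mul_mem (U.mul_mem hu (hHU g.2)) (U.inv_mem hu))]
    · intro g
      exact ⟨Nat.card H, hcard, by rw [← map_pow, pow_card_eq_one', map_one]⟩
    · intro i
      obtain ⟨r, hr, e⟩ := hR i
      obtain ⟨r', hr'⟩ := hlift r hr
      exact ⟨r', by rw [hr', e]⟩
  have hyp' : PBHypJ θ ∨ PBHypH θ := by
    rcases hyp with ⟨I, hI, hIs, hJ⟩ | ⟨x, y, hx, hy, hxy, hx0, hy0, o, ho⟩
    · refine Or.inl ⟨I, hI, hIs, fun i => ?_⟩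
      obtain ⟨j, hj⟩ := hJ i
      obtain ⟨r', hr'⟩ := hlift j j.2
      exact ⟨r', by rw [hr', ← hj]; rfl⟩
    · refine Or.inr ⟨x, y, hx, hy, hxy, hx0, hy0, o, fun s hs => ?_⟩
      obtain ⟨a, b, hab, hsab, gi, gh, hgi, hgh⟩ := ho s hs
      obtain ⟨r1, hr1⟩ := hlift gi gi.2
      obtain ⟨r2, hr2⟩ := hlift gh gh.2
      exact ⟨a, b, hab, hsab, r1, r2, by rw [hr1, ← hgi]; rfl, by rw [hr2, ← hgh]; rfl⟩
  obtain ⟨B, hB, τ, hτ, hS⟩ := pbMain hG hyp'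
  have huu : ((u⁻¹ : GL (Fin n) K) : Matrix (Fin n) (Fin n) K)ᴴ = (u : Matrix (Fin n) (Fin n) K) := by
    rw [hinvU u hu, Matrix.conjTranspose_conjTranspose]
  refine pdFinal hn H (fun g hg => (hU g).mp (hHU hg)) (((u⁻¹ : GL (Fin n) K) : Matrix (Fin n) (Fin n) K) * B) ?_ τ hτ ?_ h2 h3 hN
  · rw [Matrix.conjTranspose_mul, huu]
    calc Bᴴ * (u : Matrix (Fin n) (Fin n) K) * (((u⁻¹ : GL (Fin n) K) : Matrix (Fin n) (Fin n) K) * B)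
        = Bᴴ * ((u : Matrix (Fin n) (Fin n) K) * ((u⁻¹ : GL (Fin n) K) : Matrix (Fin n) (Fin n) K)) * B := by
          simp only [Matrix.mul_assoc]
      _ = 1 := by rw [Units.mul_inv, Matrix.mul_one, hB]
  · intro g hg
    have := hS ⟨g, hg⟩
    convert this using 1
    rw [hθ, Matrix.conjTranspose_mul, huu]
    push_cast
    simp only [Matrix.mul_assoc]

end PartD2

section PartD3

lemma pdCommGen {G : Type*} [Group G] (X : Set G) (e : ℕ) (hc : ∀ a ∈ X, ∀ b ∈ X, a * b = b * a)
    (hX : ∀ a ∈ X, a ^ 2 ^ e = 1) : IsPGroup 2 (Subgroup.closure X) := by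
  have h1 : X ⊆ Subgroup.centralizer X := by
    intro a ha b hb
    exact hc b hb a ha
  have h2 : Subgroup.closure X ≤ Subgroup.centralizer X := (Subgroup.closure_le _).mpr h1
  have hcc : ∀ a ∈ Subgroup.closure X, ∀ b ∈ Subgroup.closure X, a * b = b * a := by
    intro a ha b hb
    exact (Subgroup.closure_le_centralizer_centralizer X ha b (h2 hb)).symm
  have h3 : ∀ a ∈ Subgroup.closure X, a ^ 2 ^ e = 1 := by
    intro a ha
    induction ha using Subgroup.closure_induction with
    | mem x hx => exact hX x hx
    | one => exact one_pow _
    | mul x y hx hy h1 h2 => rw [(show Commute x y from hcc x hx y hy).mul_pow, h1, h2, one_mul]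
    | inv x hx h1 => rw [inv_pow, h1, inv_one]
  intro g
  exact ⟨e, Subtype.ext (h3 g g.2)⟩

variable {K : Type*} [Field K] [StarRing K] {n : ℕ}

/-- A unitary matrix as an element of the general linear group. -/
def pdGL (M : Matrix (Fin n) (Fin n) K) (h : Mᴴ * M = 1) : GL (Fin n) K := ⟨M, Mᴴ, pcFlip h, h⟩

lemma pdGLval (M : Matrix (Fin n) (Fin n) K) (h : Mᴴ * M = 1) :
    ((pdGL M h : GL (Fin n) K) : Matrix (Fin n) (Fin n) K) = M := rfl

/-- Diagonal unitary matrices with entries of exponent `m`. -/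
def pdDiagSub (n : ℕ) (K : Type*) [Field K] [StarRing K] (m : ℕ) : Subgroup (GL (Fin n) K) where
  carrier := {g | ∃ d : Fin n → K, (g : Matrix (Fin n) (Fin n) K) = Matrix.diagonal d ∧
    (∀ i, d i ^ m = 1) ∧ ∀ i, star (d i) * d i = 1}
  one_mem' := ⟨1, by simp, by simp, by simp⟩
  mul_mem' := by
    rintro a b ⟨d, h1, h2, h3⟩ ⟨d', h1', h2', h3'⟩
    refine ⟨d * d', ?_, ?_, ?_⟩
    · rw [Units.val_mul, h1, h1', Matrix.diagonal_mul_diagonal]; rfl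
    · intro i; rw [Pi.mul_apply, mul_pow, h2, h2', one_mul]
    · intro i; rw [Pi.mul_apply, star_mul']
      calc star (d i) * star (d' i) * (d i * d' i) = (star (d i) * d i) * (star (d' i) * d' i) := by ring
        _ = 1 := by rw [h3, h3', one_mul]
  inv_mem' := by
    rintro a ⟨d, h1, h2, h3⟩
    refine ⟨fun i => star (d i), ?_, ?_, ?_⟩
    · have : (Matrix.diagonal fun i => star (d i)) * (a : Matrix (Fin n) (Fin n) K) = 1 := by
        rw [h1, Matrix.diagonal_mul_diagonal]; simp [h3]
      calc ((a⁻¹ : GL (Fin n) K) : Matrix (Fin n) (Fin n) K)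
          = ((Matrix.diagonal fun i => star (d i)) * (a : Matrix (Fin n) (Fin n) K)) *
            ((a⁻¹ : GL (Fin n) K) : Matrix (Fin n) (Fin n) K) := by rw [this, one_mul]
        _ = _ := by rw [mul_assoc, Units.mul_inv, mul_one]
    · intro i; rw [← star_pow, h2, star_one]
    · intro i; rw [star_star, mul_comm, h3]

lemma pdDiagU (m : ℕ) (g : GL (Fin n) K) (hg : g ∈ pdDiagSub n K m) :
    (g : Matrix (Fin n) (Fin n) K)ᴴ * (g : Matrix (Fin n) (Fin n) K) = 1 := by
  obtain ⟨d, h1, h2, h3⟩ := hg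
  rw [h1, Matrix.diagonal_conjTranspose, Matrix.diagonal_mul_diagonal]
  simp [h3]

lemma pdDiagP (e : ℕ) : IsPGroup 2 (pdDiagSub n K (2 ^ e)) := by
  intro g
  refine ⟨e, Subtype.ext (Units.ext ?_)⟩
  obtain ⟨d, h1, h2, h3⟩ := g.2
  rw [Subgroup.coe_pow, Units.val_pow_eq_pow_val, h1, Matrix.diagonal_pow]
  have : d ^ 2 ^ e = 1 := funext h2
  rw [this]; simp

lemma pdDiagMem (m : ℕ) (i : Fin n) (c : K) (hc : c ^ m = 1) (hs : star c * c = 1) :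
    ∃ g ∈ pdDiagSub n K m, (g : Matrix (Fin n) (Fin n) K) = 1 + (c - 1) • Matrix.single i i (1 : K) := by
  have hu : (Matrix.diagonal (Function.update (1 : Fin n → K) i c))ᴴ *
      Matrix.diagonal (Function.update (1 : Fin n → K) i c) = 1 := by
    rw [Matrix.diagonal_conjTranspose, Matrix.diagonal_mul_diagonal, ← Matrix.diagonal_one]
    congr 1
    ext j
    by_cases hj : j = i
    · subst hj; simp [hs]
    · simp [Function.update_of_ne hj]
  refine ⟨pdGL _ hu, ⟨_, rfl, ?_, ?_⟩, ?_⟩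
  · intro j
    by_cases hj : j = i
    · subst hj; simp [hc]
    · simp [Function.update_of_ne hj]
  · intro j
    by_cases hj : j = i
    · subst hj; simp [hs]
    · simp [Function.update_of_ne hj]
  · rw [pdGLval]
    ext a b
    by_cases hab : a = b
    · subst hab
      by_cases ha : a = i
      · subst ha; simp
      · have : ¬ i = a := fun h => ha h.symm
        simp [Function.update_of_ne ha, Matrix.single_apply, this]
    · have : ¬ (i = a ∧ i = b) := fun h => hab (h.1.symm.trans h.2)
      simp [hab, Matrix.single_apply, this]

theorem pdGroupJ (I : K) (hI : I * I = -1) (hIs : star I = -I)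
    (U : Subgroup (GL (Fin n) K))
    (hU : ∀ g, g ∈ U ↔ (g : Matrix (Fin n) (Fin n) K)ᴴ * (g : Matrix (Fin n) (Fin n) K) = 1) :
    ∃ P ≤ U, IsPGroup 2 P ∧
      (∀ i, ∃ r ∈ P, (r : Matrix (Fin n) (Fin n) K) = 1 + (-2 : K) • Matrix.single i i (1 : K)) ∧
      PBHypJ ((Units.coeHom (Matrix (Fin n) (Fin n) K)).comp P.subtype) := by
  refine ⟨pdDiagSub n K (2 ^ 2), fun g hg => (hU g).mpr (pdDiagU _ g hg), pdDiagP 2, ?_, I, hI, hIs, ?_⟩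
  · intro i
    obtain ⟨g, hg, e⟩ := pdDiagMem (n := n) (2 ^ 2) i (-1 : K) (by norm_num) (by simp)
    exact ⟨g, hg, by rw [e]; norm_num⟩
  · intro i
    obtain ⟨g, hg, e⟩ := pdDiagMem (n := n) (2 ^ 2) i I (by
      have : I ^ 2 ^ 2 = (I * I) * (I * I) := by norm_num; ring
      rw [this, hI]; norm_num) (by rw [hIs]; linear_combination -hI)
    exact ⟨⟨g, hg⟩, e⟩

end PartD3

section PartD4
variable {K : Type*} [Field K] [StarRing K] {ι : Type*} [Fintype ι] [DecidableEq ι]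

lemma pdPsiMul (a b : ι) (hab : a ≠ b) (u v u' v' : K) :
    pbPsi a b u v * pbPsi a b u' v' = pbPsi a b (u * u' - v * v') (u * v' + v * u') := by
  have hE : (Matrix.single a a (1 : K) + Matrix.single b b (1 : K)) *
      (Matrix.single a a (1 : K) + Matrix.single b b (1 : K)) =
      Matrix.single a a (1 : K) + Matrix.single b b (1 : K) := by
    simp [mul_add, add_mul, hab, hab.symm]
  have hEF : (Matrix.single a a (1 : K) + Matrix.single b b (1 : K)) *
      (Matrix.single a b (1 : K) - Matrix.single b a (1 : K)) =
      Matrix.single a b (1 : K) - Matrix.single b a (1 : K) := by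
    simp [mul_sub, add_mul, hab, hab.symm]
  have hFE : (Matrix.single a b (1 : K) - Matrix.single b a (1 : K)) *
      (Matrix.single a a (1 : K) + Matrix.single b b (1 : K)) =
      Matrix.single a b (1 : K) - Matrix.single b a (1 : K) := by
    simp [mul_add, sub_mul, hab, hab.symm]
    abel
  have hFF : (Matrix.single a b (1 : K) - Matrix.single b a (1 : K)) *
      (Matrix.single a b (1 : K) - Matrix.single b a (1 : K)) =
      -(Matrix.single a a (1 : K) + Matrix.single b b (1 : K)) := by
    simp [mul_sub, sub_mul, hab, hab.symm]
    abel
  unfold pbPsi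
  generalize Matrix.single a a (1 : K) + Matrix.single b b (1 : K) = E at *
  generalize Matrix.single a b (1 : K) - Matrix.single b a (1 : K) = F at *
  simp only [mul_add, add_mul, Matrix.smul_mul, Matrix.mul_smul, hE, hEF, hFE, hFF, mul_one, one_mul]
  module

lemma pdPsiOne (a b : ι) : pbPsi a b (1 : K) 0 = 1 := by simp [pbPsi]

lemma pdPsiStar (a b : ι) (u v : K) : (pbPsi a b u v)ᴴ = pbPsi a b (star u) (-star v) := by
  unfold pbPsi
  simp only [Matrix.conjTranspose_add, Matrix.conjTranspose_sub, Matrix.conjTranspose_smul,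
    Matrix.conjTranspose_single, Matrix.conjTranspose_one, star_one, star_sub]
  module

lemma pdPsiUni (a b : ι) (hab : a ≠ b) (u v : K) (h1 : star u * u + star v * v = 1)
    (h2 : star u * v = star v * u) : (pbPsi a b u v)ᴴ * pbPsi a b u v = 1 := by
  rw [pdPsiStar, pdPsiMul a b hab, ← pdPsiOne a b]
  congr 1
  · linear_combination h1
  · linear_combination h2

lemma pdPsiPow (a b : ι) (hab : a ≠ b) (u v I : K) (hI : I * I = -1) (m : ℕ) :
    ∃ u' v', pbPsi a b u v ^ m = pbPsi a b u' v' ∧ u' + I * v' = (u + I * v) ^ m ∧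
      u' - I * v' = (u - I * v) ^ m := by
  induction m with
  | zero => exact ⟨1, 0, by rw [pow_zero, pdPsiOne], by simp, by simp⟩
  | succ m ih =>
    obtain ⟨u', v', e, h1, h2⟩ := ih
    refine ⟨_, _, by rw [pow_succ, e, pdPsiMul a b hab], ?_, ?_⟩
    · rw [pow_succ, ← h1]; linear_combination (-v' * v) * hI
    · rw [pow_succ, ← h2]; linear_combination (-v' * v) * hI

lemma pdPsiPowOne (a b : ι) (hab : a ≠ b) (u v I : K) (hI : I * I = -1) (h2 : (2 : K) ≠ 0) (m : ℕ)
    (hp : (u + I * v) ^ m = 1) (hm : (u - I * v) ^ m = 1) : pbPsi a b u v ^ m = 1 := by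
  obtain ⟨u', v', e, e1, e2⟩ := pdPsiPow a b hab u v I hI m
  rw [hp] at e1
  rw [hm] at e2
  have hI0 : I ≠ 0 := by
    rintro rfl
    have : (0 : K) = -1 := by simpa using hI
    exact one_ne_zero (α := K) (by linear_combination this)
  have hu : u' = 1 := mul_left_cancel₀ h2 (by linear_combination e1 + e2)
  have hv : v' = 0 := by
    have : 2 * I * v' = 0 := by linear_combination e1 - e2
    simpa [h2, hI0] using this
  rw [e, hu, hv, pdPsiOne]

lemma pdPsiCommSame (a b : ι) (hab : a ≠ b) (u v u' v' : K) :
    pbPsi a b u v * pbPsi a b u' v' = pbPsi a b u' v' * pbPsi a b u v := by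
  rw [pdPsiMul a b hab, pdPsiMul a b hab]
  congr 1 <;> ring

lemma pdPsiCommDisj (a b a' b' : ι) (h1 : a ≠ a') (h2 : a ≠ b') (h3 : b ≠ a') (h4 : b ≠ b')
    (u v u' v' : K) :
    pbPsi a b u v * pbPsi a' b' u' v' = pbPsi a' b' u' v' * pbPsi a b u v := by
  unfold pbPsi
  set X := (u - 1) • (Matrix.single a a (1 : K) + Matrix.single b b (1 : K)) +
    v • (Matrix.single a b (1 : K) - Matrix.single b a (1 : K)) with hX
  set Y := (u' - 1) • (Matrix.single a' a' (1 : K) + Matrix.single b' b' (1 : K)) +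
    v' • (Matrix.single a' b' (1 : K) - Matrix.single b' a' (1 : K)) with hY
  have e1 : X * Y = 0 := by
    rw [hX, hY]
    simp [-Matrix.smul_single, mul_add, add_mul, mul_sub, sub_mul, h1, h2, h3, h4]
  have e2 : Y * X = 0 := by
    rw [hX, hY]
    simp [-Matrix.smul_single, mul_add, add_mul, mul_sub, sub_mul, h1.symm, h2.symm, h3.symm, h4.symm]
  clear_value X Y
  simp only [add_assoc, ← hX, ← hY] at *
  simp only [mul_add, add_mul, mul_one, one_mul, e1, e2, add_zero]
  abel

lemma pdPsiConj (a b : ι) (hab : a ≠ b) (u v : K) (d : ι → K) (hd : ∀ i, d i * d i = 1) :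
    Matrix.diagonal d * pbPsi a b u v * Matrix.diagonal d = pbPsi a b u (d a * d b * v) := by
  ext i j
  rw [Matrix.mul_diagonal, Matrix.diagonal_mul]
  simp only [pbPsi, Matrix.add_apply, Matrix.smul_apply, Matrix.sub_apply, Matrix.single_apply,
    Matrix.one_apply, smul_eq_mul]
  by_cases hij : i = j
  · subst hij
    by_cases hia : a = i
    · subst hia
      simp [hab, hab.symm]
      linear_combination u * hd a
    · by_cases hib : b = i
      · subst hib
        simp [hab]
        linear_combination u * hd b
      · simp [hia, hib, hd]
  · by_cases h1 : a = i <;> by_cases h2 : b = j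
    · subst h1; subst h2; simp [hab, hab.symm]; ring
    · subst h1; simp [hab, hab.symm, hij, h2]
    · subst h2
      by_cases h3 : b = i
      · exact absurd h3.symm hij
      · simp [h1, h3, hij]
    · by_cases h3 : b = i <;> by_cases h4 : a = j
      · subst h3; subst h4; simp [hab, hab.symm]; ring
      · subst h3; simp [h1, hij, h4]
      · subst h4; simp [h1, hij, h3]
      · simp [h1, h2, h3, h4, hij]

end PartD4

section PartD4b
variable {K : Type*} [Field K] [StarRing K] {n : ℕ}

def PDPair (a b : Fin n) : Prop := a.val % 2 = 0 ∧ b.val = a.val + 1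

def PDL (I : K) (e : ℕ) (u v : K) : Prop :=
  star u * u + star v * v = 1 ∧ star u * v = star v * u ∧ (u + I * v) ^ 2 ^ e = 1 ∧ (u - I * v) ^ 2 ^ e = 1

lemma PDPair.ne {a b : Fin n} (h : PDPair a b) : a ≠ b := by
  rintro rfl
  have := h.2
  omega

def pdGens (n : ℕ) (I : K) (e : ℕ) : Set (GL (Fin n) K) :=
  {g | ∃ a b, PDPair a b ∧ ∃ u v, PDL I e u v ∧ (g : Matrix (Fin n) (Fin n) K) = pbPsi a b u v}

lemma pdGensP (I : K) (hI : I * I = -1) (h2 : (2 : K) ≠ 0) (e : ℕ) :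
    IsPGroup 2 (Subgroup.closure (pdGens n I e)) := by
  apply pdCommGen _ e
  · rintro g ⟨a, b, hab, u, v, hL, hg⟩ g' ⟨a', b', hab', u', v', hL', hg'⟩
    apply Units.ext
    rw [Units.val_mul, Units.val_mul, hg, hg']
    by_cases haa : a = a'
    · subst haa
      have : b = b' := Fin.ext (by rw [hab.2, hab'.2])
      subst this
      exact pdPsiCommSame a b hab.ne _ _ _ _
    · have h0 : a.val ≠ a'.val := fun h => haa (Fin.ext h)
      obtain ⟨p1, p2⟩ := hab
      obtain ⟨p1', p2'⟩ := hab'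
      apply pdPsiCommDisj _ _ _ _ haa <;> · intro hh; have := congrArg Fin.val hh; omega
  · rintro g ⟨a, b, hab, u, v, hL, hg⟩
    apply Units.ext
    rw [Units.val_pow_eq_pow_val, hg]
    exact pdPsiPowOne a b hab.ne u v I hI h2 _ hL.2.2.1 hL.2.2.2

lemma pdGensNorm (I : K) (e : ℕ) :
    pdDiagSub n K (2 ^ 1) ≤ Subgroup.normalizer (Subgroup.closure (pdGens n I e)) := by
  have key : ∀ r ∈ pdDiagSub n K (2 ^ 1), ∀ g ∈ Subgroup.closure (pdGens n I e),
      r * g * r⁻¹ ∈ Subgroup.closure (pdGens n I e) := by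
    rintro r ⟨d, hr, hd, hds⟩ g hg
    have hd' : ∀ i, d i * d i = 1 := by
      intro i; have := hd i; rw [pow_one, pow_two] at this; exact this
    have hrr : r * r = 1 := by
      apply Units.ext
      rw [Units.val_mul, hr, Matrix.diagonal_mul_diagonal]
      simp [hd']
    have hinv : r⁻¹ = r := inv_eq_of_mul_eq_one_left hrr
    induction hg using Subgroup.closure_induction with
    | mem x hx =>
      obtain ⟨a, b, hab, u, v, ⟨l1, l2, l3, l4⟩, hg⟩ := hx
      apply Subgroup.subset_closure
      refine ⟨a, b, hab, u, d a * d b * v, ?_, ?_⟩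
      · have hsq : (d a * d b) * (d a * d b) = 1 := by
          linear_combination (d b * d b) * hd' a + hd' b
        have : d a * d b = 1 ∨ d a * d b = -1 := mul_self_eq_one_iff.mp hsq
        rcases this with h | h
        · rw [h, one_mul]; exact ⟨l1, l2, l3, l4⟩
        · rw [h]
          refine ⟨?_, ?_, ?_, ?_⟩
          · simp only [neg_mul, one_mul, star_neg]; linear_combination l1
          · simp only [neg_mul, one_mul, star_neg]; linear_combination -l2
          · refine Eq.trans ?_ l4; congr 1; ring
          · refine Eq.trans ?_ l3; congr 1; ring
      · rw [hinv, Units.val_mul, Units.val_mul, hr, hg, pdPsiConj a b hab.ne u v d hd']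
    | one => simp
    | mul x y hx hy h1 h2 =>
      have := Subgroup.mul_mem _ h1 h2
      simpa [mul_assoc] using this
    | inv x hx h1 =>
      have := Subgroup.inv_mem _ h1
      simpa [mul_assoc] using this
  intro r hr
  rw [Subgroup.mem_normalizer_iff]
  intro g
  refine ⟨key r hr g, fun h => ?_⟩
  have := key r⁻¹ (Subgroup.inv_mem _ hr) _ h
  simpa [mul_assoc] using this

theorem pdGroupH (I : K) (hI : I * I = -1) (hIs : star I = I) (h2 : (2 : K) ≠ 0) (hn : 3 ≤ n)
    (e : ℕ) (he : 2 ≤ e) (x y : K) (hx : star x = -x) (hy : star y = -y) (hxy : x * x + y * y = -1)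
    (hx0 : x ≠ 0) (hy0 : y ≠ 0) (h1 : (x + I * y) ^ 2 ^ e = 1) (h1' : (x - I * y) ^ 2 ^ e = 1)
    (U : Subgroup (GL (Fin n) K))
    (hU : ∀ g, g ∈ U ↔ (g : Matrix (Fin n) (Fin n) K)ᴴ * (g : Matrix (Fin n) (Fin n) K) = 1) :
    ∃ P ≤ U, IsPGroup 2 P ∧
      (∀ i, ∃ r ∈ P, (r : Matrix (Fin n) (Fin n) K) = 1 + (-2 : K) • Matrix.single i i (1 : K)) ∧
      PBHypH ((Units.coeHom (Matrix (Fin n) (Fin n) K)).comp P.subtype) := by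
  have hI4 : I ^ 4 = 1 := by
    have : I ^ 4 = (I * I) * (I * I) := by ring
    rw [this, hI]; norm_num
  have hIe : I ^ 2 ^ e = 1 := by
    obtain ⟨k, rfl⟩ := Nat.exists_eq_add_of_le he
    rw [pow_add, pow_mul]
    norm_num [hI4]
  have hLi : PDL I e 0 1 := by
    refine ⟨by simp, by simp, by simpa using hIe, ?_⟩
    have hev : Even (2 ^ e) := (Nat.even_pow.mpr ⟨even_two, by omega⟩)
    rw [zero_sub, mul_one, hev.neg_pow, hIe]
  have hLh : PDL I e x y := by
    refine ⟨?_, ?_, h1, h1'⟩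
    · rw [hx, hy]; linear_combination -hxy
    · rw [hx, hy]; ring
  refine ⟨pdDiagSub n K (2 ^ 1) ⊔ Subgroup.closure (pdGens n I e), ?_, ?_, ?_, ?_⟩
  · refine sup_le (fun g hg => (hU g).mpr (pdDiagU _ g hg)) ((Subgroup.closure_le _).mpr ?_)
    rintro g ⟨a, b, hab, u, v, ⟨l1, l2, l3, l4⟩, hg⟩
    refine (hU g).mpr ?_
    rw [hg]
    exact pdPsiUni a b hab.ne u v l1 l2
  · exact IsPGroup.to_sup_of_normal_right' (pdDiagP 1) (pdGensP I hI h2 e) (pdGensNorm I e)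
  · intro i
    obtain ⟨g, hg, e⟩ := pdDiagMem (n := n) (2 ^ 1) i (-1 : K) (by norm_num) (by simp)
    exact ⟨g, Subgroup.mem_sup_left hg, by rw [e]; norm_num⟩
  · refine ⟨x, y, hx, hy, hxy, hx0, hy0, ⟨n - 1, by omega⟩, fun s hs => ?_⟩
    have hs' : s.val ≠ n - 1 := fun h => hs (Fin.ext h)
    have hsn := s.2
    have mk : ∀ a b : Fin n, PDPair a b → (s = a ∨ s = b) → ∃ a b, a ≠ b ∧ (s = a ∨ s = b) ∧
        ∃ gi gh : ↥(pdDiagSub n K (2 ^ 1) ⊔ Subgroup.closure (pdGens n I e)),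
          ((Units.coeHom (Matrix (Fin n) (Fin n) K)).comp (Subgroup.subtype _)) gi = pbPsi a b 0 1 ∧
          ((Units.coeHom (Matrix (Fin n) (Fin n) K)).comp (Subgroup.subtype _)) gh = pbPsi a b x y := by
      intro a b hab hsab
      refine ⟨a, b, hab.ne, hsab,
        ⟨pdGL _ (pdPsiUni a b hab.ne 0 1 hLi.1 hLi.2.1), Subgroup.mem_sup_right (Subgroup.subset_closure ?_)⟩,
        ⟨pdGL _ (pdPsiUni a b hab.ne x y hLh.1 hLh.2.1), Subgroup.mem_sup_right (Subgroup.subset_closure ?_)⟩,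
        rfl, rfl⟩
      · exact ⟨a, b, hab, 0, 1, hLi, rfl⟩
      · exact ⟨a, b, hab, x, y, hLh, rfl⟩
    by_cases hev : s.val % 2 = 0
    · exact mk s ⟨s.val + 1, by omega⟩ ⟨hev, rfl⟩ (Or.inl rfl)
    · exact mk ⟨s.val - 1, by omega⟩ s ⟨by simp; omega, by simp; omega⟩ (Or.inr rfl)

end PartD4b

section PartD5

lemma pdGen {K : Type*} [Field K] [Fintype K] (q : ℕ) (hcard : Fintype.card K = q ^ 2) :
    ∃ γ : Kˣ, orderOf γ = q ^ 2 - 1 ∧ ∀ a : Kˣ, ∃ k : ℕ, γ ^ k = a := by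
  classical
  obtain ⟨γ, hγ⟩ := IsCyclic.exists_generator (α := Kˣ)
  refine ⟨γ, ?_, fun a => ?_⟩
  · rw [orderOf_eq_card_of_forall_mem_zpowers hγ, Nat.card_eq_fintype_card, Fintype.card_units,
      hcard]
  · exact (mem_powers_iff_mem_zpowers.mpr (hγ a))

lemma pdNorm {K : Type*} [Field K] [Fintype K] (q : ℕ) (hq : 2 ≤ q)
    (hcard : Fintype.card K = q ^ 2) (a : K) (ha : a ^ q = a) : ∃ b : K, b * b ^ q = a := by
  by_cases h0 : a = 0
  · exact ⟨0, by simp [h0]⟩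
  obtain ⟨γ, ho, hg⟩ := pdGen q hcard
  obtain ⟨k, hk⟩ := hg (Units.mk0 a h0)
  have hak : (γ : K) ^ k = a := by
    have := congrArg Units.val hk
    simpa using this
  obtain ⟨r, rfl⟩ : ∃ r, q = r + 1 := ⟨q - 1, by omega⟩
  have h1 : a ^ r = 1 := by
    have : a ^ r * a = 1 * a := by rw [← pow_succ, ha, one_mul]
    exact mul_right_cancel₀ h0 this
  have h2 : γ ^ (k * r) = 1 := by
    ext
    rw [pow_mul, Units.val_pow_eq_pow_val, Units.val_pow_eq_pow_val, hak, h1, Units.val_one]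
  have h3 := orderOf_dvd_of_pow_eq_one h2
  have h4 : (r + 1) ^ 2 - 1 = (r + 2) * r := by
    have : (r + 1) ^ 2 = (r + 2) * r + 1 := by ring
    omega
  rw [ho, h4] at h3
  obtain ⟨m, rfl⟩ := Nat.dvd_of_mul_dvd_mul_right (by omega) h3
  refine ⟨(γ : K) ^ m, ?_⟩
  rw [← hak]
  ring

lemma pdZeta {K : Type*} [Field K] [Fintype K] (q : ℕ) (hq : q % 4 = 1) (hq1 : 2 ≤ q)
    (hcard : Fintype.card K = q ^ 2) :
    ∃ (ζ : K) (e : ℕ), 2 ≤ e ∧ ζ ^ (q - 1) = -1 ∧ ζ ^ 2 ^ e = 1 := by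
  obtain ⟨γ, ho, -⟩ := pdGen q hcard
  obtain ⟨s, rfl⟩ : ∃ s, q = 4 * s + 1 := ⟨q / 4, by omega⟩
  have h4 : (4 * s + 1) ^ 2 - 1 = 2 * ((2 * s + 1) * (4 * s)) := by
    have : (4 * s + 1) ^ 2 = 2 * ((2 * s + 1) * (4 * s)) + 1 := by ring
    omega
  rw [h4] at ho
  set N := (2 * s + 1) * (4 * s) with hN
  have hN0 : 0 < N := by rw [hN]; apply Nat.mul_pos <;> omega
  have hg1 : (γ : K) ^ (2 * N) = 1 := by
    rw [← ho, ← Units.val_pow_eq_pow_val, pow_orderOf_eq_one, Units.val_one]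
  have hgm : (γ : K) ^ N = -1 := by
    have h5 : (γ : K) ^ N * (γ : K) ^ N = 1 := by rw [← pow_add, ← two_mul, hg1]
    rcases mul_self_eq_one_iff.mp h5 with h | h
    · exfalso
      have h6 : γ ^ N = 1 := by ext; simpa using h
      have := Nat.le_of_dvd hN0 (ho ▸ orderOf_dvd_of_pow_eq_one h6)
      omega
    · exact h
  obtain ⟨v, u, hu, hs⟩ := Nat.exists_eq_two_pow_mul_odd (n := s) (by omega)
  refine ⟨(γ : K) ^ ((2 * s + 1) * u), v + 3, by omega, ?_, ?_⟩
  · rw [Nat.add_sub_cancel, ← pow_mul, show (2 * s + 1) * u * (4 * s) = N * u by rw [hN]; ring,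
      pow_mul, hgm, hu.neg_one_pow]
  · rw [← pow_mul, show (2 * s + 1) * u * 2 ^ (v + 3) = 2 * N by
      rw [hN]; nth_rewrite 3 [hs]; ring, hg1]

lemma pdPick {K : Type*} [Field K] [Fintype K] [StarRing K] (q n : ℕ) (hq1 : 2 ≤ q)
    (hodd : q % 2 = 1) (hn : 3 ≤ n) (h2 : (2 : K) ≠ 0)
    (hcard : Fintype.card K = q ^ 2) (hst : ∀ x : K, star x = x ^ q)
    (U : Subgroup (GL (Fin n) K))
    (hU : ∀ g, g ∈ U ↔ (g : Matrix (Fin n) (Fin n) K)ᴴ * (g : Matrix (Fin n) (Fin n) K) = 1) :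
    ∃ P : Subgroup (GL (Fin n) K), P ≤ U ∧ IsPGroup 2 P ∧
      (∀ i, ∃ r ∈ P, (r : Matrix (Fin n) (Fin n) K) = 1 + (-2 : K) • Matrix.single i i 1) ∧
      (PBHypJ ((Units.coeHom (Matrix (Fin n) (Fin n) K)).comp P.subtype) ∨
        PBHypH ((Units.coeHom (Matrix (Fin n) (Fin n) K)).comp P.subtype)) := by
  obtain ⟨I, hI⟩ : IsSquare (-1 : K) := by
    rw [FiniteField.isSquare_neg_one_iff, hcard, Nat.pow_mod]
    have : q % 4 = 1 ∨ q % 4 = 3 := by omega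
    rcases this with h | h <;> rw [h] <;> decide
  have hI' : I * I = -1 := hI.symm
  have hI4 : I ^ 4 = 1 := by linear_combination (I * I - 1) * hI'
  have hI0 : I ≠ 0 := by
    rintro rfl
    simp at hI
  have h4 : q % 4 = 1 ∨ q % 4 = 3 := by omega
  rcases h4 with h | h
  · obtain ⟨ζ, e, he, hz1, hz2⟩ := pdZeta q h hq1 hcard
    have hz0 : ζ ≠ 0 := by
      rintro rfl
      rw [zero_pow (by positivity)] at hz2
      exact zero_ne_one hz2
    have hIs : star I = I := by
      rw [hst, ← Nat.div_add_mod q 4, h, pow_add, pow_mul, hI4]; simp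
    have hzs : star ζ = -ζ := by
      rw [hst, ← Nat.sub_add_cancel (show 1 ≤ q by omega), pow_succ, hz1]; ring
    have hz4 : ζ ^ 4 ≠ 1 := by
      intro h5
      have : (-1 : K) = 1 := by
        rw [← hz1, show q - 1 = 4 * (q / 4) by omega, pow_mul, h5, one_pow]
      exact h2 (by linear_combination -this)
    have h2s : star (2 : K) = 2 := by
      rw [← one_add_one_eq_two, star_add, star_one]
    have hzi : star (ζ⁻¹) = -ζ⁻¹ := by rw [star_inv₀, hzs, inv_neg]
    obtain ⟨P, hP, h1, hR, hyp⟩ := pdGroupH I hI' hIs h2 hn e he ((ζ - ζ⁻¹) / 2)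
      ((ζ + ζ⁻¹) / (2 * I))
      (by rw [star_div₀, star_sub, hzs, hzi, h2s]; ring)
      (by rw [star_div₀, star_add, star_mul', hzs, hzi, h2s, hIs]; ring)
      (by
        field_simp
        linear_combination ((ζ ^ 2 - 1) ^ 2 + 4 * ζ ^ 2) * hI')
      (by
        intro h5
        apply hz4
        have h6 : ζ ^ 2 - 1 = 0 := by
          field_simp at h5
          simpa using h5
        linear_combination (ζ ^ 2 + 1) * h6)
      (by
        intro h5
        apply hz4
        have h6 : ζ ^ 2 + 1 = 0 := by
          field_simp at h5
          simpa using h5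
        linear_combination (ζ ^ 2 - 1) * h6)
      (by
        rw [show (ζ - ζ⁻¹) / 2 + I * ((ζ + ζ⁻¹) / (2 * I)) = ζ by field_simp; ring]
        exact hz2)
      (by
        rw [show (ζ - ζ⁻¹) / 2 - I * ((ζ + ζ⁻¹) / (2 * I)) = -ζ⁻¹ by field_simp; ring]
        rw [Even.neg_pow ((Nat.even_pow).2 ⟨even_two, by omega⟩), inv_pow, hz2, inv_one]) U hU
    exact ⟨P, hP, h1, hR, Or.inr hyp⟩
  · have hIs : star I = -I := by
      rw [hst, ← Nat.div_add_mod q 4, h, pow_add, pow_mul, hI4, one_pow, one_mul]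
      linear_combination I * hI'
    obtain ⟨P, hP, h1, hR, hyp⟩ := pdGroupJ I hI' hIs U hU
    exact ⟨P, hP, h1, hR, Or.inl hyp⟩

end PartD5

theorem stmt10 (p f q n : ℕ) (hp : p.Prime) (hf : 1 ≤ f) (hq : q = p ^ f)
    (K : Type) [Field K] [Fintype K] (hcard : Fintype.card K = q ^ 2)
    (φ : K →+* K) (hφ : ∀ x : K, φ x = x ^ q)
    (hn : 3 ≤ n) (hnonsolv : ¬ IsSolvable ↥(GUgrp n φ))
    (π : Set ℕ) (hπ : ∀ r ∈ π, r.Prime) (h2pi : 2 ∈ π) (h3pi : 3 ∈ π) (hppi : p ∉ π)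
    (H : Subgroup (GL (Fin n) K)) (hH : IsHallSubgroupIn π (GUgrp n φ) H)
    (hsolv : IsSolvable ↥H)
    :
    ∃ x y z : GL (Fin n) K,
      x ∈ (H : Set (GL (Fin n) K)) * ((GUgrp n φ ⊓ SLsub n K : Subgroup (GL (Fin n) K)) : Set (GL (Fin n) K)) ∧
      y ∈ (H : Set (GL (Fin n) K)) * ((GUgrp n φ ⊓ SLsub n K : Subgroup (GL (Fin n) K)) : Set (GL (Fin n) K)) ∧
      z ∈ (H : Set (GL (Fin n) K)) * ((GUgrp n φ ⊓ SLsub n K : Subgroup (GL (Fin n) K)) : Set (GL (Fin n) K)) ∧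
    ∀ g ∈ H ⊓ conjBy H x ⊓ conjBy H y ⊓ conjBy H z,
      ∃ c : K, (g : Matrix (Fin n) (Fin n) K) = c • (1 : Matrix (Fin n) (Fin n) K) := by
  classical
  have : Fact p.Prime := ⟨hp⟩
  have hpp : CharP K p := by
    obtain ⟨r, hr⟩ := CharP.exists K
    obtain ⟨m, hrp, hm⟩ := FiniteField.card K r
    have h1 : r ∣ p := by
      have : r ∣ p ^ (f * 2) := by
        rw [pow_mul, ← hq, ← hcard, hm]
        exact dvd_pow_self r m.ne_zero
      exact hrp.dvd_of_dvd_pow this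
    rwa [(Nat.prime_dvd_prime_iff_eq hrp hp).mp h1] at hr
  have hp2 : p ≠ 2 := fun h => hppi (h ▸ h2pi)
  have hp3 : p ≠ 3 := fun h => hppi (h ▸ h3pi)
  have h2 : (2 : K) ≠ 0 := by
    intro h
    have h' : ((2 : ℕ) : K) = 0 := by exact_mod_cast h
    rw [CharP.cast_eq_zero_iff K p] at h'
    exact hp2 ((Nat.prime_dvd_prime_iff_eq hp Nat.prime_two).mp h')
  have h3 : (3 : K) ≠ 0 := by
    intro h
    have h' : ((3 : ℕ) : K) = 0 := by exact_mod_cast h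
    rw [CharP.cast_eq_zero_iff K p] at h'
    exact hp3 ((Nat.prime_dvd_prime_iff_eq hp Nat.prime_three).mp h')
  have hodd : q % 2 = 1 := by
    rw [hq]
    exact Nat.odd_iff.mp ((hp.odd_of_ne_two hp2).pow)
  have hq2 : 2 ≤ q := by
    rw [hq]
    exact hp.two_le.trans (Nat.le_self_pow (by omega) p)
  obtain ⟨hHU, hHπ, hHidx⟩ := hH
  have hcardH : (Nat.card H : K) ≠ 0 := by
    rw [Ne, CharP.cast_eq_zero_iff K p]
    exact fun h => hppi (hHπ p hp h)
  letI : StarRing K :=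
    { star := φ
      star_involutive := fun x => by
        change φ (φ x) = x
        rw [hφ, hφ, ← pow_mul, ← pow_two, ← hcard, FiniteField.pow_card]
      star_mul := fun x y => by
        change φ (x * y) = φ y * φ x
        rw [map_mul, mul_comm]
      star_add := fun x y => map_add φ x y }
  have hst : ∀ x : K, star x = x ^ q := hφ
  have hU : ∀ g, g ∈ GUgrp n φ ↔
      (g : Matrix (Fin n) (Fin n) K)ᴴ * (g : Matrix (Fin n) (Fin n) K) = 1 := fun g => Iff.rfl
  obtain ⟨P, hPU, hP, hR, hyp⟩ := pdPick q n hq2 hodd hn h2 hcard hst (GUgrp n φ) hU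
  obtain ⟨x, y, z, hx, hy, hz, hfin⟩ := pdMid hn (GUgrp n φ) H P hU hHU hPU hsolv
    (hHidx 2 h2pi) hP hcardH h2 h3
    (fun a ha => by
      obtain ⟨b, hb⟩ := pdNorm q hq2 hcard a (by rw [← hst]; exact ha)
      exact ⟨b, by rw [hst]; exact hb⟩) hR hyp
  have hmem : ∀ w : GL (Fin n) K,
      ((w : Matrix (Fin n) (Fin n) K)ᴴ * (w : Matrix (Fin n) (Fin n) K) = 1 ∧
        (w : Matrix (Fin n) (Fin n) K).det = 1) →
      w ∈ (H : Set (GL (Fin n) K)) *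
        ((GUgrp n φ ⊓ SLsub n K : Subgroup (GL (Fin n) K)) : Set (GL (Fin n) K)) := by
    intro w hw
    exact Set.mem_mul.mpr ⟨1, H.one_mem, w, ⟨hw.1, hw.2⟩, one_mul w⟩
  have hconj : ∀ w g : GL (Fin n) K, g ∈ conjBy H w → w * g * w⁻¹ ∈ H := by
    rintro w g ⟨h, hh, rfl⟩
    have : w * ((MulAut.conj w⁻¹).toMonoidHom h) * w⁻¹ = h := by
      simp [MulAut.conj_apply, mul_assoc]
    rw [this]
    exact hh
  refine ⟨x, y, z, hmem x hx, hmem y hy, hmem z hz, ?_⟩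
  rintro g ⟨⟨⟨hg, hgx⟩, hgy⟩, hgz⟩
  exact hfin g hg (hconj x g hgx) (hconj y g hgy) (hconj z g hgz)
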